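/- arXiv:1702.00779 — 5 statements merged into one kernel-verified Lean document; each statement's English description precedes it below -/
import Mathlib

section
/- Let k be any field, R = k[t,u,x,y]/(xy − tu − 1), B = k[t,x,y], and let η* : B → R be the (injective) k-algebra homomorphism sending t, x, y to their residue classes. Let I ⊂ B be the ideal generated by t and xy − 1. Then: (1) a k-algebra automorphism Φ of R satisfies Φ((t−1)·R) = (t−1)·R if and only if Φ(t) = t; (2) every k-algebra automorphism Φ of R with Φ(t) = t satisfies Φ(η*(B)) = η*(B), and the assignment Φ ↦ (η*)⁻¹ ∘ Φ ∘ η* defines a group isomorphism from {Φ ∈ Aut_k(R) : Φ(t) = t} onto {ψ ∈ Aut_k(B) : ψ(t) = t and ψ(I) = I}. -/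
open MvPolynomial

noncomputable section

section IdealMapAut

variable {k B : Type*} [CommSemiring k] [CommRing B] [Algebra k B]

lemma Ideal.map_aut_one (I : Ideal B) : Ideal.map (1 : B ≃ₐ[k] B) I = I := by
  ext a
  rw [Ideal.mem_map_of_equiv]
  constructor
  · rintro ⟨b, hb, rfl⟩; simpa using hb
  · intro ha; exact ⟨a, ha, rfl⟩

lemma Ideal.map_aut_mul (a b : B ≃ₐ[k] B) (I : Ideal B) :
    Ideal.map (a * b) I = Ideal.map a (Ideal.map b I) := by
  ext x
  simp only [Ideal.mem_map_of_equiv]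
  constructor
  · rintro ⟨y, hy, rfl⟩; exact ⟨b y, ⟨y, hy, rfl⟩, rfl⟩
  · rintro ⟨y, ⟨z, hz, rfl⟩, rfl⟩; exact ⟨z, hz, rfl⟩

lemma Ideal.map_aut_inv (a : B ≃ₐ[k] B) (I : Ideal B) (h : Ideal.map a I = I) :
    Ideal.map a⁻¹ I = I := by
  ext x
  rw [Ideal.mem_map_of_equiv]
  constructor
  · rintro ⟨y, hy, rfl⟩
    rw [← h, Ideal.mem_map_of_equiv] at hy
    obtain ⟨z, hz, rfl⟩ := hy
    have : (a⁻¹ : B ≃ₐ[k] B) (a z) = z := a.symm_apply_apply z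
    rwa [this]
  · intro hx
    refine ⟨a x, ?_, a.symm_apply_apply x⟩
    rw [← h]
    exact Ideal.mem_map_of_mem _ hx

end IdealMapAut

variable (k : Type*) [Field k]

/-- The polynomial `x*y - t*u - 1` defining `SL₂` inside `𝔸⁴ = Spec k[t,u,x,y]`
(variables: `0 = t`, `1 = u`, `2 = x`, `3 = y`). -/
def sl2Rel : MvPolynomial (Fin 4) k := X 2 * X 3 - X 0 * X 1 - 1

/-- The coordinate ring `R = k[t,u,x,y]/(xy - tu - 1)` of `SL₂`. -/
abbrev SL2Ring : Type _ := MvPolynomial (Fin 4) k ⧸ Ideal.span {sl2Rel k}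

/-- The class of `t` in `R`. -/
def sl2T : SL2Ring k := Ideal.Quotient.mk (Ideal.span {sl2Rel k}) (X 0)

/-- `B = k[t,x,y]` (variables: `0 = t`, `1 = x`, `2 = y`). -/
abbrev B3 : Type _ := MvPolynomial (Fin 3) k

/-- The comorphism `η* : B = k[t,x,y] → R` of `η : SL₂ → 𝔸³`, `(t,u,x,y) ↦ (t,x,y)`. -/
def etaStar : B3 k →ₐ[k] SL2Ring k :=
  aeval ![Ideal.Quotient.mk (Ideal.span {sl2Rel k}) (X 0),
          Ideal.Quotient.mk (Ideal.span {sl2Rel k}) (X 2),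
          Ideal.Quotient.mk (Ideal.span {sl2Rel k}) (X 3)]

/-- The ideal `I = (t, xy − 1) ⊂ B` of the curve `Γ : t = xy − 1 = 0`. -/
def gammaIdeal : Ideal (B3 k) := Ideal.span {X 0, X 1 * X 2 - 1}

/-- The group of `k`-algebra automorphisms of `R` fixing `t`. -/
def autSL2T : Subgroup (SL2Ring k ≃ₐ[k] SL2Ring k) where
  carrier := {Φ | Φ (sl2T k) = sl2T k}
  one_mem' := rfl
  mul_mem' := by
    intro a b ha hb
    simp only [Set.mem_setOf_eq] at ha hb ⊢
    rw [AlgEquiv.mul_apply, hb, ha]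
  inv_mem' := by
    intro a ha
    simp only [Set.mem_setOf_eq] at ha ⊢
    exact a.symm_apply_eq.mpr ha.symm

/-- The group of `k`-algebra automorphisms of `B = k[t,x,y]` fixing `t` and
preserving the ideal `I = (t, xy − 1)`. -/
def autA3TGamma : Subgroup (B3 k ≃ₐ[k] B3 k) where
  carrier := {ψ | ψ (X 0) = X 0 ∧ Ideal.map ψ (gammaIdeal k) = gammaIdeal k}
  one_mem' := ⟨rfl, Ideal.map_aut_one _⟩
  mul_mem' := by
    intro a b ha hb
    simp only [Set.mem_setOf_eq] at ha hb ⊢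
    refine ⟨?_, ?_⟩
    · rw [AlgEquiv.mul_apply, hb.1, ha.1]
    · rw [Ideal.map_aut_mul, hb.2, ha.2]
  inv_mem' := by
    intro a ha
    simp only [Set.mem_setOf_eq] at ha ⊢
    exact ⟨a.symm_apply_eq.mpr ha.1.symm, Ideal.map_aut_inv a _ ha.2⟩


namespace SL2Aux

variable {k}

/-- class of `u` -/
def cu : SL2Ring k := Ideal.Quotient.mk (Ideal.span {sl2Rel k}) (X 1)
/-- class of `x` -/
def cx : SL2Ring k := Ideal.Quotient.mk (Ideal.span {sl2Rel k}) (X 2)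
/-- class of `y` -/
def cy : SL2Ring k := Ideal.Quotient.mk (Ideal.span {sl2Rel k}) (X 3)

lemma rel : (cx : SL2Ring k) * cy = sl2T k * cu + 1 := by
  have h : Ideal.Quotient.mk (Ideal.span {sl2Rel k}) (sl2Rel k) = 0 :=
    Ideal.Quotient.eq_zero_iff_mem.2 (Ideal.mem_span_singleton_self _)
  simp only [sl2Rel, map_sub, map_mul, map_one] at h
  change (cx : SL2Ring k) * cy - sl2T k * cu - 1 = 0 at h
  linear_combination h

@[simp] lemma eta_t : etaStar k (X 0) = sl2T k := by simp [etaStar, sl2T]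
@[simp] lemma eta_x : etaStar k (X 1) = cx := by simp [etaStar, cx]
@[simp] lemma eta_y : etaStar k (X 2) = cy := by simp [etaStar, cy]

section lift
variable {T : Type*} [CommRing T] [Algebra k T]

/-- homs out of `R` -/
def lift (t u x y : T) (h : x * y = t * u + 1) : SL2Ring k →ₐ[k] T :=
  Ideal.Quotient.liftₐ (Ideal.span {sl2Rel k}) (aeval ![t, u, x, y]) (by
    intro a ha
    obtain ⟨b, rfl⟩ := Ideal.mem_span_singleton'.1 ha
    have : aeval ![t, u, x, y] (sl2Rel k) = 0 := by
      simp [sl2Rel, h]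
    rw [map_mul, this, mul_zero])

variable (t u x y : T) (h : x * y = t * u + 1)

@[simp] lemma lift_t : lift (k := k) t u x y h (sl2T k) = t := by
  change aeval ![t, u, x, y] (X 0) = t
  simp
@[simp] lemma lift_u : lift (k := k) t u x y h cu = u := by
  change aeval ![t, u, x, y] (X 1) = u
  simp
@[simp] lemma lift_x : lift (k := k) t u x y h cx = x := by
  change aeval ![t, u, x, y] (X 2) = x
  simp
@[simp] lemma lift_y : lift (k := k) t u x y h cy = y := by
  change aeval ![t, u, x, y] (X 3) = y
  simp

lemma hom_ext {f g : SL2Ring k →ₐ[k] T} (ht : f (sl2T k) = g (sl2T k)) (hu : f cu = g cu)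
    (hx : f cx = g cx) (hy : f cy = g cy) : f = g := by
  apply Ideal.Quotient.algHom_ext
  apply MvPolynomial.algHom_ext
  intro i
  fin_cases i
  · exact ht
  · exact hu
  · exact hx
  · exact hy

lemma B_ext {f g : B3 k →ₐ[k] T} (ht : f (X 0) = g (X 0)) 
    (hx : f (X 1) = g (X 1)) (hy : f (X 2) = g (X 2)) : f = g := by
  apply MvPolynomial.algHom_ext
  intro i
  fin_cases i
  · exact ht
  · exact hx
  · exact hy

end lift

lemma t_nzd {r : SL2Ring k} (h : sl2T k * r = 0) : r = 0 := by
  obtain ⟨F, rfl⟩ := Ideal.Quotient.mk_surjective r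
  rw [sl2T, ← map_mul, Ideal.Quotient.eq_zero_iff_mem, Ideal.mem_span_singleton'] at h
  obtain ⟨G, hG⟩ := h
  have hp : Prime (X 0 : MvPolynomial (Fin 4) k) := MvPolynomial.X_prime
  have hd : (X 0 : MvPolynomial (Fin 4) k) ∣ G * sl2Rel k := ⟨F, hG⟩
  rcases hp.dvd_or_dvd hd with ⟨G', rfl⟩ | ⟨c, hc⟩
  · rw [Ideal.Quotient.eq_zero_iff_mem, Ideal.mem_span_singleton']
    refine ⟨G', ?_⟩
    apply mul_left_cancel₀ hp.ne_zero
    rw [← hG]; ring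
  · exfalso
    have := congrArg (MvPolynomial.eval (0 : Fin 4 → k)) hc
    simp [sl2Rel] at this

lemma t_pow_nzd (n : ℕ) {r : SL2Ring k} (h : sl2T k ^ n * r = 0) : r = 0 := by
  induction n with
  | zero => simpa using h
  | succ n ih => 
    apply ih
    apply t_nzd
    rw [← h]; ring

lemma t_cancel {r s : SL2Ring k} (h : sl2T k * r = sl2T k * s) : r = s := by
  rw [← sub_eq_zero]; apply t_nzd; rw [mul_sub, h, sub_self]

lemma t_pow_cancel (n : ℕ) {r s : SL2Ring k} (h : sl2T k ^ n * r = sl2T k ^ n * s) : r = s := by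
  rw [← sub_eq_zero]; apply t_pow_nzd n; rw [mul_sub, h, sub_self]

lemma exists_pow (r : SL2Ring k) : ∃ (n : ℕ) (p : B3 k), sl2T k ^ n * r = etaStar k p := by
  obtain ⟨F, rfl⟩ := Ideal.Quotient.mk_surjective r
  induction F using MvPolynomial.induction_on with
  | C a => 
    refine ⟨0, C a, ?_⟩
    rw [pow_zero, one_mul, ← MvPolynomial.algebraMap_eq, ← MvPolynomial.algebraMap_eq,
      AlgHom.commutes]
    rfl
  | add p q hp hq =>
    obtain ⟨n, a, ha⟩ := hp
    obtain ⟨m, b, hb⟩ := hq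
    refine ⟨n + m, X 0 ^ m * a + X 0 ^ n * b, ?_⟩
    simp only [map_add, map_mul, map_pow, eta_t, ← ha, ← hb]
    ring
  | mul_X p i hp =>
    obtain ⟨n, a, ha⟩ := hp
    have : ∃ b : B3 k, sl2T k * Ideal.Quotient.mk (Ideal.span {sl2Rel k}) (X i) = etaStar k b := by
      fin_cases i
      · exact ⟨X 0 * X 0, by rw [map_mul, eta_t]; rfl⟩
      · refine ⟨X 1 * X 2 - 1, ?_⟩
        rw [map_sub, map_mul, eta_x, eta_y, rel, map_one]
        change sl2T k * cu = _
        ring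
      · exact ⟨X 0 * X 1, by rw [map_mul, eta_t, eta_x]; rfl⟩
      · exact ⟨X 0 * X 2, by rw [map_mul, eta_t, eta_y]; rfl⟩
    obtain ⟨b, hb⟩ := this
    refine ⟨n + 1, a * b, ?_⟩
    rw [map_mul, map_mul, ← ha, ← hb]
    ring

/-- embedding of `R` in the fraction field of `B` -/
def toFrac : SL2Ring k →ₐ[k] FractionRing (B3 k) :=
  lift (algebraMap (B3 k) _ (X 0))
    (algebraMap (B3 k) _ (X 1 * X 2 - 1) / algebraMap (B3 k) _ (X 0))
    (algebraMap (B3 k) _ (X 1)) (algebraMap (B3 k) _ (X 2)) (by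
      have : algebraMap (B3 k) (FractionRing (B3 k)) (X 0) ≠ 0 := by
        simp [MvPolynomial.X_ne_zero]
      rw [mul_div_cancel₀ _ this]
      simp)

lemma toFrac_eta (p : B3 k) : toFrac (etaStar k p) = algebraMap _ _ p := by
  have : (toFrac (k := k)).comp (etaStar k) = IsScalarTower.toAlgHom k (B3 k) _ := by
    apply B_ext <;> simp [toFrac]
  exact DFunLike.congr_fun this p

lemma eta_inj : Function.Injective (etaStar k) := by
  intro p q h
  have := congrArg toFrac h
  rw [toFrac_eta, toFrac_eta] at this
  exact IsFractionRing.injective (B3 k) (FractionRing (B3 k)) this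

lemma toFrac_inj : Function.Injective (toFrac (k := k)) := by
  rw [injective_iff_map_eq_zero]
  intro r hr
  obtain ⟨n, p, hp⟩ := exists_pow r
  have h1 := congrArg toFrac hp
  rw [toFrac_eta, map_mul, hr, mul_zero] at h1
  have : p = 0 := by
    apply IsFractionRing.injective (B3 k) (FractionRing (B3 k)); rw [← h1, map_zero]
  rw [this, map_zero] at hp
  exact t_pow_nzd n hp

instance : IsDomain (SL2Ring k) := toFrac_inj.isDomain (toFrac (k := k)).toRingHom

/-- setting `t = 0` -/
def e0 : B3 k →ₐ[k] B3 k := aeval ![0, X 1, X 2]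
@[simp] lemma e0_t : e0 (X 0 : B3 k) = 0 := by simp [e0]
@[simp] lemma e0_x : e0 (X 1 : B3 k) = X 1 := by simp [e0]
@[simp] lemma e0_y : e0 (X 2 : B3 k) = X 2 := by simp [e0]

lemma dvd_sub_e0 (p : B3 k) : X 0 ∣ p - e0 p := by
  rw [← Ideal.mem_span_singleton, ← Ideal.Quotient.mk_eq_mk_iff_sub_mem]
  have : (Ideal.Quotient.mkₐ k (Ideal.span {(X 0 : B3 k)})) =
    (Ideal.Quotient.mkₐ k (Ideal.span {(X 0 : B3 k)})).comp e0 := by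
    apply B_ext
    · simp [Ideal.Quotient.eq_zero_iff_mem, Ideal.mem_span_singleton]
    · simp
    · simp
  exact DFunLike.congr_fun this p

lemma dvd_iff (p : B3 k) : X 0 ∣ p ↔ e0 p = 0 := by
  constructor
  · rintro ⟨q, rfl⟩; simp
  · intro h; have := dvd_sub_e0 p; rwa [h, sub_zero] at this

/-- `η p ∈ tR` implies `xy-1 ∣ p(0,x,y)`. -/
lemma w_dvd {p : B3 k} {r : SL2Ring k} (h : etaStar k p = sl2T k * r) :
    (X 1 * X 2 - 1 : B3 k) ∣ e0 p := by
  let J := Ideal.span {(X 1 * X 2 - 1 : B3 k)}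
  let q := Ideal.Quotient.mkₐ k J
  have hq : q (X 1) * q (X 2) = 0 * 0 + 1 := by
    have : q (X 1 * X 2 - 1) = 0 :=
      Ideal.Quotient.eq_zero_iff_mem.2 (Ideal.mem_span_singleton_self _)
    rw [map_sub, map_mul, map_one] at this
    linear_combination this
  let l := lift (k := k) 0 0 (q (X 1)) (q (X 2)) hq
  have h1 : l.comp (etaStar k) = q.comp e0 := by
    apply B_ext <;> simp [l]
  have h2 := DFunLike.congr_fun h1 p
  simp only [AlgHom.comp_apply] at h2
  rw [h, map_mul] at h2
  have h3 : q (e0 p) = 0 := by rw [← h2]; simp [l]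
  exact Ideal.mem_span_singleton.1 (Ideal.Quotient.eq_zero_iff_mem.1 h3)

lemma mem_gamma (p : B3 k) : p ∈ gammaIdeal k ↔ ∃ r, etaStar k p = sl2T k * r := by
  constructor
  · intro h
    rw [gammaIdeal, Ideal.mem_span_pair] at h
    obtain ⟨a, b, rfl⟩ := h
    refine ⟨etaStar k a + etaStar k b * cu, ?_⟩
    simp only [map_add, map_mul, map_sub, map_one, eta_t, eta_x, eta_y, rel]
    ring
  · rintro ⟨r, h⟩
    obtain ⟨b, hb⟩ := w_dvd h
    obtain ⟨a, ha⟩ := dvd_sub_e0 p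
    rw [gammaIdeal, Ideal.mem_span_pair]
    exact ⟨a, b, by linear_combination -ha - hb⟩

lemma exists_min {g : SL2Ring k} (hg : g ∉ (etaStar k).range) :
    ∃ (m : ℕ) (p : B3 k), sl2T k ^ (m+1) * g = etaStar k p ∧ e0 p ≠ 0 := by
  classical
  have h := exists_pow g
  obtain ⟨p, hp⟩ := Nat.find_spec h
  rcases hm : Nat.find h with _ | m
  · rw [hm, pow_zero, one_mul] at hp
    exact absurd ⟨p, hp.symm⟩ hg
  · rw [hm] at hp
    refine ⟨m, p, hp, fun h0 => ?_⟩
    obtain ⟨q, rfl⟩ := (dvd_iff p).2 h0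
    apply Nat.find_min h (m := m) (by omega)
    refine ⟨q, ?_⟩
    apply t_cancel
    rw [map_mul, eta_t] at hp
    rw [← hp]; ring

end SL2Aux

namespace SL2Aux
set_option maxSynthPendingDepth 6

variable {k}

variable (k) in
/-- `B[s][τ]` -/
abbrev DD : Type _ := Polynomial (Polynomial (B3 k))
variable (k) in
/-- its fraction field -/
def LL : Type _ := FractionRing (DD k)

instance : Field (LL k) := inferInstanceAs (Field (FractionRing (DD k)))
instance : Algebra (DD k) (LL k) := inferInstanceAs (Algebra (DD k) (FractionRing (DD k)))
instance : IsFractionRing (DD k) (LL k) :=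
  inferInstanceAs (IsFractionRing (DD k) (FractionRing (DD k)))
instance : Algebra k (LL k) := ((algebraMap (DD k) (LL k)).comp (algebraMap k (DD k))).toAlgebra
instance : IsScalarTower k (DD k) (LL k) := IsScalarTower.of_algebraMap_eq (fun _ => rfl)

/-- the inclusion -/
abbrev jj : DD k →+* LL k := algebraMap (DD k) (LL k)

lemma jj_inj : Function.Injective (jj (k := k)) := IsFractionRing.injective (DD k) (LL k)

/-- `t ↦ τ^N` on `B` -/
def lam (N : ℕ) : B3 k →ₐ[k] DD k :=
  aeval ![Polynomial.X ^ N, Polynomial.C (Polynomial.C (X 1)), Polynomial.C (Polynomial.C (X 2))]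

lemma tau_ne : jj (Polynomial.X : DD k) ≠ 0 := by
  rw [Ne, map_eq_zero_iff _ jj_inj]; exact Polynomial.X_ne_zero

/-- `t ↦ τ^N` on `R` -/
def iota (N : ℕ) : SL2Ring k →ₐ[k] LL k :=
  lift (jj (lam N (X 0))) (jj (lam N (X 1 * X 2 - 1)) / jj (lam N (X 0)))
    (jj (lam N (X 1))) (jj (lam N (X 2))) (by
      have : jj (lam N (X 0 : B3 k)) ≠ 0 := by
        simp only [lam, aeval_X, Matrix.cons_val_zero, map_pow]
        exact pow_ne_zero _ tau_ne
      rw [mul_div_cancel₀ _ this]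
      simp only [map_sub, map_mul, map_one]; ring)

lemma iota_eta (N : ℕ) (p : B3 k) : iota N (etaStar k p) = jj (lam N p) := by
  have : (iota (k := k) N).comp (etaStar k) =
      (IsScalarTower.toAlgHom k (DD k) (LL k)).comp (lam N) := by
    apply B_ext <;> simp [iota]
  exact DFunLike.congr_fun this p

lemma iota_t (N : ℕ) : iota N (sl2T k) = jj Polynomial.X ^ N := by
  rw [← eta_t, iota_eta]; simp [lam]

lemma lam_coeff {N : ℕ} (hN : N ≠ 0) (p : B3 k) : (lam N p).coeff 0 = Polynomial.C (e0 p) := by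
  have : (Polynomial.constantCoeff (R := Polynomial (B3 k))).comp (lam N).toRingHom =
     (Polynomial.C (R := B3 k)).comp (e0 (k := k)).toRingHom := by
    apply MvPolynomial.ringHom_ext
    · intro r
      simp only [RingHom.comp_apply, AlgHom.toRingHom_eq_coe, RingHom.coe_coe,
        ← MvPolynomial.algebraMap_eq, AlgHom.commutes]
      simp [Polynomial.algebraMap_apply]
    · intro i
      fin_cases i <;> simp [lam, e0, hN, Ne.symm hN]
  exact RingHom.congr_fun this p

lemma exists_rep (a : SL2Ring k) (ha : a ≠ 0) :
    ∃ (v : ℤ) (b : B3 k), e0 b ≠ 0 ∧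
      (∀ N : ℕ, iota N a = jj Polynomial.X ^ ((N : ℤ) * v) * jj (lam N b)) ∧
      ((∃ b0, a = etaStar k b0 ∧ e0 b0 ≠ 0) → v = 0) := by
  by_cases h : ∃ b0, a = etaStar k b0 ∧ e0 b0 ≠ 0
  · obtain ⟨b, rfl, hb⟩ := h
    refine ⟨0, b, hb, fun N => ?_, fun _ => rfl⟩
    simp [iota_eta]
  · obtain ⟨n, p, hp⟩ := exists_pow a
    have hp0 : p ≠ 0 := by
      rintro rfl
      rw [map_zero] at hp
      exact ha (t_pow_nzd n hp)
    obtain ⟨d, b, hb, rfl⟩ := WfDvdMonoid.max_power_factor hp0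
      (MvPolynomial.X_prime (R := k) (i := (0 : Fin 3))).irreducible
    refine ⟨(d : ℤ) - n, b, fun h0 => hb ((dvd_iff b).2 h0), fun N => ?_, fun h' => absurd h' h⟩
    have h1 := congrArg (iota N) hp
    rw [map_mul, map_pow, iota_t, map_mul, map_pow, eta_t, map_mul, map_pow, iota_t, iota_eta] at h1
    have hne := tau_ne (k := k)
    rw [mul_sub, zpow_sub₀ hne, div_mul_eq_mul_div, eq_div_iff (zpow_ne_zero _ hne)]
    rw [← Nat.cast_mul, ← Nat.cast_mul, zpow_natCast, zpow_natCast, pow_mul, pow_mul, ← h1]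
    ring

lemma exists_slope (T : Finset (ℕ × ℤ)) (hT : T.Nonempty) (h1 : ∀ z ∈ T, z.1 ≠ 0) :
    ∃ (N : ℕ) (r : ℤ), N ≠ 0 ∧ (∀ z ∈ T, 0 ≤ (N : ℤ) * z.2 + z.1 * r) ∧
      ∃ z ∈ T, (N : ℤ) * z.2 + z.1 * r = 0 := by
  obtain ⟨z0, hz0, hmin⟩ := Finset.exists_min_image T (fun z => (z.2 : ℚ) / z.1) hT
  refine ⟨z0.1, -z0.2, h1 z0 hz0, fun z hz => ?_, z0, hz0, by ring⟩
  have h := hmin z hz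
  have a0 : (0 : ℚ) < z0.1 := by exact_mod_cast Nat.pos_of_ne_zero (h1 z0 hz0)
  have a1 : (0 : ℚ) < z.1 := by exact_mod_cast Nat.pos_of_ne_zero (h1 z hz)
  rw [div_le_div_iff₀ a0 a1] at h
  have h' : z0.2 * (z.1 : ℤ) ≤ z.2 * z0.1 := by exact_mod_cast h
  linarith

/-- `s ↦ τ^r s` -/
def eps (N : ℕ) (r : ℤ) : Polynomial (SL2Ring k) →+* LL k :=
  Polynomial.eval₂RingHom (iota N).toRingHom
    (jj Polynomial.X ^ r * jj (Polynomial.C Polynomial.X))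

lemma eps_C (N : ℕ) (r : ℤ) (a : SL2Ring k) : eps N r (Polynomial.C a) = iota N a := by
  simp [eps]

lemma exists_P (v : SL2Ring k → ℤ) (b : SL2Ring k → B3 k)
    (hb : ∀ a, a ≠ 0 → e0 (b a) ≠ 0)
    (hv : ∀ a, a ≠ 0 → ∀ N : ℕ, iota N a = jj Polynomial.X ^ ((N : ℤ) * v a) * jj (lam N (b a)))
    (N : ℕ) (hN : N ≠ 0) (r : ℤ) (q : Polynomial (SL2Ring k))
    (hq : ∀ i ∈ q.support, 0 ≤ (N : ℤ) * v (q.coeff i) + i * r) :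
    ∃ P : DD k, jj P = eps N r q ∧
      ∀ i ∈ q.support, (N : ℤ) * v (q.coeff i) + i * r = 0 → (P.coeff 0).coeff i ≠ 0 := by
  let e : ℕ → ℕ := fun i => ((N : ℤ) * v (q.coeff i) + i * r).toNat
  refine ⟨∑ i ∈ q.support, lam N (b (q.coeff i)) *
    (Polynomial.C (Polynomial.X ^ i) * Polynomial.X ^ (e i)), ?_, ?_⟩
  · rw [map_sum, eps, Polynomial.coe_eval₂RingHom, Polynomial.eval₂_eq_sum, Polynomial.sum]
    apply Finset.sum_congr rfl
    intro i hi
    have hi' : q.coeff i ≠ 0 := Polynomial.mem_support_iff.1 hi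
    have he : ((e i : ℕ) : ℤ) = (N : ℤ) * v (q.coeff i) + i * r := Int.toNat_of_nonneg (hq i hi)
    have hne := tau_ne (k := k)
    change _ = iota N (q.coeff i) * _
    rw [hv _ hi' N, mul_pow, ← zpow_natCast (jj Polynomial.X ^ r), ← zpow_mul, mul_comm r,
      map_mul, map_mul, map_pow jj Polynomial.X, ← zpow_natCast (jj Polynomial.X), he,
      zpow_add₀ hne, map_pow, map_pow]
    ring
  · intro i hi h0
    have hi' : q.coeff i ≠ 0 := Polynomial.mem_support_iff.1 hi
    have hei : e i = 0 := by simp [e, h0]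
    rw [Polynomial.finset_sum_coeff, Polynomial.finset_sum_coeff, Finset.sum_eq_single i]
    · rw [hei, pow_zero, mul_one, Polynomial.mul_coeff_zero, lam_coeff hN, Polynomial.coeff_C_zero,
        Polynomial.coeff_C_mul, Polynomial.coeff_X_pow_self, mul_one]
      exact hb _ hi'
    · intro l _ hl
      rw [Polynomial.mul_coeff_zero, lam_coeff hN, Polynomial.coeff_C_mul, Polynomial.mul_coeff_zero,
        Polynomial.coeff_C_zero, Polynomial.coeff_X_pow]
      split_ifs
      · rw [mul_one, Polynomial.coeff_X_pow, if_neg (Ne.symm hl), mul_zero]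
      · simp
    · intro h; exact absurd hi h

lemma key (α : SL2Ring k →ₐ[k] Polynomial (SL2Ring k))
    (ht : α (sl2T k) = Polynomial.C (sl2T k))
    (hx : (α cx).coeff 0 = cx) (hy : (α cy).coeff 0 = cy)
    (hnc : ∃ i, i ≠ 0 ∧ ((α cx).coeff i ≠ 0 ∨ (α cy).coeff i ≠ 0))
    (p : B3 k) (hp : α (etaStar k p) = Polynomial.C (etaStar k p)) (hp0 : e0 p ≠ 0)
    (hw : (X 1 * X 2 - 1 : B3 k) ∣ e0 p) : False := by
  classical
  have hrep : ∀ a : SL2Ring k, ∃ (v : ℤ) (b : B3 k), a ≠ 0 → (e0 b ≠ 0 ∧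
      (∀ N : ℕ, iota N a = jj Polynomial.X ^ ((N : ℤ) * v) * jj (lam N b)) ∧
      ((∃ b0, a = etaStar k b0 ∧ e0 b0 ≠ 0) → v = 0)) := by
    intro a
    by_cases ha : a = 0
    · exact ⟨0, 0, fun h => absurd ha h⟩
    · obtain ⟨v, b, h⟩ := exists_rep a ha
      exact ⟨v, b, fun _ => h⟩
  choose v b hvb using hrep
  have ex : e0 (X 1 : B3 k) ≠ 0 := by simp [X_ne_zero]
  have ey : e0 (X 2 : B3 k) ≠ 0 := by simp [X_ne_zero]
  have cx0 : (cx : SL2Ring k) ≠ 0 := by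
    rw [← eta_x, Ne, map_eq_zero_iff _ eta_inj]; exact X_ne_zero _
  have cy0 : (cy : SL2Ring k) ≠ 0 := by
    rw [← eta_y, Ne, map_eq_zero_iff _ eta_inj]; exact X_ne_zero _
  have vx : v cx = 0 := (hvb cx cx0).2.2 ⟨X 1, by simp, ex⟩
  have vy : v cy = 0 := (hvb cy cy0).2.2 ⟨X 2, by simp, ey⟩
  let T : Finset (ℕ × ℤ) :=
    ((α cx).support.erase 0).image (fun i => (i, v ((α cx).coeff i))) ∪
    ((α cy).support.erase 0).image (fun i => (i, v ((α cy).coeff i)))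
  have memT : ∀ z, z ∈ T ↔ z.1 ≠ 0 ∧ (((α cx).coeff z.1 ≠ 0 ∧ v ((α cx).coeff z.1) = z.2) ∨
      ((α cy).coeff z.1 ≠ 0 ∧ v ((α cy).coeff z.1) = z.2)) := by
    rintro ⟨i, c⟩
    simp only [T, Finset.mem_union, Finset.mem_image, Finset.mem_erase, Polynomial.mem_support_iff,
      Prod.mk.injEq]
    constructor
    · rintro (⟨a, ⟨h1, h2⟩, rfl, h3⟩ | ⟨a, ⟨h1, h2⟩, rfl, h3⟩)
      · exact ⟨h1, Or.inl ⟨h2, h3⟩⟩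
      · exact ⟨h1, Or.inr ⟨h2, h3⟩⟩
    · rintro ⟨h1, ⟨h2, h3⟩ | ⟨h2, h3⟩⟩
      · exact Or.inl ⟨i, ⟨h1, h2⟩, rfl, h3⟩
      · exact Or.inr ⟨i, ⟨h1, h2⟩, rfl, h3⟩
  have hTne : T.Nonempty := by
    obtain ⟨i, hi, h | h⟩ := hnc
    · exact ⟨(i, v ((α cx).coeff i)), (memT _).2 ⟨hi, Or.inl ⟨h, rfl⟩⟩⟩
    · exact ⟨(i, v ((α cy).coeff i)), (memT _).2 ⟨hi, Or.inr ⟨h, rfl⟩⟩⟩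
  obtain ⟨N, r, hN, hge, z, hz, hz0⟩ := exists_slope T hTne (fun z hz => ((memT z).1 hz).1)
  obtain ⟨P, hP, hP0⟩ := exists_P v b (fun a ha => (hvb a ha).1) (fun a ha => (hvb a ha).2.1)
    N hN r (α cx) (by
      intro i hi
      by_cases h0 : i = 0
      · subst h0; rw [hx, vx]; simp
      · exact hge (i, v ((α cx).coeff i))
          ((memT _).2 ⟨h0, Or.inl ⟨Polynomial.mem_support_iff.1 hi, rfl⟩⟩))
  obtain ⟨Q, hQ, hQ0⟩ := exists_P v b (fun a ha => (hvb a ha).1) (fun a ha => (hvb a ha).2.1)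
    N hN r (α cy) (by
      intro i hi
      by_cases h0 : i = 0
      · subst h0; rw [hy, vy]; simp
      · exact hge (i, v ((α cy).coeff i))
          ((memT _).2 ⟨h0, Or.inr ⟨Polynomial.mem_support_iff.1 hi, rfl⟩⟩))
  have hPne : P.coeff 0 ≠ 0 := by
    intro h
    refine hP0 0 ?_ ?_ ?_
    · rw [Polynomial.mem_support_iff, hx]; exact cx0
    · rw [hx, vx]; simp
    · rw [h]; simp
  have hQne : Q.coeff 0 ≠ 0 := by
    intro h
    refine hQ0 0 ?_ ?_ ?_
    · rw [Polynomial.mem_support_iff, hy]; exact cy0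
    · rw [hy, vy]; simp
    · rw [h]; simp
  let γ : B3 k →ₐ[k] DD k := aeval ![Polynomial.X ^ N, P, Q]
  have hγ : ((eps N r).comp (α.toRingHom)).comp (etaStar k).toRingHom = jj.comp γ.toRingHom := by
    apply MvPolynomial.ringHom_ext
    · intro c
      simp only [RingHom.comp_apply, AlgHom.toRingHom_eq_coe, RingHom.coe_coe,
        ← MvPolynomial.algebraMap_eq, AlgHom.commutes]
      rw [Polynomial.algebraMap_apply, eps_C, AlgHom.commutes, ← IsScalarTower.algebraMap_apply]
    · intro i
      fin_cases i
      · change eps N r (α (etaStar k (X 0))) = jj (γ (X 0))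
        rw [eta_t, ht, eps_C, iota_t]; simp [γ]
      · change eps N r (α (etaStar k (X 1))) = jj (γ (X 1))
        rw [eta_x, ← hP]; simp [γ]
      · change eps N r (α (etaStar k (X 2))) = jj (γ (X 2))
        rw [eta_y, ← hQ]; simp [γ]
  have hγp : γ p = lam N p := by
    apply jj_inj
    have := RingHom.congr_fun hγ p
    change eps N r (α (etaStar k p)) = jj (γ p) at this
    rw [← this, hp, eps_C, iota_eta]
  let θ : B3 k →ₐ[k] Polynomial (B3 k) := aeval ![0, P.coeff 0, Q.coeff 0]
  have hθ : (Polynomial.constantCoeff (R := Polynomial (B3 k))).comp γ.toRingHom =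
     θ.toRingHom.comp (e0 (k := k)).toRingHom := by
    apply MvPolynomial.ringHom_ext
    · intro r
      simp only [RingHom.comp_apply, AlgHom.toRingHom_eq_coe, RingHom.coe_coe,
        ← MvPolynomial.algebraMap_eq, AlgHom.commutes]
      simp [Polynomial.algebraMap_apply]
    · intro i
      fin_cases i <;> simp [γ, θ, e0, hN, Ne.symm hN]
  have h1 : θ (e0 p) = Polynomial.C (e0 p) := by
    have := RingHom.congr_fun hθ p
    change (γ p).coeff 0 = θ (e0 p) at this
    rw [← this, hγp, lam_coeff hN]
  obtain ⟨c, hc⟩ := hw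
  have h2 : θ (X 1 * X 2 - 1) * θ c = Polynomial.C (e0 p) := by rw [← map_mul, ← hc, h1]
  have hne : θ (X 1 * X 2 - 1) * θ c ≠ 0 := by
    rw [h2]; simpa using hp0
  have h3 : (θ (X 1 * X 2 - 1)).natDegree = 0 := by
    have := congrArg Polynomial.natDegree h2
    rw [Polynomial.natDegree_mul (left_ne_zero_of_mul hne) (right_ne_zero_of_mul hne),
      Polynomial.natDegree_C] at this
    omega
  have h4 : P.coeff 0 * Q.coeff 0 = θ (X 1 * X 2 - 1) + Polynomial.C 1 := by
    simp [θ]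
  have h5 : (P.coeff 0).natDegree + (Q.coeff 0).natDegree = 0 := by
    rw [← Polynomial.natDegree_mul hPne hQne, h4, Polynomial.natDegree_add_C, h3]
  obtain ⟨hz1, ⟨hz2, hz3⟩ | ⟨hz2, hz3⟩⟩ := (memT z).1 hz
  · refine hP0 z.1 (Polynomial.mem_support_iff.2 hz2) (by rw [hz3, hz0]) ?_
    exact Polynomial.coeff_eq_zero_of_natDegree_lt (by omega)
  · refine hQ0 z.1 (Polynomial.mem_support_iff.2 hz2) (by rw [hz3, hz0]) ?_
    exact Polynomial.coeff_eq_zero_of_natDegree_lt (by omega)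

end SL2Aux

namespace SL2Aux
set_option maxSynthPendingDepth 6

variable {k}

/-- the action `x ↦ x + ts`, `u ↦ u + ys` -/
def alpha0 : SL2Ring k →ₐ[k] Polynomial (SL2Ring k) :=
  lift (Polynomial.C (sl2T k)) (Polynomial.C cu + Polynomial.C cy * Polynomial.X)
    (Polynomial.C cx + Polynomial.C (sl2T k) * Polynomial.X) (Polynomial.C cy) (by
      have h := congrArg (Polynomial.C (R := SL2Ring k)) (rel (k := k))
      simp only [map_mul, map_add, map_one] at h
      linear_combination h)

lemma alpha0_coeff (r : SL2Ring k) : (alpha0 r).coeff 0 = r := by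
  have : (Polynomial.aeval (0 : SL2Ring k) |>.restrictScalars k).comp alpha0 =
      AlgHom.id k (SL2Ring k) := by
    apply hom_ext <;> simp [alpha0]
  have h := DFunLike.congr_fun this r
  simp only [AlgHom.comp_apply, AlgHom.restrictScalars_apply, AlgHom.id_apply] at h
  rw [Polynomial.coeff_zero_eq_eval_zero, ← Polynomial.coe_aeval_eq_eval]
  exact h

lemma t_ne_zero : sl2T k ≠ 0 := by
  rw [← eta_t, Ne, map_eq_zero_iff _ eta_inj]; exact X_ne_zero _

lemma map_y_mem (Φ : SL2Ring k ≃ₐ[k] SL2Ring k) (hΦ : Φ (sl2T k) = sl2T k) :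
    Φ cy ∈ (etaStar k).range := by
  by_contra hg
  obtain ⟨m, p, hp, hp0⟩ := exists_min hg
  have hs : Φ.symm (sl2T k) = sl2T k := by rw [AlgEquiv.symm_apply_eq, hΦ]
  let α : SL2Ring k →ₐ[k] Polynomial (SL2Ring k) :=
    ((Polynomial.mapAlgHom (Φ : SL2Ring k →ₐ[k] SL2Ring k)).comp alpha0).comp
      (Φ.symm : SL2Ring k →ₐ[k] SL2Ring k)
  have hα : ∀ r, α r = (alpha0 (Φ.symm r)).map (Φ : SL2Ring k →+* SL2Ring k) := fun r => rfl
  have ht : α (sl2T k) = Polynomial.C (sl2T k) := by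
    rw [hα, hs]; simp [alpha0, hΦ]
  have h0 : ∀ r, (α r).coeff 0 = r := by
    intro r
    rw [hα, Polynomial.coeff_map, alpha0_coeff]; simp
  have hg' : α (Φ cy) = Polynomial.C (Φ cy) := by
    rw [hα, AlgEquiv.symm_apply_apply]; simp [alpha0]
  have hf' : (α (Φ cx)).coeff 1 = sl2T k := by
    rw [hα, AlgEquiv.symm_apply_apply, Polynomial.coeff_map]
    simp [alpha0, hΦ, Polynomial.coeff_C]
  refine key α ht (h0 _) (h0 _) ?_ p ?_ hp0 (w_dvd (r := sl2T k ^ m * Φ cy) ?_)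
  · by_contra hcon
    push Not at hcon
    have e1 : α cx = Polynomial.C cx := by
      ext i
      by_cases hi : i = 0
      · subst hi; rw [h0]; simp
      · rw [(hcon i hi).1, Polynomial.coeff_C, if_neg hi]
    have e2 : α cy = Polynomial.C cy := by
      ext i
      by_cases hi : i = 0
      · subst hi; rw [h0]; simp
      · rw [(hcon i hi).2, Polynomial.coeff_C, if_neg hi]
    have e3 : α.comp (etaStar k) = (Polynomial.CAlgHom (R := k)).comp (etaStar k) := by
      apply B_ext <;> simp [ht, e1, e2]
    obtain ⟨n, q, hq⟩ := exists_pow (Φ cx)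
    have e4 := DFunLike.congr_fun e3 q
    simp only [AlgHom.comp_apply] at e4
    rw [← hq, map_mul, map_pow, ht, ← map_pow] at e4
    have e5 := congrArg (fun z => Polynomial.coeff z 1) e4
    simp only [Polynomial.coeff_C_mul] at e5
    rw [hf', Polynomial.CAlgHom_apply, Polynomial.coeff_C, if_neg one_ne_zero] at e5
    exact mul_ne_zero (pow_ne_zero _ t_ne_zero) t_ne_zero e5
  · rw [← hp, map_mul, map_pow, ht, hg']; simp
  · rw [← hp]; ring

variable (k) in
/-- swapping `x` and `y` -/
def swap : SL2Ring k →ₐ[k] SL2Ring k := lift (sl2T k) cu cy cx (by rw [mul_comm, rel])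

lemma swap_swap : (swap k).comp (swap k) = AlgHom.id k _ := by
  apply hom_ext <;> simp [swap]

variable (k) in
/-- swapping `x` and `y` -/
def swapE : SL2Ring k ≃ₐ[k] SL2Ring k := AlgEquiv.ofAlgHom (swap k) (swap k) swap_swap swap_swap

lemma map_x_mem (Φ : SL2Ring k ≃ₐ[k] SL2Ring k) (hΦ : Φ (sl2T k) = sl2T k) :
    Φ cx ∈ (etaStar k).range := by
  have h := map_y_mem ((swapE k).trans Φ) (by
    change Φ (swap k (sl2T k)) = _
    simp [swap, hΦ])
  change Φ (swap k cy) ∈ _ at h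
  simpa [swap] using h

lemma map_eta_mem (Φ : SL2Ring k ≃ₐ[k] SL2Ring k) (hΦ : Φ (sl2T k) = sl2T k) (p : B3 k) :
    ∃ q, etaStar k q = Φ (etaStar k p) := by
  obtain ⟨a, ha⟩ := map_x_mem Φ hΦ
  obtain ⟨b, hb⟩ := map_y_mem Φ hΦ
  replace ha : etaStar k a = Φ cx := ha
  replace hb : etaStar k b = Φ cy := hb
  have : (etaStar k).comp (aeval ![X 0, a, b]) =
      (Φ : SL2Ring k →ₐ[k] SL2Ring k).comp (etaStar k) := by
    apply B_ext <;> simp [ha, hb, hΦ]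
  exact ⟨_, DFunLike.congr_fun this p⟩

lemma symm_t {Φ : SL2Ring k ≃ₐ[k] SL2Ring k} (hΦ : Φ (sl2T k) = sl2T k) :
    Φ.symm (sl2T k) = sl2T k := by rw [AlgEquiv.symm_apply_eq, hΦ]

lemma map_range (Φ : SL2Ring k ≃ₐ[k] SL2Ring k) (hΦ : Φ (sl2T k) = sl2T k) :
    Subalgebra.map Φ.toAlgHom (etaStar k).range = (etaStar k).range := by
  apply le_antisymm
  · rintro _ ⟨_, ⟨p, rfl⟩, rfl⟩
    obtain ⟨q, hq⟩ := map_eta_mem Φ hΦ p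
    exact ⟨q, hq⟩
  · rintro _ ⟨p, rfl⟩
    obtain ⟨q, hq⟩ := map_eta_mem Φ.symm (symm_t hΦ) p
    refine ⟨etaStar k q, ⟨q, rfl⟩, ?_⟩
    change Φ (etaStar k q) = etaStar k p
    rw [hq, AlgEquiv.apply_symm_apply]

/-! ### Part (1) -/

lemma t_not_unit : ¬ IsUnit (sl2T k) := by
  intro h
  have := h.map (lift (k := k) (0 : k) 0 1 1 (by simp))
  simp at this

lemma unit_const {v : SL2Ring k} (hv : IsUnit v) : ∃ c : k, v = algebraMap k _ c := by
  obtain ⟨w, hw⟩ := hv.exists_right_inv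
  obtain ⟨n, p, hp⟩ := exists_pow v
  obtain ⟨m, q, hq⟩ := exists_pow w
  have hpq : p * q = X 0 ^ (n + m) := by
    apply eta_inj
    rw [map_mul, ← hp, ← hq, map_pow, eta_t, pow_add]
    linear_combination (sl2T k ^ n * sl2T k ^ m) * hw
  obtain ⟨i, -, hi⟩ := (_root_.dvd_prime_pow (MvPolynomial.X_prime (R := k) (i := (0 : Fin 3)))
    (n + m)).1 ⟨q, hpq.symm⟩
  obtain ⟨e, he⟩ := hi.symm
  obtain ⟨c, hc, hce⟩ := MvPolynomial.isUnit_iff_eq_C_of_isReduced.1 e.isUnit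
  rw [hce, ← MvPolynomial.algebraMap_eq] at he
  rw [← he, map_mul, map_pow, eta_t, AlgHom.commutes] at hp
  have hcu : IsUnit (algebraMap k (SL2Ring k) c) := hc.map _
  rcases lt_trichotomy n i with h | h | h
  · obtain ⟨j, rfl⟩ := Nat.exists_eq_add_of_lt h
    exfalso
    apply t_not_unit (k := k)
    have : v = sl2T k * (sl2T k ^ j * algebraMap k _ c) := by
      apply t_pow_cancel n
      rw [hp]; ring
    rw [this] at hv
    exact isUnit_of_mul_isUnit_left hv
  · subst h
    exact ⟨c, t_pow_cancel _ hp⟩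
  · obtain ⟨j, rfl⟩ := Nat.exists_eq_add_of_lt h
    exfalso
    apply t_not_unit (k := k)
    have : sl2T k * (sl2T k ^ j * v) = algebraMap k _ c := by
      apply t_pow_cancel i
      rw [← hp]; ring
    rw [← this] at hcu
    exact isUnit_of_mul_isUnit_left hcu

lemma no_shift (Φ : SL2Ring k ≃ₐ[k] SL2Ring k) (c l : k) (hl : l ≠ 0) (hc : c ≠ 0)
    (h : Φ (sl2T k) = algebraMap k _ c * (sl2T k - algebraMap k _ l)) : False := by
  let I := Ideal.span {sl2T k - algebraMap k _ l}
  let φ : SL2Ring k →ₐ[k] B3 k := lift (algebraMap k _ l)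
    (algebraMap k _ l⁻¹ * (X 1 * X 2 - 1)) (X 1) (X 2) (by
      rw [← mul_assoc, ← map_mul, mul_inv_cancel₀ hl, map_one]; ring)
  have hφ : (Ideal.Quotient.mkₐ k I) =
      ((Ideal.Quotient.mkₐ k I).comp (etaStar k)).comp φ := by
    have ht : Ideal.Quotient.mkₐ k I (sl2T k) = algebraMap k (SL2Ring k ⧸ I) l := by
      have : Ideal.Quotient.mkₐ k I (sl2T k - algebraMap k _ l) = 0 :=
        Ideal.Quotient.eq_zero_iff_mem.2 (Ideal.mem_span_singleton_self _)
      rw [map_sub, sub_eq_zero, AlgHom.commutes] at this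
      exact this
    apply hom_ext
    · rw [ht, AlgHom.comp_apply]
      simp only [φ, lift_t, AlgHom.commutes]
    · rw [AlgHom.comp_apply]
      simp only [φ, lift_u, AlgHom.commutes, map_mul, AlgHom.comp_apply]
      rw [map_sub, map_sub, map_mul, eta_x, eta_y, rel, map_one, map_one, map_add, map_one,
        add_sub_cancel_right, map_mul, ht, ← mul_assoc, ← map_mul, inv_mul_cancel₀ hl, map_one,
        one_mul]
    · simp [φ]
    · simp [φ]
  -- `φ (Φ x)` is a unit
  have hu : IsUnit (φ (Φ cx)) := by
    have h1 := congrArg (fun z => φ (Φ z)) (rel (k := k))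
    simp only [map_mul, map_add, map_one, h] at h1
    have h2 : φ (sl2T k - algebraMap k _ l) = 0 := by
      rw [map_sub, AlgHom.commutes]; simp [φ]
    rw [h2] at h1
    exact IsUnit.of_mul_eq_one (φ (Φ cy)) (by rw [h1]; ring)
  obtain ⟨e, -, he⟩ := MvPolynomial.isUnit_iff_eq_C_of_isReduced.1 hu
  rw [← MvPolynomial.algebraMap_eq] at he
  have h3 : Φ cx - algebraMap k _ e ∈ I := by
    rw [← Ideal.Quotient.mk_eq_mk_iff_sub_mem]
    have := DFunLike.congr_fun hφ (Φ cx)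
    rw [AlgHom.comp_apply, he, AlgHom.commutes] at this
    exact this
  obtain ⟨a, ha⟩ := Ideal.mem_span_singleton'.1 h3
  have h4 : cx - algebraMap k _ e = Φ.symm (algebraMap k _ c⁻¹ * a) * sl2T k := by
    apply Φ.injective
    rw [map_sub, AlgEquiv.commutes, ← ha, map_mul, AlgEquiv.apply_symm_apply, h]
    have : algebraMap k (SL2Ring k) c⁻¹ * algebraMap k (SL2Ring k) c = 1 := by
      rw [← map_mul, inv_mul_cancel₀ hc, map_one]
    linear_combination (-a * (sl2T k - algebraMap k _ l)) * this
  let F := FractionRing (Polynomial k)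
  let z : F := algebraMap (Polynomial k) F Polynomial.X
  have hz : z ≠ 0 := by simp [z]
  have h5 := congrArg (lift (k := k) (0 : F) 0 z z⁻¹ (by rw [mul_inv_cancel₀ hz]; ring)) h4
  rw [map_sub, map_mul, AlgHom.commutes, lift_t, lift_x, mul_zero, sub_eq_zero,
    IsScalarTower.algebraMap_apply k (Polynomial k) F] at h5
  have h6 := IsFractionRing.injective (Polynomial k) F h5
  exact Polynomial.X_ne_C e h6

lemma part1 (Φ : SL2Ring k ≃ₐ[k] SL2Ring k) :
    Ideal.map Φ (Ideal.span {sl2T k - 1}) = Ideal.span {sl2T k - 1} ↔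
          Φ (sl2T k) = sl2T k := by
  rw [Ideal.map_span, Set.image_singleton]
  constructor
  · intro h
    obtain ⟨v, hv⟩ := (Ideal.span_singleton_eq_span_singleton.1 h).symm
    obtain ⟨c, hc⟩ := unit_const v.isUnit
    have hc0 : c ≠ 0 := by
      rintro rfl
      rw [map_zero] at hc
      exact v.ne_zero hc
    rw [hc, map_sub, map_one] at hv
    have hci : algebraMap k (SL2Ring k) c * algebraMap k (SL2Ring k) c⁻¹ = 1 := by
      rw [← map_mul, mul_inv_cancel₀ hc0, map_one]
    by_cases h1 : c = 1
    · rw [h1, map_one] at hv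
      linear_combination -hv
    · exfalso
      refine no_shift Φ c (1 - c⁻¹) ?_ hc0 ?_
      · intro h2
        apply h1
        rw [sub_eq_zero] at h2
        rw [← inv_inv c, ← h2, inv_one]
      · rw [map_sub, map_one]
        linear_combination -hv - hci
  · intro h
    rw [map_sub, map_one, h]

/-! ### Part (3) -/

lemma hom_ext_eta {f g : SL2Ring k →ₐ[k] SL2Ring k} (hf : f (sl2T k) = sl2T k)
    (h : f.comp (etaStar k) = g.comp (etaStar k)) : f = g := by
  have h' : ∀ p, f (etaStar k p) = g (etaStar k p) := DFunLike.congr_fun h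
  have ht := h' (X 0)
  have hx := h' (X 1)
  have hy := h' (X 2)
  rw [eta_t] at ht
  rw [eta_x] at hx
  rw [eta_y] at hy
  refine hom_ext ht ?_ hx hy
  apply t_cancel
  have hu : sl2T k * cu = cx * cy - 1 := by rw [rel]; ring
  have h1 := congrArg f hu
  have h2 := congrArg g hu
  rw [map_mul, map_sub, map_mul, map_one] at h1 h2
  rw [hf] at h1
  rw [← ht, hf] at h2
  rw [h1, h2, hx, hy]

lemma exists_psi (Φ : SL2Ring k ≃ₐ[k] SL2Ring k) (hΦ : Φ (sl2T k) = sl2T k) :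
    ∃ ψ : B3 k →ₐ[k] B3 k, ∀ p, etaStar k (ψ p) = Φ (etaStar k p) := by
  obtain ⟨a, ha⟩ := map_eta_mem Φ hΦ (X 1)
  obtain ⟨b, hb⟩ := map_eta_mem Φ hΦ (X 2)
  rw [eta_x] at ha
  rw [eta_y] at hb
  refine ⟨aeval ![X 0, a, b], fun p => ?_⟩
  have : (etaStar k).comp (aeval ![X 0, a, b]) =
      (Φ : SL2Ring k →ₐ[k] SL2Ring k).comp (etaStar k) := by
    apply B_ext <;> simp [ha, hb, hΦ]
  exact DFunLike.congr_fun this p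

lemma exists_E (Φ : autSL2T k) : ∃ ψ : autA3TGamma k,
    ∀ p, etaStar k (ψ.1 p) = Φ.1 (etaStar k p) := by
  obtain ⟨Φ, hΦ⟩ := Φ
  replace hΦ : Φ (sl2T k) = sl2T k := hΦ
  obtain ⟨f, hf⟩ := exists_psi Φ hΦ
  obtain ⟨g, hg⟩ := exists_psi Φ.symm (symm_t hΦ)
  have fg : ∀ p, f (g p) = p := fun p => eta_inj (by rw [hf, hg, AlgEquiv.apply_symm_apply])
  have gf : ∀ p, g (f p) = p := fun p => eta_inj (by rw [hg, hf, AlgEquiv.symm_apply_apply])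
  let ψ : B3 k ≃ₐ[k] B3 k := AlgEquiv.ofAlgHom f g (AlgHom.ext fg) (AlgHom.ext gf)
  refine ⟨⟨ψ, ?_, ?_⟩, hf⟩
  · apply eta_inj
    change etaStar k (f (X 0)) = _
    rw [hf, eta_t, hΦ]
  · ext p
    rw [Ideal.mem_map_of_equiv]
    constructor
    · rintro ⟨q, hq, rfl⟩
      rw [mem_gamma] at hq ⊢
      obtain ⟨r, hr⟩ := hq
      refine ⟨Φ r, ?_⟩
      change etaStar k (f q) = _
      rw [hf, hr, map_mul, hΦ]
    · intro hp
      refine ⟨g p, ?_, fg p⟩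
      rw [mem_gamma] at hp ⊢
      obtain ⟨r, hr⟩ := hp
      refine ⟨Φ.symm r, ?_⟩
      rw [hg, hr, map_mul, symm_t hΦ]

lemma exists_Phi (ψ : B3 k ≃ₐ[k] B3 k) (h0 : ψ (X 0) = X 0)
    (hI : Ideal.map ψ (gammaIdeal k) = gammaIdeal k) :
    ∃ f : SL2Ring k →ₐ[k] SL2Ring k, ∀ p, f (etaStar k p) = etaStar k (ψ p) := by
  have hm : (X 1 * X 2 - 1 : B3 k) ∈ gammaIdeal k := by
    rw [gammaIdeal]; exact Ideal.subset_span (by simp)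
  have hm' : ψ (X 1 * X 2 - 1) ∈ gammaIdeal k := by
    rw [← hI]; exact Ideal.mem_map_of_mem _ hm
  obtain ⟨r, hr⟩ := (mem_gamma _).1 hm'
  let f : SL2Ring k →ₐ[k] SL2Ring k := lift (sl2T k) r (etaStar k (ψ (X 1)))
    (etaStar k (ψ (X 2))) (by
      rw [← hr]; simp only [map_sub, map_mul, map_one]; ring)
  have : f.comp (etaStar k) = (etaStar k).comp (ψ : B3 k →ₐ[k] B3 k) := by
    apply B_ext <;> simp [f, h0]
  exact ⟨f, DFunLike.congr_fun this⟩

lemma exists_E_inv (ψ : autA3TGamma k) : ∃ Φ : autSL2T k,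
    ∀ p, etaStar k (ψ.1 p) = Φ.1 (etaStar k p) := by
  obtain ⟨f, hf⟩ := exists_Phi ψ.1 ψ.2.1 ψ.2.2
  obtain ⟨g, hg⟩ := exists_Phi (ψ⁻¹).1 (ψ⁻¹).2.1 (ψ⁻¹).2.2
  have h1 : ∀ p, ψ.1 ((ψ⁻¹).1 p) = p := fun p => ψ.1.apply_symm_apply p
  have h2 : ∀ p, (ψ⁻¹).1 (ψ.1 p) = p := fun p => ψ.1.symm_apply_apply p
  have ft : f (sl2T k) = sl2T k := by rw [← eta_t, hf, ψ.2.1]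
  have gt : g (sl2T k) = sl2T k := by rw [← eta_t, hg, (ψ⁻¹).2.1]
  have fg : f.comp g = AlgHom.id k _ := by
    apply hom_ext_eta
    · rw [AlgHom.comp_apply, gt, ft]
    · ext1 p
      simp only [AlgHom.comp_apply, AlgHom.id_apply, hf, hg, h1]
  have gf : g.comp f = AlgHom.id k _ := by
    apply hom_ext_eta
    · rw [AlgHom.comp_apply, ft, gt]
    · ext1 p
      simp only [AlgHom.comp_apply, AlgHom.id_apply, hf, hg, h2]
  exact ⟨⟨AlgEquiv.ofAlgHom f g fg gf, ft⟩, fun p => (hf p).symm⟩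

lemma uniqA (a b : autA3TGamma k) (h : ∀ p, etaStar k (a.1 p) = etaStar k (b.1 p)) : a = b := by
  apply Subtype.ext
  apply AlgEquiv.ext
  exact fun p => eta_inj (h p)

lemma uniqR (a b : autSL2T k) (h : ∀ p, a.1 (etaStar k p) = b.1 (etaStar k p)) : a = b := by
  apply Subtype.ext
  apply AlgEquiv.ext
  have := hom_ext_eta (f := a.1.toAlgHom) (g := b.1.toAlgHom) a.2 (AlgHom.ext h)
  intro r
  exact AlgHom.congr_fun this r

variable (k) in
/-- the isomorphism as a function -/
def EE (Φ : autSL2T k) : autA3TGamma k := (exists_E Φ).choose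

lemma EE_spec (Φ : autSL2T k) (p : B3 k) : etaStar k ((EE k Φ).1 p) = Φ.1 (etaStar k p) :=
  (exists_E Φ).choose_spec p

lemma EE_mul (a b : autSL2T k) : EE k (a * b) = EE k a * EE k b := by
  apply uniqA
  intro p
  rw [EE_spec]
  rw [Subgroup.coe_mul, Subgroup.coe_mul, AlgEquiv.mul_apply, AlgEquiv.mul_apply, EE_spec, EE_spec]

lemma EE_bij : Function.Bijective (EE k) := by
  constructor
  · intro a b hab
    apply uniqR
    intro p
    rw [← EE_spec, ← EE_spec, hab]
  · intro ψ
    obtain ⟨Φ, hΦ⟩ := exists_E_inv ψ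
    refine ⟨Φ, uniqA _ _ fun p => ?_⟩
    rw [EE_spec, hΦ]

variable (k) in
/-- the isomorphism -/
def EEquiv : autSL2T k ≃* autA3TGamma k :=
  { Equiv.ofBijective (EE k) EE_bij with map_mul' := EE_mul }

lemma part3 : ∃ E : autSL2T k ≃* autA3TGamma k, ∀ Φ : autSL2T k,
          (etaStar k).comp (E Φ).1.toAlgHom = Φ.1.toAlgHom.comp (etaStar k) :=
  ⟨EEquiv k, fun Φ => AlgHom.ext (EE_spec Φ)⟩

end SL2Aux

/-- **Proposition 4.4 (Blanc–van Santen).** (1) An automorphism `Φ` of `SL₂` preserves the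
hypersurface `t = 1` iff `Φ*(t) = t`. (2) Every automorphism of `SL₂` fixing `t` preserves
`η*(B)`, and `Φ ↦ (η*)⁻¹ ∘ Φ ∘ η*` is a group isomorphism from the automorphisms of `SL₂`
fixing `t` onto the automorphisms of `𝔸³` fixing `t` and preserving the curve
`Γ : t = xy − 1 = 0`. -/
theorem aut_SL2_fixing_t (k : Type*) [Field k] :
    (∀ Φ : SL2Ring k ≃ₐ[k] SL2Ring k,
        Ideal.map Φ (Ideal.span {sl2T k - 1}) = Ideal.span {sl2T k - 1} ↔
          Φ (sl2T k) = sl2T k) ∧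
    (∀ Φ : SL2Ring k ≃ₐ[k] SL2Ring k, Φ (sl2T k) = sl2T k →
        Subalgebra.map Φ.toAlgHom (etaStar k).range = (etaStar k).range) ∧
    (∃ E : autSL2T k ≃* autA3TGamma k,
        ∀ Φ : autSL2T k,
          (etaStar k).comp (E Φ).1.toAlgHom = Φ.1.toAlgHom.comp (etaStar k)) := by
  exact ⟨SL2Aux.part1, SL2Aux.map_range, SL2Aux.part3⟩
end
end

section
/- Let k be a field, n ≥ 1 an integer, and h ∈ k[t,x,y] a polynomial such that h(0,x,y) ∈ k[x,y] does not belong to the subalgebra k[w] for any variable w of the k-algebra k[x,y]. Let R = k[t,u,x,y]/(tⁿ·u − h(t,x,y)), let ι : k[t,x,y] → R be the natural (injective) k-algebra homomorphism, and let I ⊂ k[t,x,y] be the ideal generated by tⁿ and h. Then every k[t]-algebra automorphism φ of R satisfies φ(ι(k[t,x,y])) = ι(k[t,x,y]), and the assignment φ ↦ ι⁻¹ ∘ φ ∘ ι defines a group isomorphism from the group Aut_{k[t]}(R) of k[t]-algebra automorphisms of R onto the group {ψ ∈ Aut_{k[t]}(k[t,x,y]) : ψ(I) = I}. -/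
open MvPolynomial

noncomputable section



variable (k : Type*) [Field k]

/-- `h(t,x,y) ∈ k[t,x,y]` viewed in `k[t,u,x,y]` (variables of the target:
`0 = t`, `1 = u`, `2 = x`, `3 = y`; variables of the source: `0 = t`, `1 = x`, `2 = y`). -/
def hEmb (h : MvPolynomial (Fin 3) k) : MvPolynomial (Fin 4) k :=
  aeval ![X 0, X 2, X 3] h

/-- The ring `R = k[t,u,x,y]/(tⁿ·u − h(t,x,y))`. -/
abbrev ModifRing (n : ℕ) (h : MvPolynomial (Fin 3) k) : Type _ :=
  MvPolynomial (Fin 4) k ⧸ Ideal.span {X 0 ^ n * X 1 - hEmb k h}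

/-- The natural (injective) `k`-algebra homomorphism `ι : k[t,x,y] → R`. -/
def iotaModif (n : ℕ) (h : MvPolynomial (Fin 3) k) :
    MvPolynomial (Fin 3) k →ₐ[k] ModifRing k n h :=
  aeval ![Ideal.Quotient.mk (Ideal.span {X 0 ^ n * X 1 - hEmb k h}) (X 0),
          Ideal.Quotient.mk (Ideal.span {X 0 ^ n * X 1 - hEmb k h}) (X 2),
          Ideal.Quotient.mk (Ideal.span {X 0 ^ n * X 1 - hEmb k h}) (X 3)]

/-- The class of `t` in `R`. -/
def tModif (n : ℕ) (h : MvPolynomial (Fin 3) k) : ModifRing k n h :=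
  Ideal.Quotient.mk (Ideal.span {X 0 ^ n * X 1 - hEmb k h}) (X 0)

/-- The group `Aut_{k[t]}(R)` of `k`-algebra automorphisms of `R` fixing `t`. -/
def autModifT (n : ℕ) (h : MvPolynomial (Fin 3) k) :
    Subgroup (ModifRing k n h ≃ₐ[k] ModifRing k n h) where
  carrier := {φ | φ (tModif k n h) = tModif k n h}
  one_mem' := rfl
  mul_mem' := by
    intro a b ha hb
    simp only [Set.mem_setOf_eq] at ha hb ⊢
    rw [AlgEquiv.mul_apply, hb, ha]
  inv_mem' := by
    intro a ha
    simp only [Set.mem_setOf_eq] at ha ⊢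
    exact a.symm_apply_eq.mpr ha.symm

/-- The group of `k`-algebra automorphisms of `k[t,x,y]` fixing `t` and preserving the
ideal `I = (tⁿ, h)`. -/
def autPolyTI (n : ℕ) (h : MvPolynomial (Fin 3) k) :
    Subgroup (MvPolynomial (Fin 3) k ≃ₐ[k] MvPolynomial (Fin 3) k) where
  carrier := {ψ | ψ (X 0) = X 0 ∧
    Ideal.map ψ (Ideal.span {X 0 ^ n, h}) = Ideal.span {X 0 ^ n, h}}
  one_mem' := ⟨rfl, Ideal.map_aut_one _⟩
  mul_mem' := by
    intro a b ha hb
    simp only [Set.mem_setOf_eq] at ha hb ⊢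
    refine ⟨?_, ?_⟩
    · rw [AlgEquiv.mul_apply, hb.1, ha.1]
    · rw [Ideal.map_aut_mul, hb.2, ha.2]
  inv_mem' := by
    intro a ha
    simp only [Set.mem_setOf_eq] at ha ⊢
    exact ⟨a.symm_apply_eq.mpr ha.1.symm, Ideal.map_aut_inv a _ ha.2⟩



/-- An initial-form map: multiplicative, nonvanishing, and compatible with finite sums up to
passing to a nonempty subfamily. -/
structure IsInit {S G : Type*} [CommRing S] [CommRing G] (φ : S → G) : Prop where
  zero : φ 0 = 0
  ne_zero : ∀ f, f ≠ 0 → φ f ≠ 0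
  one : φ 1 = 1
  mul : ∀ f g, φ (f * g) = φ f * φ g
  sum : ∀ (s : Finset ℕ) (g : ℕ → S), s.Nonempty → (∀ i ∈ s, g i ≠ 0) →
    ∃ I ⊆ s, I.Nonempty ∧
      (∑ i ∈ I, φ (g i) = 0 ∨ ∑ i ∈ I, φ (g i) = φ (∑ i ∈ s, g i))

lemma IsInit.pow {S G : Type*} [CommRing S] [CommRing G] {φ : S → G} (h : IsInit φ) (f : S)
    (n : ℕ) : φ (f ^ n) = φ f ^ n := by
  induction n with
  | zero => simp [h.one]
  | succ n ih => rw [pow_succ, pow_succ, h.mul, ih]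

lemma IsInit.comp {S G H : Type*} [CommRing S] [CommRing G] [CommRing H] {φ : S → G} {ψ : G → H}
    (hψ : IsInit ψ) (hφ : IsInit φ) : IsInit (fun x => ψ (φ x)) where
  zero := by simp [hφ.zero, hψ.zero]
  one := by simp [hφ.one, hψ.one]
  mul := by simp [hφ.mul, hψ.mul]
  ne_zero f hf := hψ.ne_zero _ (hφ.ne_zero _ hf)
  sum s g hs hg := by
    obtain ⟨I, hI, hIn, h⟩ := hφ.sum s g hs hg
    obtain ⟨J, hJ, hJn, h'⟩ := hψ.sum I (fun i => φ (g i)) hIn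
      (fun i hi => hφ.ne_zero _ (hg i (hI hi)))
    refine ⟨J, hJ.trans hI, hJn, ?_⟩
    rcases h' with h' | h'
    · exact Or.inl h'
    rcases h with h | h
    · left; rw [h', h, hψ.zero]
    · right; rw [h', h]

lemma IsInit.of_ringHom {S G : Type*} [CommRing S] [CommRing G] (f : S →+* G)
    (hf : Function.Injective f) : IsInit f where
  zero := map_zero f
  one := map_one f
  mul := map_mul f
  ne_zero x hx := by rwa [Ne, map_eq_zero_iff f hf]
  sum s g hs _ := ⟨s, subset_rfl, hs, Or.inr (by simp)⟩

lemma IsInit.leadingCoeff {G : Type*} [CommRing G] [IsDomain G] :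
    IsInit (fun f : Polynomial G => f.leadingCoeff) where
  zero := by simp
  one := by simp
  mul := by simp
  ne_zero x hx := by simpa using hx
  sum s g hs hg := by
    obtain ⟨j, hj, hmax⟩ := s.exists_max_image (fun i => (g i).natDegree) hs
    set d := (g j).natDegree with hd
    refine ⟨s.filter (fun i => (g i).natDegree = d), Finset.filter_subset _ _, ⟨j, by simp [hj, hd]⟩, ?_⟩
    have key : ∑ i ∈ s with (g i).natDegree = d, (g i).leadingCoeff = (∑ i ∈ s, g i).coeff d := by
      rw [Polynomial.finsetSum_coeff, Finset.sum_filter]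
      refine Finset.sum_congr rfl fun i hi => ?_
      split_ifs with h
      · rw [← h]; rfl
      · rw [Polynomial.coeff_eq_zero_of_natDegree_lt]
        exact lt_of_le_of_ne (hmax i hi) h
    rw [key]
    by_cases h0 : (∑ i ∈ s, g i).coeff d = 0
    · exact Or.inl h0
    · right
      have h1 : (∑ i ∈ s, g i).natDegree ≤ d :=
        Polynomial.natDegree_sum_le_of_forall_le _ _ hmax
      have h2 := Polynomial.le_natDegree_of_ne_zero h0
      rw [Polynomial.leadingCoeff, le_antisymm h1 h2]

lemma IsInit.trailingCoeff {G : Type*} [CommRing G] [IsDomain G] :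
    IsInit (fun f : Polynomial G => f.trailingCoeff) where
  zero := by simp
  one := by simp [Polynomial.trailingCoeff]
  mul := by simp [Polynomial.trailingCoeff_mul]
  ne_zero x hx := by simpa using hx
  sum s g hs hg := by
    obtain ⟨j, hj, hmin⟩ := s.exists_min_image (fun i => (g i).natTrailingDegree) hs
    set d := (g j).natTrailingDegree with hd
    refine ⟨s.filter (fun i => (g i).natTrailingDegree = d), Finset.filter_subset _ _,
      ⟨j, by simp [hj, hd]⟩, ?_⟩
    have key : ∑ i ∈ s with (g i).natTrailingDegree = d, (g i).trailingCoeff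
        = (∑ i ∈ s, g i).coeff d := by
      rw [Polynomial.finsetSum_coeff, Finset.sum_filter]
      refine Finset.sum_congr rfl fun i hi => ?_
      split_ifs with h
      · rw [← h]; rfl
      · rw [Polynomial.coeff_eq_zero_of_lt_natTrailingDegree]
        exact lt_of_le_of_ne (hmin i hi) (Ne.symm h)
    rw [key]
    by_cases h0 : (∑ i ∈ s, g i).coeff d = 0
    · exact Or.inl h0
    · right
      have h1 : d ≤ (∑ i ∈ s, g i).natTrailingDegree := by
        apply Polynomial.le_natTrailingDegree
        · rintro h; simp [h] at h0
        · intro m hm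
          rw [Polynomial.finsetSum_coeff]
          exact Finset.sum_eq_zero fun i hi =>
            Polynomial.coeff_eq_zero_of_lt_natTrailingDegree (lt_of_lt_of_le hm (hmin i hi))
      have h2 := Polynomial.natTrailingDegree_le_of_ne_zero h0
      rw [Polynomial.trailingCoeff, le_antisymm h2 h1]

/-- Pseudo-expansion of a polynomial `G` in powers of `F`. -/
lemma pseudo_expand {B : Type*} [CommRing B] [IsDomain B] (F : Polynomial B)
    (hF : 1 ≤ F.natDegree) (G : Polynomial B) :
    ∃ (N : ℕ) (H : Polynomial (Polynomial B)), (∀ i, (H.coeff i).natDegree < F.natDegree) ∧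
      Polynomial.C (F.leadingCoeff ^ N) * G = H.eval F := by
  set T : Polynomial B → Prop := fun G => ∃ (N : ℕ) (H : Polynomial (Polynomial B)),
    (∀ i, (H.coeff i).natDegree < F.natDegree) ∧
      Polynomial.C (F.leadingCoeff ^ N) * G = H.eval F with hT
  have hsm : ∀ (b : B) (H : Polynomial (Polynomial B)),
      (∀ i, (H.coeff i).natDegree < F.natDegree) →
      ∀ i, ((Polynomial.C (Polynomial.C b) * H).coeff i).natDegree < F.natDegree := by
    intro b H hH i
    rw [Polynomial.coeff_C_mul]
    exact lt_of_le_of_lt (Polynomial.natDegree_C_mul_le _ _) (hH i)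
  have hadd : ∀ G G', T G → T G' → T (G + G') := by
    rintro G G' ⟨N, H, hH, e⟩ ⟨N', H', hH', e'⟩
    refine ⟨N + N', Polynomial.C (Polynomial.C (F.leadingCoeff ^ N')) * H
      + Polynomial.C (Polynomial.C (F.leadingCoeff ^ N)) * H', ?_, ?_⟩
    · intro i
      rw [Polynomial.coeff_add]
      exact lt_of_le_of_lt (Polynomial.natDegree_add_le _ _) (max_lt (hsm _ _ hH i) (hsm _ _ hH' i))
    · simp only [Polynomial.eval_add, Polynomial.eval_mul, Polynomial.eval_C, ← e, ← e', pow_add,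
        map_mul]
      ring
  have hmulF : ∀ (b : B) G, T G → T (Polynomial.C b * G * F) := by
    rintro b G ⟨N, H, hH, e⟩
    refine ⟨N, Polynomial.C (Polynomial.C b) * H * Polynomial.X, ?_, ?_⟩
    · intro i
      cases i with
      | zero => simp; omega
      | succ i => rw [Polynomial.coeff_mul_X]; exact hsm _ _ hH i
    · simp only [Polynomial.eval_mul, Polynomial.eval_C, Polynomial.eval_X, ← e]
      ring
  have hl : ∀ G, T (Polynomial.C F.leadingCoeff * G) → T G := by
    rintro G ⟨N, H, hH, e⟩
    refine ⟨N + 1, H, hH, ?_⟩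
    rw [← e, pow_succ, map_mul]; ring
  show T G
  induction hg : G.natDegree using Nat.strong_induction_on generalizing G with
  | _ g ih =>
    by_cases hlt : g < F.natDegree
    · refine ⟨0, Polynomial.C G, ?_, by simp⟩
      intro i
      rw [Polynomial.coeff_C]
      split_ifs
      · omega
      · simp; omega
    · push Not at hlt
      apply hl
      have hG0 : G ≠ 0 := by rintro rfl; simp at hg; omega
      have hF0 : F ≠ 0 := by rintro rfl; simp at hF
      set M := Polynomial.C G.leadingCoeff * Polynomial.X ^ (g - F.natDegree) * F with hM
      have e : Polynomial.C F.leadingCoeff * G = (Polynomial.C F.leadingCoeff * G - M) + M := by ring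
      rw [e]
      apply hadd
      · refine ih _ ?_ _ rfl
        have hdeg : (Polynomial.C F.leadingCoeff * G).degree = M.degree := by
          rw [hM, Polynomial.degree_mul, Polynomial.degree_mul, Polynomial.degree_mul,
            Polynomial.degree_C (by simpa using hF0), Polynomial.degree_C (by simpa using hG0),
            Polynomial.degree_X_pow, Polynomial.degree_eq_natDegree hF0,
            Polynomial.degree_eq_natDegree hG0, hg, zero_add, zero_add]
          norm_cast
          omega
        have hne : Polynomial.C F.leadingCoeff * G ≠ 0 := by simp [hF0, hG0]
        have hlt' := Polynomial.degree_sub_lt_left hdeg hne (by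
          rw [hM]
          simp only [Polynomial.leadingCoeff_mul, Polynomial.leadingCoeff_C,
            Polynomial.leadingCoeff_X_pow]
          ring)
        have h1 : (Polynomial.C F.leadingCoeff * G).natDegree = g := by
          rw [Polynomial.natDegree_C_mul (by simpa using hF0), hg]
        rw [Polynomial.degree_eq_natDegree hne, h1] at hlt'
        by_cases hz : Polynomial.C F.leadingCoeff * G - M = 0
        · rw [hz]; simp; omega
        · rwa [Polynomial.natDegree_lt_iff_degree_lt hz]
      · apply hmulF
        refine ih _ ?_ _ rfl
        rw [Polynomial.natDegree_X_pow]; omega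

lemma init_expand {k B S G : Type*} [Field k] [CommRing B] [IsDomain B] [CommRing S] [IsDomain S]
    [CommRing G] [IsDomain G] [Algebra k G] {φ : S → G} (hφ : IsInit φ) (ψ : B →+* S)
    (Z : Subalgebra k G) (q : S) (F : Polynomial B) (hF : 1 ≤ F.natDegree)
    (hl : ψ F.leadingCoeff ≠ 0)
    (hlow : ∀ H : Polynomial B, H.natDegree < F.natDegree → φ (H.eval₂ ψ q) ∈ Z)
    (htr : Transcendental Z (φ (F.eval₂ ψ q))) (H : Polynomial B) (hH : H.eval₂ ψ q ≠ 0) :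
    ∃ (N : ℕ) (I : Finset ℕ) (z : ℕ → S), (∀ i ∈ I, z i ≠ 0 ∧ φ (z i) ∈ Z) ∧
      φ (ψ F.leadingCoeff) ^ N * φ (H.eval₂ ψ q) = ∑ i ∈ I, φ (z i) * φ (F.eval₂ ψ q) ^ i := by
  classical
  obtain ⟨N, E, hE, e⟩ := pseudo_expand F hF H
  set V := F.eval₂ ψ q with hV
  set z : ℕ → S := fun i => (E.coeff i).eval₂ ψ q with hz
  have hV0 : V ≠ 0 := by
    intro h0
    rw [h0, hφ.zero] at htr
    exact htr isAlgebraic_zero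
  have e1 : ψ F.leadingCoeff ^ N * H.eval₂ ψ q = ∑ i ∈ E.support, z i * V ^ i := by
    have := congrArg (Polynomial.eval₂ ψ q) e
    rw [Polynomial.eval₂_mul, Polynomial.eval₂_C, map_pow, Polynomial.eval_eq_sum,
      Polynomial.sum, Polynomial.eval₂_finsetSum] at this
    simpa only [Polynomial.eval₂_mul, Polynomial.eval₂_pow] using this
  set s := E.support.filter (fun i => z i ≠ 0) with hs
  have e2 : ∑ i ∈ E.support, z i * V ^ i = ∑ i ∈ s, z i * V ^ i := by
    rw [hs, Finset.sum_filter]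
    refine Finset.sum_congr rfl fun i _ => ?_
    split_ifs with h
    · rfl
    · push Not at h; rw [h, zero_mul]
  rw [e2] at e1
  have hne : ψ F.leadingCoeff ^ N * H.eval₂ ψ q ≠ 0 := mul_ne_zero (pow_ne_zero _ hl) hH
  have hsne : s.Nonempty := by
    rw [Finset.nonempty_iff_ne_empty]
    intro h0
    rw [h0] at e1
    exact hne (by simpa using e1)
  have hzs : ∀ i ∈ s, z i ≠ 0 ∧ φ (z i) ∈ Z := fun i hi =>
    ⟨(Finset.mem_filter.1 hi).2, hlow _ (hE i)⟩
  obtain ⟨I, hI, hIne, hsum⟩ := hφ.sum s (fun i => z i * V ^ i) hsne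
    (fun i hi => mul_ne_zero (hzs i hi).1 (pow_ne_zero _ hV0))
  refine ⟨N, I, z, fun i hi => hzs i (hI hi), ?_⟩
  simp only [hφ.mul, hφ.pow, ← e1] at hsum
  rcases hsum with hsum | hsum
  · exfalso
    obtain ⟨j, hj⟩ := hIne
    classical
    let c : ℕ → Z := fun i => if h : φ (z i) ∈ Z then ⟨φ (z i), h⟩ else 0
    have hc : ∀ i ∈ I, (c i : G) = φ (z i) := fun i hi => by
      simp only [c, dif_pos (hzs i (hI hi)).2]
    apply htr
    refine ⟨∑ i ∈ I, Polynomial.monomial i (c i), ?_, ?_⟩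
    · intro h0
      have := congrArg (fun p => Polynomial.coeff p j) h0
      simp only [Polynomial.finsetSum_coeff, Polynomial.coeff_monomial, Polynomial.coeff_zero,
        Finset.sum_ite_eq', hj, if_true] at this
      have h1 := hc j hj
      rw [this] at h1
      exact hφ.ne_zero _ (hzs j (hI hj)).1 (by simpa using h1.symm)
    · rw [map_sum, ← hsum]
      refine Finset.sum_congr rfl fun i hi => ?_
      rw [Polynomial.aeval_monomial, ← hc i hi]
      rfl
  · exact hsum.symm


/-- The homomorphism `x_i ↦ x_i z^{w_i}` encoding the weight grading. -/
def wdelta {k : Type*} [Field k] (w : Fin 2 → ℕ) :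
    MvPolynomial (Fin 2) k →ₐ[k] Polynomial (MvPolynomial (Fin 2) k) :=
  aeval (fun i => Polynomial.C (X i) * Polynomial.X ^ (w i))

lemma wdelta_monomial {k : Type*} [Field k] (w : Fin 2 → ℕ) (m : Fin 2 →₀ ℕ) (c : k) :
    wdelta w (monomial m c) = Polynomial.monomial (Finsupp.weight w m) (monomial m c) := by
  rw [wdelta, aeval_monomial, Finsupp.prod_fintype _ _ (by simp), monomial_eq,
    Finsupp.prod_fintype _ _ (by simp), Finsupp.weight_apply, Finsupp.sum_fintype _ _ (by simp),
    ← Polynomial.C_mul_X_pow_eq_monomial]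
  simp only [Fin.prod_univ_two, Fin.sum_univ_two, map_mul, map_pow, smul_eq_mul, pow_add, mul_pow,
    ← pow_mul, IsScalarTower.algebraMap_apply k (MvPolynomial (Fin 2) k)
      (Polynomial (MvPolynomial (Fin 2) k)), Polynomial.algebraMap_eq, MvPolynomial.algebraMap_eq]
  ring

lemma wdelta_coeff {k : Type*} [Field k] (w : Fin 2 → ℕ) (f : MvPolynomial (Fin 2) k) (n : ℕ) :
    (wdelta w f).coeff n = weightedHomogeneousComponent w n f := by
  induction f using MvPolynomial.induction_on' with
  | monomial m c =>
    rw [wdelta_monomial, Polynomial.coeff_monomial,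
      weightedHomogeneousComponent_of_mem (n := Finsupp.weight w m)
        (isWeightedHomogeneous_monomial w m c rfl)]
    simp only [eq_comm]
  | add p q hp hq => rw [map_add, Polynomial.coeff_add, hp, hq, map_add]

lemma wdelta_injective {k : Type*} [Field k] (w : Fin 2 → ℕ) :
    Function.Injective (wdelta (k := k) w) := by
  have : ∀ f : MvPolynomial (Fin 2) k, (wdelta w f).eval 1 = f := by
    intro f
    induction f using MvPolynomial.induction_on' with
    | monomial m c => rw [wdelta_monomial]; simp
    | add p q hp hq => rw [map_add, Polynomial.eval_add, hp, hq]
  exact Function.LeftInverse.injective this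

/-- The top weighted-homogeneous component. -/
def wTopForm {k : Type*} [Field k] (w : Fin 2 → ℕ) (f : MvPolynomial (Fin 2) k) :
    MvPolynomial (Fin 2) k := (wdelta w f).leadingCoeff

lemma wTopForm_isInit {k : Type*} [Field k] (w : Fin 2 → ℕ) : IsInit (wTopForm (k := k) w) :=
  IsInit.leadingCoeff.comp (IsInit.of_ringHom (wdelta w).toRingHom (wdelta_injective w))

lemma wTopForm_homog {k : Type*} [Field k] (w : Fin 2 → ℕ) (f : MvPolynomial (Fin 2) k) :
    IsWeightedHomogeneous w (wTopForm w f) (wdelta w f).natDegree := by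
  rw [wTopForm, Polynomial.leadingCoeff, wdelta_coeff]
  exact weightedHomogeneousComponent_isWeightedHomogeneous _ _

lemma wdelta_of_homog {k : Type*} [Field k] {w : Fin 2 → ℕ} {f : MvPolynomial (Fin 2) k} {n : ℕ}
    (hf : IsWeightedHomogeneous w f n) : wdelta w f = Polynomial.monomial n f := by
  ext1 m
  rw [wdelta_coeff, Polynomial.coeff_monomial, weightedHomogeneousComponent_of_mem hf]
  simp only [eq_comm]

lemma wTopForm_of_homog {k : Type*} [Field k] {w : Fin 2 → ℕ} {f : MvPolynomial (Fin 2) k} {n : ℕ}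
    (hf : IsWeightedHomogeneous w f n) : wTopForm w f = f := by
  rw [wTopForm, wdelta_of_homog hf, Polynomial.leadingCoeff_monomial]

lemma homog_zero_const {k : Type*} [Field k] {w : Fin 2 → ℕ} (hw : ∀ i, w i ≠ 0)
    {f : MvPolynomial (Fin 2) k} (hf : IsWeightedHomogeneous w f 0) : ∃ c, f = C c := by
  refine ⟨coeff 0 f, ?_⟩
  rw [← weightedHomogeneousComponent_zero f hw, weightedHomogeneousComponent_eq_self hf]

lemma homog_of_mul {k : Type*} [Field k] {w : Fin 2 → ℕ} {f g : MvPolynomial (Fin 2) k} {a n : ℕ}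
    (hf : IsWeightedHomogeneous w f a) (hf0 : f ≠ 0) (hg0 : g ≠ 0)
    (hfg : IsWeightedHomogeneous w (f * g) n) :
    ∃ b, a + b = n ∧ IsWeightedHomogeneous w g b := by
  have key : ∀ m, a + m ≠ n → weightedHomogeneousComponent w m g = 0 := by
    intro m hm
    have h1 := congrArg (fun p => Polynomial.coeff p (m + a)) (wdelta_of_homog hfg)
    rw [map_mul, wdelta_of_homog hf, ← Polynomial.C_mul_X_pow_eq_monomial, mul_assoc,
      Polynomial.coeff_C_mul, mul_comm (Polynomial.X ^ a), Polynomial.coeff_mul_X_pow,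
      wdelta_coeff, Polynomial.coeff_monomial, if_neg (by omega)] at h1
    exact (mul_eq_zero.1 h1).resolve_left hf0
  have h2 : wdelta w g ≠ 0 := by
    rw [Ne, map_eq_zero_iff _ (wdelta_injective w)]; exact hg0
  set b := (wdelta w g).natDegree with hb
  have h3 : (wdelta w g).coeff b ≠ 0 := by simpa [hb] using h2
  rw [wdelta_coeff] at h3
  have hab : a + b = n := by
    by_contra h
    exact h3 (key b h)
  refine ⟨b, hab, ?_⟩
  have h4 : wdelta w g = Polynomial.monomial b (weightedHomogeneousComponent w b g) := by
    ext1 m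
    rw [wdelta_coeff, Polynomial.coeff_monomial]
    split_ifs with h
    · rw [h]
    · exact key m (by omega)
  have h5 : g = weightedHomogeneousComponent w b g := by
    apply wdelta_injective w
    rw [h4, wdelta_of_homog (weightedHomogeneousComponent_isWeightedHomogeneous _ _)]
  rw [h5]
  exact weightedHomogeneousComponent_isWeightedHomogeneous _ _

/-- Algebraically dependent weighted homogeneous polynomials of the same degree are
proportional. -/
lemma homog_same_degree {k : Type*} [Field k] {w : Fin 2 → ℕ} (hw : ∀ i, w i ≠ 0)
    {E T : MvPolynomial (Fin 2) k} {D : ℕ} (hD : 1 ≤ D) (hE : IsWeightedHomogeneous w E D)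
    (hT : IsWeightedHomogeneous w T D) (hE0 : E ≠ 0) (hT0 : T ≠ 0)
    (halg : IsAlgebraic (Algebra.adjoin k {T}) E) : ∃ c : k, c ≠ 0 ∧ E = C c * T := by
  obtain ⟨G, hG0, hG⟩ := halg
  -- lift the relation to `k[X][Y]`
  have hsurj : Function.Surjective
      ((Polynomial.aeval (⟨T, Algebra.self_mem_adjoin_singleton k T⟩ : Algebra.adjoin k {T}) :
        Polynomial k →ₐ[k] Algebra.adjoin k {T}) : Polynomial k →+* Algebra.adjoin k {T}) := by
    rintro ⟨y, hy⟩
    have hy' := hy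
    rw [Algebra.adjoin_singleton_eq_range_aeval] at hy'
    obtain ⟨f, hf⟩ := hy'
    refine ⟨f, Subtype.ext ?_⟩
    simp only [RingHom.coe_coe]
    rw [← hf]
    exact (Polynomial.aeval_algHom_apply (Algebra.adjoin k {T}).val _ f).symm
  obtain ⟨R, hR⟩ := Polynomial.map_surjective _ hsurj G
  have hR0 : R ≠ 0 := by rintro rfl; simp at hR; exact hG0 hR.symm
  have hrel : ∑ i ∈ R.support, ∑ j ∈ (R.coeff i).support,
      C ((R.coeff i).coeff j) * (T ^ j * E ^ i) = 0 := by
    rw [← hR, Polynomial.aeval_def, Polynomial.eval₂_map, Polynomial.eval₂_eq_sum,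
      Polynomial.sum] at hG
    refine Eq.trans ?_ hG
    refine Finset.sum_congr rfl fun i _ => ?_
    have e1 : ((algebraMap (Algebra.adjoin k {T}) (MvPolynomial (Fin 2) k)).comp
        ((Polynomial.aeval (⟨T, Algebra.self_mem_adjoin_singleton k T⟩ : Algebra.adjoin k {T}) :
        Polynomial k →ₐ[k] Algebra.adjoin k {T}) : Polynomial k →+* Algebra.adjoin k {T}))
          (R.coeff i) = Polynomial.aeval T (R.coeff i) :=
      (Polynomial.aeval_algHom_apply (Algebra.adjoin k {T}).val _ _).symm
    rw [e1, Polynomial.aeval_def, Polynomial.eval₂_eq_sum, Polynomial.sum, Finset.sum_mul]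
    refine Finset.sum_congr rfl fun j _ => ?_
    rw [MvPolynomial.algebraMap_eq]; ring
  obtain ⟨i0, hi0⟩ := Polynomial.support_nonempty.2 hR0
  have hci0 : R.coeff i0 ≠ 0 := Polynomial.mem_support_iff.1 hi0
  obtain ⟨j0, hj0⟩ := Polynomial.support_nonempty.2 hci0
  set n := i0 + j0 with hn
  have hrel2 : ∑ i ∈ R.support, (if i ≤ n then
      C ((R.coeff i).coeff (n - i)) * (T ^ (n - i) * E ^ i) else 0) = 0 := by
    have := congrArg (weightedHomogeneousComponent w (D * n)) hrel
    rw [map_zero, map_sum] at this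
    refine Eq.trans ?_ this
    refine Finset.sum_congr rfl fun i _ => ?_
    rw [map_sum]
    have hcomp : ∀ j, weightedHomogeneousComponent w (D * n)
        (C ((R.coeff i).coeff j) * (T ^ j * E ^ i)) =
        if n = i + j then C ((R.coeff i).coeff j) * (T ^ j * E ^ i) else 0 := by
      intro j
      have h1 : IsWeightedHomogeneous w (C ((R.coeff i).coeff j) * (T ^ j * E ^ i)) (D * (i + j)) := by
        have := (((hT.pow j).mul (hE.pow i)).C_mul ((R.coeff i).coeff j))
        simp only [smul_eq_mul] at this
        convert this using 1
        ring
      rw [weightedHomogeneousComponent_of_mem h1]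
      have : (D * n = D * (i + j)) ↔ n = i + j := by
        constructor
        · intro h; exact Nat.eq_of_mul_eq_mul_left hD h
        · rintro h; rw [h]
      simp only [this]
    simp only [hcomp]
    split_ifs with hle
    · symm
      rw [Finset.sum_eq_single (n - i)]
      · rw [if_pos (by omega)]
      · intro j _ hj
        rw [if_neg (by omega)]
      · intro h
        rw [Polynomial.notMem_support_iff.1 h]; simp
    · symm
      exact Finset.sum_eq_zero fun j _ => if_neg (by omega)
  -- the ratio is algebraic over `k`
  let 𝓕 := FractionRing (MvPolynomial (Fin 2) k)
  let α := algebraMap (MvPolynomial (Fin 2) k) 𝓕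
  have hα : Function.Injective α := IsFractionRing.injective _ _
  have hαT : α T ≠ 0 := by rwa [Ne, map_eq_zero_iff _ hα]
  let r : Polynomial k := ∑ i ∈ R.support, (if i ≤ n then
      Polynomial.monomial i ((R.coeff i).coeff (n - i)) else 0)
  have hr0 : r ≠ 0 := by
    intro h0
    have := congrArg (fun p => Polynomial.coeff p i0) h0
    simp only [r, Polynomial.finsetSum_coeff, Polynomial.coeff_zero] at this
    rw [Finset.sum_eq_single i0] at this
    · rw [if_pos (by omega), Polynomial.coeff_monomial, if_pos rfl] at this
      rw [show n - i0 = j0 by omega] at this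
      exact Polynomial.mem_support_iff.1 hj0 this
    · intro b _ hb
      split_ifs
      · rw [Polynomial.coeff_monomial, if_neg hb]
      · simp
    · intro h; exact absurd hi0 h
  have hralg : IsAlgebraic k (α E / α T) := by
    refine ⟨r, hr0, ?_⟩
    have h1 : α T ^ n * Polynomial.aeval (α E / α T) r = 0 := by
      have := congrArg α hrel2
      rw [map_zero, map_sum] at this
      refine Eq.trans ?_ this
      rw [map_sum, Finset.mul_sum]
      refine Finset.sum_congr rfl fun i _ => ?_
      split_ifs with h
      · rw [Polynomial.aeval_monomial, map_mul, map_mul, map_pow, map_pow,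
          IsScalarTower.algebraMap_apply k (MvPolynomial (Fin 2) k) 𝓕, MvPolynomial.algebraMap_eq,
          div_pow]
        obtain ⟨m, hm⟩ := Nat.exists_eq_add_of_le h
        rw [show n - i = m by omega, hm, pow_add]
        have h3 : α E ^ i = α T ^ i * (α E ^ i / α T ^ i) :=
          (mul_div_cancel₀ _ (pow_ne_zero i hαT)).symm
        rw [h3]
        change _ = α (C _) * _
        have h4 : α (C ((R.coeff i).coeff m)) = algebraMap (MvPolynomial (Fin 2) k) 𝓕 (C ((R.coeff i).coeff m)) := rfl
        rw [h4, ← h3]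
        have h5 := h3
        linear_combination (-(algebraMap (MvPolynomial (Fin 2) k) 𝓕 (C ((R.coeff i).coeff m))) * α T ^ m) * h5
      · simp
    exact (mul_eq_zero.1 h1).resolve_left (pow_ne_zero _ hαT)
  have hIntegral : IsIntegral (MvPolynomial (Fin 2) k) (α E / α T) :=
    (isAlgebraic_iff_isIntegral.1 hralg).tower_top
  obtain ⟨s, hs⟩ := IsIntegrallyClosed.isIntegral_iff.1 hIntegral
  have hEs : E = T * s := by
    apply hα
    rw [map_mul]
    rw [show α s = α E / α T from hs]
    exact (mul_div_cancel₀ _ hαT).symm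
  have hs0 : s ≠ 0 := by rintro rfl; simp at hEs; exact hE0 hEs
  rw [hEs] at hE
  obtain ⟨b, hb, hsb⟩ := homog_of_mul hT hT0 hs0 hE
  obtain rfl : b = 0 := by omega
  obtain ⟨c, hc⟩ := homog_zero_const hw hsb
  refine ⟨c, ?_, ?_⟩
  · rintro rfl; simp at hc; exact hs0 hc
  · rw [hEs, hc, mul_comm]

lemma homog_alg_pow {k : Type*} [Field k] {w : Fin 2 → ℕ} (hw : ∀ i, w i ≠ 0)
    {p q : MvPolynomial (Fin 2) k} {e d : ℕ} (he : 1 ≤ e) (hd : 1 ≤ d)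
    (hp : IsWeightedHomogeneous w p e) (hq : IsWeightedHomogeneous w q d)
    (hp0 : p ≠ 0) (hq0 : q ≠ 0)
    (halg : IsAlgebraic (Algebra.adjoin k {p}) q) : ∃ c : k, c ≠ 0 ∧ q ^ e = C c * p ^ d := by
  refine homog_same_degree hw (D := e * d) (Nat.mul_pos he hd) (by simpa using hq.pow e)
    (by simpa [mul_comm] using hp.pow d) (pow_ne_zero _ hq0) (pow_ne_zero _ hp0) ?_
  apply IsAlgebraic.pow
  by_contra htr
  set R0 := Algebra.adjoin k {p ^ d} with hR0
  have htr' := Transcendental.subalgebraAlgebraicClosure (show Transcendental R0 q from htr)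
  set A' := Subalgebra.algebraicClosure R0 (MvPolynomial (Fin 2) k)
  have hle : Algebra.adjoin k {p} ≤ A'.restrictScalars k := by
    rw [Algebra.adjoin_le_iff, Set.singleton_subset_iff]
    show IsAlgebraic R0 p
    apply IsAlgebraic.of_pow hd
    exact isAlgebraic_algebraMap (⟨p ^ d, Algebra.self_mem_adjoin_singleton k _⟩ : R0)
  obtain ⟨G, hG0, hG⟩ := halg
  apply htr'
  let inc : Algebra.adjoin k {p} →+* A' := (Subalgebra.inclusion hle).toRingHom
  refine ⟨G.map inc, ?_, ?_⟩
  · rw [Ne, Polynomial.map_eq_zero_iff (f := inc) (show Function.Injective inc from Subalgebra.inclusion_injective hle)]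
    exact hG0
  · rw [Polynomial.aeval_def, Polynomial.eval₂_map]
    exact hG

/-- Homogeneous elements commensurable with `p` are powers of a single `θ`. -/
lemma exists_theta {k : Type*} [Field k] {w : Fin 2 → ℕ} (hw : ∀ i, w i ≠ 0)
    {p : MvPolynomial (Fin 2) k} {e : ℕ} (he : 1 ≤ e)
    (hp : IsWeightedHomogeneous w p e) (hp0 : p ≠ 0) :
    ∃ (θ : MvPolynomial (Fin 2) k) (τ : ℕ), 1 ≤ τ ∧ θ ≠ 0 ∧ IsWeightedHomogeneous w θ τ ∧
      (∃ c : k, c ≠ 0 ∧ θ ^ e = C c * p ^ τ) ∧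
      ∀ (q : MvPolynomial (Fin 2) k) (d : ℕ), q ≠ 0 → IsWeightedHomogeneous w q d →
        (∃ c : k, c ≠ 0 ∧ q ^ e = C c * p ^ d) → ∃ (c : k) (j : ℕ), c ≠ 0 ∧ q = C c * θ ^ j := by
  classical
  have hex : ∃ τ, 1 ≤ τ ∧ ∃ θ : MvPolynomial (Fin 2) k, θ ≠ 0 ∧ IsWeightedHomogeneous w θ τ ∧
      (∃ c : k, c ≠ 0 ∧ θ ^ e = C c * p ^ τ) :=
    ⟨e, he, p, hp0, hp, 1, one_ne_zero, by simp⟩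
  obtain ⟨hτ, θ, hθ0, hθ, c', hc', hθe⟩ := Nat.find_spec hex
  have hmin := fun m => Nat.find_min hex (m := m)
  set τ := Nat.find hex
  refine ⟨θ, τ, hτ, hθ0, hθ, ⟨c', hc', hθe⟩, ?_⟩
  intro q d
  induction d using Nat.strong_induction_on generalizing q with
  | _ d ih =>
    rintro hq0 hq ⟨c, hc, hqe⟩
    rcases Nat.eq_zero_or_pos d with rfl | hd
    · obtain ⟨c, rfl⟩ := homog_zero_const hw hq
      exact ⟨c, 0, by rintro rfl; simp at hq0, by simp⟩
    have hdτ : τ ≤ d := by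
      by_contra h
      push Not at h
      exact hmin d h ⟨hd, q, hq0, hq, c, hc, hqe⟩
    have hdvd : θ ∣ q := by
      rw [← IsIntegrallyClosed.pow_dvd_pow_iff (n := e * τ) (by positivity)]
      have h1 : q ^ (e * τ) = C (c ^ τ * (c'⁻¹) ^ d) * θ ^ (e * d) := by
        rw [pow_mul, pow_mul, hqe, hθe, mul_pow, mul_pow, ← pow_mul, ← pow_mul, mul_comm d τ,
          ← map_pow, ← map_pow, ← mul_assoc, ← map_mul]
        congr 2
        rw [mul_assoc, ← mul_pow, inv_mul_cancel₀ hc', one_pow, mul_one]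
      rw [h1]
      exact Dvd.dvd.mul_left (pow_dvd_pow _ (Nat.mul_le_mul_left e hdτ)) _
    obtain ⟨r, hr⟩ := hdvd
    have hr0 : r ≠ 0 := by rintro rfl; simp at hr; exact hq0 hr
    rw [hr] at hq
    obtain ⟨b, hb, hrb⟩ := homog_of_mul hθ hθ0 hr0 hq
    have hre : r ^ e = C (c'⁻¹ * c) * p ^ b := by
      have h2 : C c' * p ^ τ * r ^ e = C c' * p ^ τ * (C (c'⁻¹ * c) * p ^ b) := by
        rw [← hθe, ← mul_pow, ← hr, hqe, hθe, ← hb, pow_add]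
        have : C c' * C (c'⁻¹ * c) = (C c : MvPolynomial (Fin 2) k) := by
          rw [← map_mul, ← mul_assoc, mul_inv_cancel₀ hc', one_mul]
        rw [← this]; ring
      exact mul_left_cancel₀ (mul_ne_zero (by simpa using hc') (pow_ne_zero _ hp0)) h2
    obtain ⟨c1, j, hc1, e1⟩ := ih b (by omega) r hr0 hrb
      ⟨_, mul_ne_zero (inv_ne_zero hc') hc, hre⟩
    exact ⟨c1, j + 1, hc1, by rw [hr, e1, pow_succ]; ring⟩


lemma no_rel {k G : Type*} [Field k] [CommRing G] [Algebra k G] {Z : Subalgebra k G} {η : G}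
    (htr : Transcendental Z η) (J : Finset ℕ) (z : ℕ → G) (hz : ∀ i ∈ J, z i ∈ Z)
    (hrel : ∑ i ∈ J, z i * η ^ i = 0) : ∀ i ∈ J, z i = 0 := by
  classical
  intro j hj
  by_contra hne
  let c : ℕ → Z := fun i => if h : z i ∈ Z then ⟨z i, h⟩ else 0
  have hc : ∀ i ∈ J, (c i : G) = z i := fun i hi => by
    simp only [c, dif_pos (hz i hi)]
  apply htr
  refine ⟨∑ i ∈ J, Polynomial.monomial i (c i), ?_, ?_⟩
  · intro h0
    have := congrArg (fun p => Polynomial.coeff p j) h0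
    simp only [Polynomial.finsetSum_coeff, Polynomial.coeff_monomial, Polynomial.coeff_zero,
      Finset.sum_ite_eq', hj, if_true] at this
    have h1 := hc j hj
    rw [this] at h1
    exact hne (by simpa using h1.symm)
  · rw [map_sum, ← hrel]
    refine Finset.sum_congr rfl fun i hi => ?_
    rw [Polynomial.aeval_monomial, ← hc i hi]
    rfl

lemma homog_transc {k : Type*} [Field k] {w : Fin 2 → ℕ}
    {p : MvPolynomial (Fin 2) k} {e : ℕ} (he : 1 ≤ e)
    (hp : IsWeightedHomogeneous w p e) (hp0 : p ≠ 0) :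
    Transcendental (⊥ : Subalgebra k (MvPolynomial (Fin 2) k)) p := by
  rintro ⟨r, hr0, hr⟩
  rw [Polynomial.aeval_def, Polynomial.eval₂_eq_sum, Polynomial.sum] at hr
  have h1 := congrArg (weightedHomogeneousComponent w (r.natDegree * e)) hr
  rw [map_sum, map_zero] at h1
  have h2 : ∀ i, ∃ c : k, algebraMap (⊥ : Subalgebra k (MvPolynomial (Fin 2) k))
      (MvPolynomial (Fin 2) k) (r.coeff i) = C c := by
    intro i
    obtain ⟨c, hc⟩ := Algebra.mem_bot.1 (r.coeff i).2
    exact ⟨c, hc.symm⟩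
  rw [Finset.sum_eq_single r.natDegree] at h1
  · obtain ⟨c, hc⟩ := h2 r.natDegree
    have h3 : IsWeightedHomogeneous w (C c * p ^ r.natDegree) (r.natDegree * e) := by
      simpa using (hp.pow r.natDegree).C_mul c
    rw [hc, weightedHomogeneousComponent_eq_self h3] at h1
    have h4 := (mul_eq_zero.1 h1).resolve_right (pow_ne_zero _ hp0)
    rw [← hc] at h4
    have h5 : r.coeff r.natDegree = 0 := Subtype.ext h4
    exact hr0 (Polynomial.leadingCoeff_eq_zero.1 h5)
  · intro i _ hi
    obtain ⟨c, hc⟩ := h2 i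
    have h3 : IsWeightedHomogeneous w (C c * p ^ i) (i * e) := by
      simpa using (hp.pow i).C_mul c
    rw [hc, weightedHomogeneousComponent_of_mem h3, if_neg]
    intro h
    exact hi (Nat.eq_of_mul_eq_mul_right he h).symm
  · intro h
    rw [Polynomial.notMem_support_iff.1 h]; simp

lemma weight_step {k : Type*} [Field k] {w : Fin 2 → ℕ}
    {θ η : MvPolynomial (Fin 2) k} {τ d : ℕ} (hθ0 : θ ≠ 0)
    (hθ : IsWeightedHomogeneous w θ τ) (hη : IsWeightedHomogeneous w η d)
    (Z : Subalgebra k (MvPolynomial (Fin 2) k)) (hθZ : θ ∈ Z) (htr : Transcendental Z η)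
    (hexp : ∀ (f : MvPolynomial (Fin 2) k) (a : ℕ), f ≠ 0 → IsWeightedHomogeneous w f a →
      ∃ (M : ℕ) (I : Finset ℕ) (c : ℕ → k) (e : ℕ → ℕ), (∀ i ∈ I, c i ≠ 0) ∧
        θ ^ M * f = ∑ i ∈ I, C (c i) * θ ^ (e i) * η ^ i) :
    τ ∣ w 0 ∨ τ ∣ w 1 := by
  classical
  have hη0 : η ≠ 0 := by
    rintro rfl
    exact htr isAlgebraic_zero
  have hZ : ∀ (c : k) (m : ℕ), C c * θ ^ m ∈ Z := fun c m =>
    Z.mul_mem (Z.algebraMap_mem c) (Z.pow_mem hθZ m)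
  have hdvd : ∀ (f : MvPolynomial (Fin 2) k) (a : ℕ), f ≠ 0 → IsWeightedHomogeneous w f a →
      ¬ τ ∣ a → ∃ M, η ∣ θ ^ M * f := by
    intro f a hf0 hf ha
    obtain ⟨M, I, c, e, hc, heq⟩ := hexp f a hf0 hf
    refine ⟨M, ?_⟩
    have h0 : 0 ∉ I := by
      intro h0
      have h1 := congrArg (weightedHomogeneousComponent w (e 0 * τ)) heq
      have hL : IsWeightedHomogeneous w (θ ^ M * f) (M * τ + a) := by
        simpa using (hθ.pow M).mul hf
      rw [weightedHomogeneousComponent_of_mem hL, if_neg, map_sum] at h1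
      · have h2 : ∀ i, weightedHomogeneousComponent w (e 0 * τ) (C (c i) * θ ^ (e i) * η ^ i) =
            (if e 0 * τ = e i * τ + i * d then C (c i) * θ ^ (e i) else 0) * η ^ i := by
          intro i
          have h3 : IsWeightedHomogeneous w (C (c i) * θ ^ (e i) * η ^ i) (e i * τ + i * d) := by
            simpa using ((hθ.pow (e i)).C_mul (c i)).mul (hη.pow i)
          rw [weightedHomogeneousComponent_of_mem h3, ite_mul, zero_mul]
        simp only [h2] at h1
        have h4 := no_rel htr I (fun i => if e 0 * τ = e i * τ + i * d then C (c i) * θ ^ (e i) else 0)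
          (fun i _ => by
            show ite _ _ _ ∈ Z
            split_ifs
            · exact hZ _ _
            · exact Z.zero_mem) h1.symm 0 h0
        simp only [zero_mul, add_zero, if_true] at h4
        rcases mul_eq_zero.1 h4 with h5 | h5
        · exact hc 0 h0 (by simpa using h5)
        · exact pow_ne_zero _ hθ0 h5
      · intro h
        apply ha
        have : τ ∣ M * τ + a := h ▸ Dvd.intro_left _ rfl
        exact (Nat.dvd_add_right (Dvd.intro_left _ rfl)).1 this
    rw [heq]
    refine Finset.dvd_sum fun i hi => ?_
    have : i ≠ 0 := by rintro rfl; exact h0 hi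
    exact Dvd.dvd.mul_left (dvd_pow_self _ this) _
  by_contra hcon
  push Not at hcon
  obtain ⟨M0, h0⟩ := hdvd (X 0) (w 0) (X_ne_zero _) (isWeightedHomogeneous_X k w 0) hcon.1
  obtain ⟨M1, h1⟩ := hdvd (X 1) (w 1) (X_ne_zero _) (isWeightedHomogeneous_X k w 1) hcon.2
  have hmain : ∃ M, η ∣ θ ^ M := by
    refine ⟨M0 + M1, ?_⟩
    have h0' : η ∣ θ ^ (M0 + M1) * X 0 := by
      rw [pow_add, mul_comm (θ ^ M0), mul_assoc]; exact Dvd.dvd.mul_left h0 _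
    have h1' : η ∣ θ ^ (M0 + M1) * X 1 := by
      rw [pow_add, mul_assoc]; exact Dvd.dvd.mul_left h1 _
    obtain ⟨a, ha⟩ := h0'
    obtain ⟨b, hb⟩ := h1'
    have hab : a * X 1 = b * X 0 := by
      apply mul_left_cancel₀ hη0
      rw [← mul_assoc, ← mul_assoc, ← ha, ← hb]; ring
    have hdv : (X 0 : MvPolynomial (Fin 2) k) ∣ a := by
      have : (X 0 : MvPolynomial (Fin 2) k) ∣ a * X 1 := hab ▸ Dvd.intro_left _ rfl
      rcases X_dvd_mul_iff.1 this with h | h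
      · exact h
      · exfalso
        rw [X_dvd_X] at h
        simp at h
    obtain ⟨a', rfl⟩ := hdv
    refine ⟨a', ?_⟩
    apply mul_right_cancel₀ (X_ne_zero (R := k) (0 : Fin 2))
    rw [ha]; ring
  obtain ⟨M, r, hr⟩ := hmain
  have hr0 : r ≠ 0 := by
    rintro rfl
    exact pow_ne_zero M hθ0 (by simpa using hr)
  have hrh : IsWeightedHomogeneous w (η * r) (M * τ) := by
    rw [← hr]; simpa using hθ.pow M
  obtain ⟨b, hb, hrb⟩ := homog_of_mul hη hη0 hr0 hrh
  obtain ⟨M', I, c, e, hc, heq⟩ := hexp r b hr0 hrb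
  have hfin : θ ^ (M + M') = ∑ i ∈ I, C (c i) * θ ^ (e i) * η ^ (i + 1) := by
    rw [pow_add, hr, mul_assoc, mul_comm r, heq, Finset.mul_sum]
    refine Finset.sum_congr rfl fun i _ => ?_
    rw [pow_succ]; ring
  have hrel : ∑ i ∈ insert 0 (I.image (· + 1)),
      (if i = 0 then - θ ^ (M + M') else C (c (i - 1)) * θ ^ (e (i - 1))) * η ^ i = 0 := by
    rw [Finset.sum_insert (by simp), Finset.sum_image (by intro a _ b _ h; simpa using h)]
    simp only [if_true, pow_zero, mul_one, Nat.add_sub_cancel, Nat.succ_ne_zero, if_false]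
    rw [← hfin]; ring
  have := no_rel htr _ _ (fun i _ => by
      show ite _ _ _ ∈ Z
      split_ifs
      · exact Z.neg_mem (Z.pow_mem hθZ _)
      · exact hZ _ _) hrel 0 (by simp)
  simp at this
  exact hθ0 this.1


/-- Up to powers of `t`, all of `k[x,y]` is contained in `k[t][P,Q]`. -/
def Gen {k : Type*} [Field k] (P Q : Polynomial (MvPolynomial (Fin 2) k)) : Prop :=
  ∀ f : MvPolynomial (Fin 2) k, ∃ (N : ℕ) (G : Polynomial (Polynomial (Polynomial k))),
    Polynomial.X ^ N * Polynomial.C f =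
      G.eval₂ (Polynomial.eval₂RingHom (Polynomial.mapRingHom C) P) Q

lemma wTopForm_natDegree_pos {k : Type*} [Field k] {w : Fin 2 → ℕ} (hw : ∀ i, w i ≠ 0)
    {f : MvPolynomial (Fin 2) k} (hf : ∀ c, f ≠ C c) : 1 ≤ (wdelta w f).natDegree := by
  by_contra h
  have h0 : (wdelta w f).natDegree = 0 := by omega
  rw [Polynomial.natDegree_eq_zero] at h0
  obtain ⟨g, hg⟩ := h0
  have h1 : g = weightedHomogeneousComponent w 0 f := by
    rw [← wdelta_coeff, ← hg, Polynomial.coeff_C_zero]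
  rw [weightedHomogeneousComponent_zero f hw] at h1
  apply hf (coeff 0 f)
  apply wdelta_injective w
  rw [← hg, h1, wdelta_of_homog (isWeightedHomogeneous_C w (coeff 0 f))]
  rfl

lemma X0_X1_not_powers {k : Type*} [Field k] (θ : MvPolynomial (Fin 2) k) (c c' : k) (i j : ℕ)
    (h0 : X 0 = C c * θ ^ i) (h1 : X 1 = C c' * θ ^ j) : False := by
  rcases Nat.eq_zero_or_pos j with rfl | hj
  · have e1 := congrArg (eval ![0, 0]) h1
    have e2 := congrArg (eval ![0, 1]) h1
    simp at e1 e2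
    exact one_ne_zero (e2.trans e1.symm)
  · have hc : c ≠ 0 := by rintro rfl; simp at h0
    have e : X 0 ^ j * C (c' ^ i) = X 1 ^ i * (C (c ^ j) : MvPolynomial (Fin 2) k) := by
      rw [h0, h1, mul_pow, mul_pow, ← pow_mul, ← pow_mul, map_pow, map_pow, mul_comm j i]; ring
    have e2 := congrArg (eval ![0, 1]) e
    simp [hj.ne'] at e2
    exact hc (pow_eq_zero_iff hj.ne' |>.1 e2.symm)

lemma lemma_W {k : Type*} [Field k] (w : Fin 2 → ℕ) (hw : ∀ i, w i ≠ 0)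
    (P Q : Polynomial (MvPolynomial (Fin 2) k)) (hP : ∀ c, P.coeff 0 ≠ C c) (hg : Gen P Q) :
    ∃ (θ : MvPolynomial (Fin 2) k) (τ : ℕ) (c : k) (m : ℕ), 1 ≤ τ ∧ θ ≠ 0 ∧
      IsWeightedHomogeneous w θ τ ∧ c ≠ 0 ∧ wTopForm w (P.coeff 0) = C c * θ ^ m ∧
      (τ ∣ w 0 ∨ τ ∣ w 1) := by
  classical
  set φ : Polynomial (MvPolynomial (Fin 2) k) → MvPolynomial (Fin 2) k :=
    fun f => wTopForm w f.trailingCoeff with hφdef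
  have hφ : IsInit φ := (wTopForm_isInit w).comp IsInit.trailingCoeff
  have hhom : ∀ f, ∃ d, IsWeightedHomogeneous w (φ f) d := fun f => ⟨_, wTopForm_homog w _⟩
  have hφC : ∀ f, φ (Polynomial.C f) = wTopForm w f := by
    intro f
    simp [hφdef, Polynomial.trailingCoeff]
  have hφX : φ Polynomial.X = 1 := by
    have : (Polynomial.X : Polynomial (MvPolynomial (Fin 2) k)).trailingCoeff = 1 := by
      simp [Polynomial.trailingCoeff]
    simp only [hφdef, this]
    exact (wTopForm_isInit w).one
  have hφXC : ∀ N f, φ (Polynomial.X ^ N * Polynomial.C f) = wTopForm w f := by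
    intro N f
    rw [hφ.mul, hφ.pow, hφX, one_pow, one_mul, hφC]
  set p := wTopForm w (P.coeff 0) with hp
  have hP0 : P.coeff 0 ≠ 0 := by simpa using hP 0
  have hφP : φ P = p := by
    have : P.natTrailingDegree = 0 := Polynomial.natTrailingDegree_eq_zero.2 (Or.inr hP0)
    simp only [hφdef, Polynomial.trailingCoeff, this, hp]
  have hp0 : p ≠ 0 := (wTopForm_isInit w).ne_zero _ hP0
  set e := (wdelta w (P.coeff 0)).natDegree with he
  have he1 : 1 ≤ e := wTopForm_natDegree_pos hw hP
  have hph : IsWeightedHomogeneous w p e := wTopForm_homog w _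
  set ψ0 : Polynomial k →+* Polynomial (MvPolynomial (Fin 2) k) := Polynomial.mapRingHom C with hψ0
  have hψ0bot : ∀ b, φ (ψ0 b) ∈ (⊥ : Subalgebra k (MvPolynomial (Fin 2) k)) := by
    intro b
    have h1 : (ψ0 b).trailingCoeff = C b.trailingCoeff := by
      have h2 : (ψ0 b).natTrailingDegree = b.natTrailingDegree := by
        have h3 : (ψ0 b).support = b.support := Polynomial.support_map_of_injective b (C_injective _ _)
        rw [Polynomial.natTrailingDegree, Polynomial.natTrailingDegree, Polynomial.trailingDegree,
          Polynomial.trailingDegree, h3]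
      rw [Polynomial.trailingCoeff, h2, hψ0, Polynomial.coe_mapRingHom, Polynomial.coeff_map]
      rfl
    simp only [hφdef, h1]
    rw [wTopForm_of_homog (isWeightedHomogeneous_C w _)]
    exact Subalgebra.algebraMap_mem _ _
  -- Step 1
  have step1 : ∀ H : Polynomial (Polynomial k), φ (H.eval₂ ψ0 P) ∈ Algebra.adjoin k {p} := by
    intro H
    by_cases hH : H.eval₂ ψ0 P = 0
    · rw [hH, hφ.zero]; exact Subalgebra.zero_mem _
    obtain ⟨N, I, z, hz, heq⟩ := init_expand hφ ψ0 ⊥ P Polynomial.X (by simp) (by simp) (by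
        intro H hH
        rw [Polynomial.natDegree_X, Nat.lt_one_iff] at hH
        rw [Polynomial.eq_C_of_natDegree_eq_zero hH, Polynomial.eval₂_C]
        exact hψ0bot _) (by
        rw [Polynomial.eval₂_X, hφP]
        exact homog_transc he1 hph hp0) H hH
    rw [Polynomial.leadingCoeff_X, map_one, hφ.one, one_pow, one_mul] at heq
    rw [heq]
    refine Subalgebra.sum_mem _ fun i hi => ?_
    rw [Polynomial.eval₂_X, hφP]
    exact Subalgebra.mul_mem _ (bot_le (a := Algebra.adjoin k {p}) (hz i hi).2)
      (Subalgebra.pow_mem _ (Algebra.self_mem_adjoin_singleton k p) i)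
  set ψ1 := Polynomial.eval₂RingHom ψ0 P with hψ1
  have step1' : ∀ b, φ (ψ1 b) ∈ Algebra.adjoin k {p} := step1
  set Z : Subalgebra k (MvPolynomial (Fin 2) k) :=
    (Subalgebra.algebraicClosure (Algebra.adjoin k {p})
      (MvPolynomial (Fin 2) k)).restrictScalars k with hZ
  have hmemZ : ∀ q, q ∈ Z ↔ IsAlgebraic (Algebra.adjoin k {p}) q := fun q => Iff.rfl
  have hleZ : Algebra.adjoin k {p} ≤ Z := by
    intro q hq
    exact isAlgebraic_algebraMap (⟨q, hq⟩ : Algebra.adjoin k {p})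
  obtain ⟨θ, τ, hτ, hθ0, hθ, ⟨cθ, hcθ, hθe⟩, hθall⟩ := exists_theta hw he1 hph hp0
  have hθZ : θ ∈ Z := by
    refine IsAlgebraic.of_pow (n := e) he1 ?_
    rw [hθe, ← hmemZ]
    exact Z.mul_mem (Z.algebraMap_mem _)
      (Z.pow_mem (hleZ (Algebra.self_mem_adjoin_singleton k p)) _)
  have hZform : ∀ q d, q ≠ 0 → IsWeightedHomogeneous w q d → q ∈ Z →
      ∃ (c : k) (j : ℕ), c ≠ 0 ∧ q = C c * θ ^ j := by
    intro q d hq0 hq hqZ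
    rcases Nat.eq_zero_or_pos d with rfl | hd
    · obtain ⟨c, rfl⟩ := homog_zero_const hw hq
      exact ⟨c, 0, by rintro rfl; simp at hq0, by simp⟩
    · exact hθall q d hq0 hq (homog_alg_pow hw he1 hd hph hq hp0 hq0 hqZ)
  obtain ⟨cp, m, hcp, hpm⟩ := hZform p e hp0 hph (hleZ (Algebra.self_mem_adjoin_singleton k p))
  refine ⟨θ, τ, cp, m, hτ, hθ0, hθ, hcp, hpm, ?_⟩
  -- Step 2
  have hex : ∃ n, ∃ F : Polynomial (Polynomial (Polynomial k)), F.natDegree = n ∧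
      φ (F.eval₂ ψ1 Q) ∉ Z := by
    by_contra hcon
    push Not at hcon
    have hXZ : ∀ i : Fin 2, (X i : MvPolynomial (Fin 2) k) ∈ Z := by
      intro i
      obtain ⟨N, G, hG⟩ := hg (X i)
      have := hcon _ G rfl
      rw [← hG, hφXC, wTopForm_of_homog (isWeightedHomogeneous_X k w i)] at this
      exact this
    obtain ⟨c, i, _, h0⟩ := hZform _ _ (X_ne_zero 0) (isWeightedHomogeneous_X k w 0) (hXZ 0)
    obtain ⟨c', j, _, h1⟩ := hZform _ _ (X_ne_zero 1) (isWeightedHomogeneous_X k w 1) (hXZ 1)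
    exact X0_X1_not_powers θ c c' i j h0 h1
  obtain ⟨F, hFn, hFZ⟩ := Nat.find_spec hex
  have hmin : ∀ H : Polynomial (Polynomial (Polynomial k)), H.natDegree < F.natDegree →
      φ (H.eval₂ ψ1 Q) ∈ Z := by
    intro H hH
    by_contra hcon
    exact Nat.find_min hex (hFn ▸ hH) ⟨H, rfl, hcon⟩
  have hF1 : 1 ≤ F.natDegree := by
    by_contra h
    apply hFZ
    rw [Polynomial.eq_C_of_natDegree_eq_zero (show F.natDegree = 0 by omega), Polynomial.eval₂_C]
    exact hleZ (step1' _)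
  have hlc : ψ1 F.leadingCoeff ≠ 0 := by
    intro h0
    apply hFZ
    have h1 : F.eval₂ ψ1 Q = F.eraseLead.eval₂ ψ1 Q := by
      conv_lhs => rw [← Polynomial.eraseLead_add_monomial_natDegree_leadingCoeff F]
      rw [Polynomial.eval₂_add, Polynomial.eval₂_monomial, h0, zero_mul, add_zero]
    rw [h1]
    apply hmin
    have := Polynomial.eraseLead_natDegree_le F
    omega
  set η := φ (F.eval₂ ψ1 Q) with hη
  obtain ⟨d, hηd⟩ := hhom (F.eval₂ ψ1 Q)
  have htr : Transcendental Z η :=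
    Transcendental.subalgebraAlgebraicClosure (show Transcendental (Algebra.adjoin k {p}) η from hFZ)
  refine weight_step hθ0 hθ hηd Z hθZ htr ?_
  intro f a hf0 hf
  obtain ⟨N, G, hG⟩ := hg f
  obtain ⟨N', I, z, hz, heq⟩ := init_expand hφ ψ1 Z Q F hF1 hlc hmin htr G (by
    rw [← hG]
    exact mul_ne_zero (pow_ne_zero _ Polynomial.X_ne_zero) (by simpa using hf0))
  rw [← hG, hφXC, wTopForm_of_homog hf] at heq
  have hlform : ∃ (c : k) (j : ℕ), c ≠ 0 ∧ φ (ψ1 F.leadingCoeff) ^ N' = C c * θ ^ j := by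
    obtain ⟨d', hd'⟩ := hhom (ψ1 F.leadingCoeff)
    exact hZform _ _ (pow_ne_zero _ (hφ.ne_zero _ hlc)) (hd'.pow N')
      (Z.pow_mem (hleZ (step1' _)) _)
  obtain ⟨c0, M, hc0, hl⟩ := hlform
  have hzf : ∀ i, ∃ (c : k) (j : ℕ), i ∈ I → c ≠ 0 ∧ φ (z i) = C c * θ ^ j := by
    intro i
    by_cases hi : i ∈ I
    · obtain ⟨d', hd'⟩ := hhom (z i)
      obtain ⟨c, j, h⟩ := hZform _ _ (hφ.ne_zero _ (hz i hi).1) hd' (hz i hi).2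
      exact ⟨c, j, fun _ => h⟩
    · exact ⟨0, 0, fun h => absurd h hi⟩
  choose c j hcj using hzf
  refine ⟨M, I, fun i => c0⁻¹ * c i, j, fun i hi => mul_ne_zero (inv_ne_zero hc0) (hcj i hi).1, ?_⟩
  have h1 : C c0⁻¹ * C c0 = (1 : MvPolynomial (Fin 2) k) := by
    rw [← map_mul, inv_mul_cancel₀ hc0, map_one]
  calc θ ^ M * f = C c0⁻¹ * (C c0 * θ ^ M * f) := by
        rw [← mul_assoc, ← mul_assoc, h1, one_mul]
    _ = C c0⁻¹ * ∑ i ∈ I, φ (z i) * η ^ i := by rw [← hl, heq]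
    _ = _ := by
        rw [Finset.mul_sum]
        refine Finset.sum_congr rfl fun i hi => ?_
        rw [(hcj i hi).2, map_mul]; ring


lemma Gen.map {k : Type*} [Field k] {P Q : Polynomial (MvPolynomial (Fin 2) k)} (h : Gen P Q)
    (σ : MvPolynomial (Fin 2) k ≃ₐ[k] MvPolynomial (Fin 2) k) :
    Gen (P.map (σ : MvPolynomial (Fin 2) k →+* MvPolynomial (Fin 2) k))
      (Q.map (σ : MvPolynomial (Fin 2) k →+* MvPolynomial (Fin 2) k)) := by
  intro f
  obtain ⟨N, G, hG⟩ := h (σ.symm f)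
  refine ⟨N, G, ?_⟩
  have h1 := congrArg
    (Polynomial.mapRingHom (σ : MvPolynomial (Fin 2) k →+* MvPolynomial (Fin 2) k)) hG
  rw [Polynomial.hom_eval₂] at h1
  have h2 : (Polynomial.mapRingHom (σ : MvPolynomial (Fin 2) k →+* MvPolynomial (Fin 2) k)).comp
      (Polynomial.eval₂RingHom (Polynomial.mapRingHom C) P) =
      Polynomial.eval₂RingHom (Polynomial.mapRingHom C)
        (P.map (σ : MvPolynomial (Fin 2) k →+* MvPolynomial (Fin 2) k)) := by
    apply Polynomial.ringHom_ext
    · intro b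
      simp only [RingHom.comp_apply, Polynomial.coe_eval₂RingHom, Polynomial.eval₂_C,
        Polynomial.coe_mapRingHom, Polynomial.map_map]
      congr 1
      exact RingHom.ext fun c => σ.commutes c
    · simp
  rw [h2] at h1
  simpa using h1

/-- `f` lies in `k[v]` for some variable `v`. -/
def InVar {k : Type*} [Field k] (f : MvPolynomial (Fin 2) k) : Prop :=
  ∃ v : MvPolynomial (Fin 2) k,
    (∃ σ : MvPolynomial (Fin 2) k ≃ₐ[k] MvPolynomial (Fin 2) k, σ v = X 0) ∧
      f ∈ Algebra.adjoin k {v}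

lemma InVar.of_map {k : Type*} [Field k] {f : MvPolynomial (Fin 2) k}
    (σ : MvPolynomial (Fin 2) k ≃ₐ[k] MvPolynomial (Fin 2) k) (h : InVar (σ f)) : InVar f := by
  obtain ⟨v, ⟨ρ, hρ⟩, hv⟩ := h
  refine ⟨σ.symm v, ⟨σ.trans ρ, by simp [hρ]⟩, ?_⟩
  have h1 : σ.symm.toAlgHom (σ f) ∈ (Algebra.adjoin k {v}).map σ.symm.toAlgHom :=
    Subalgebra.mem_map.2 ⟨_, hv, rfl⟩
  rw [AlgHom.map_adjoin, Set.image_singleton] at h1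
  simpa using h1

/-- `σ` preserves the weight grading. -/
def GradedAut {k : Type*} [Field k] (w : Fin 2 → ℕ)
    (σ : MvPolynomial (Fin 2) k ≃ₐ[k] MvPolynomial (Fin 2) k) : Prop :=
  ∀ f, wdelta w (σ f) =
    (wdelta w f).map (σ : MvPolynomial (Fin 2) k →+* MvPolynomial (Fin 2) k)

lemma GradedAut.trans {k : Type*} [Field k] {w : Fin 2 → ℕ}
    {σ ρ : MvPolynomial (Fin 2) k ≃ₐ[k] MvPolynomial (Fin 2) k} (hσ : GradedAut w σ)
    (hρ : GradedAut w ρ) : GradedAut w (σ.trans ρ) := by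
  intro f
  rw [AlgEquiv.trans_apply, hρ, hσ, Polynomial.map_map]
  rfl

lemma GradedAut.of_X {k : Type*} [Field k] {w : Fin 2 → ℕ}
    {σ : MvPolynomial (Fin 2) k ≃ₐ[k] MvPolynomial (Fin 2) k}
    (h : ∀ i, IsWeightedHomogeneous w (σ (X i)) (w i)) : GradedAut w σ := by
  intro f
  have : (wdelta w).comp σ.toAlgHom = (Polynomial.mapAlgHom σ.toAlgHom).comp (wdelta w) := by
    apply MvPolynomial.algHom_ext
    intro i
    have h1 : wdelta w (σ (X i)) = Polynomial.monomial (w i) (σ (X i)) := wdelta_of_homog (h i)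
    have h2 : wdelta w (X i : MvPolynomial (Fin 2) k) = Polynomial.monomial (w i) (X i) :=
      wdelta_of_homog (isWeightedHomogeneous_X k w i)
    simp only [AlgHom.comp_apply, h2]
    refine h1.trans ?_
    simp [Polynomial.mapAlgHom]
  exact DFunLike.congr_fun this f

lemma GradedAut.natDegree {k : Type*} [Field k] {w : Fin 2 → ℕ}
    {σ : MvPolynomial (Fin 2) k ≃ₐ[k] MvPolynomial (Fin 2) k} (h : GradedAut w σ)
    (f : MvPolynomial (Fin 2) k) : (wdelta w (σ f)).natDegree = (wdelta w f).natDegree := by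
  rw [h f]
  exact Polynomial.natDegree_map_eq_of_injective σ.injective _

lemma GradedAut.wTopForm {k : Type*} [Field k] {w : Fin 2 → ℕ}
    {σ : MvPolynomial (Fin 2) k ≃ₐ[k] MvPolynomial (Fin 2) k} (h : GradedAut w σ)
    (f : MvPolynomial (Fin 2) k) : wTopForm w (σ f) = σ (wTopForm w f) := by
  rw [_root_.wTopForm, h f]
  exact Polynomial.leadingCoeff_map_of_injective σ.injective _

/-- The exchange automorphism. -/
def swapAut (k : Type*) [Field k] : MvPolynomial (Fin 2) k ≃ₐ[k] MvPolynomial (Fin 2) k :=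
  renameEquiv k (Equiv.swap 0 1)

lemma swapAut_X0 (k : Type*) [Field k] : swapAut k (X 0) = X 1 := by simp [swapAut]
lemma swapAut_X1 (k : Type*) [Field k] : swapAut k (X 1) = X 0 := by simp [swapAut]

/-- Elementary automorphisms. -/
lemma exists_elem {k : Type*} [Field k] (c1 c2 : k) (hc : c2 ≠ 0) (α : ℕ) :
    ∃ σ : MvPolynomial (Fin 2) k ≃ₐ[k] MvPolynomial (Fin 2) k,
      σ (X 0) = X 0 ∧ σ (X 1) = C c2⁻¹ * (X 1 - C c1 * X 0 ^ α) ∧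
        σ (C c1 * X 0 ^ α + C c2 * X 1) = X 1 := by
  have h1 : (C c2 : MvPolynomial (Fin 2) k) * C c2⁻¹ = 1 := by
    rw [← map_mul, mul_inv_cancel₀ hc, map_one]
  let F : MvPolynomial (Fin 2) k →ₐ[k] MvPolynomial (Fin 2) k :=
    aeval ![X 0, C c2⁻¹ * (X 1 - C c1 * X 0 ^ α)]
  let G : MvPolynomial (Fin 2) k →ₐ[k] MvPolynomial (Fin 2) k :=
    aeval ![X 0, C c1 * X 0 ^ α + C c2 * X 1]
  have hF0 : F (X 0) = X 0 := by simp [F]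
  have hF1 : F (X 1) = C c2⁻¹ * (X 1 - C c1 * X 0 ^ α) := by simp [F]
  have hG0 : G (X 0) = X 0 := by simp [G]
  have hG1 : G (X 1) = C c1 * X 0 ^ α + C c2 * X 1 := by simp [G]
  have hFC : ∀ c, F (C c) = C c := fun c => F.commutes c
  have hGC : ∀ c, G (C c) = C c := fun c => G.commutes c
  have hFG : F (C c1 * X 0 ^ α + C c2 * X 1) = X 1 := by
    rw [map_add, map_mul, map_mul, map_pow, hF0, hF1, hFC, hFC]
    linear_combination (X 1 - C c1 * X 0 ^ α) * h1
  refine ⟨AlgEquiv.ofAlgHom F G ?_ ?_, hF0, hF1, hFG⟩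
  · apply MvPolynomial.algHom_ext
    intro i
    fin_cases i
    · show F (G (X 0)) = X 0
      rw [hG0, hF0]
    · show F (G (X 1)) = X 1
      rw [hG1, hFG]
  · apply MvPolynomial.algHom_ext
    intro i
    fin_cases i
    · show G (F (X 0)) = X 0
      rw [hF0, hG0]
    · show G (F (X 1)) = X 1
      rw [hF1, map_mul, map_sub, map_mul, map_pow, hG0, hG1, hGC, hGC]
      linear_combination (X 1) * h1

lemma wt2 (w : Fin 2 → ℕ) (m : Fin 2 →₀ ℕ) : Finsupp.weight w m = w 0 * m 0 + w 1 * m 1 := by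
  rw [Finsupp.weight_apply, Finsupp.sum_fintype _ _ (by simp)]
  simp [Fin.sum_univ_two, mul_comm]

lemma coeff_wTopForm {k : Type*} [Field k] (w : Fin 2 → ℕ) (f : MvPolynomial (Fin 2) k)
    (m : Fin 2 →₀ ℕ) : coeff m (wTopForm w f) =
      if w 0 * m 0 + w 1 * m 1 = (wdelta w f).natDegree then coeff m f else 0 := by
  classical
  rw [wTopForm, Polynomial.leadingCoeff, wdelta_coeff, coeff_weightedHomogeneousComponent, wt2]

lemma weight_le {k : Type*} [Field k] (w : Fin 2 → ℕ) (f : MvPolynomial (Fin 2) k)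
    (m : Fin 2 →₀ ℕ) (hm : coeff m f ≠ 0) : w 0 * m 0 + w 1 * m 1 ≤ (wdelta w f).natDegree := by
  classical
  apply Polynomial.le_natDegree_of_ne_zero
  rw [wdelta_coeff]
  intro h
  have := congrArg (coeff m) h
  rw [coeff_weightedHomogeneousComponent, wt2, if_pos rfl, coeff_zero] at this
  exact hm this

lemma exists_weight_eq {k : Type*} [Field k] (w : Fin 2 → ℕ) (f : MvPolynomial (Fin 2) k)
    (hf : f ≠ 0) : ∃ m, coeff m f ≠ 0 ∧ w 0 * m 0 + w 1 * m 1 = (wdelta w f).natDegree := by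
  have h1 : wTopForm w f ≠ 0 := (wTopForm_isInit w).ne_zero f hf
  obtain ⟨m, hm⟩ := MvPolynomial.ne_zero_iff.1 h1
  rw [coeff_wTopForm] at hm
  split_ifs at hm with h
  · exact ⟨m, hm, h⟩
  · exact absurd rfl hm

lemma homog_wt {k : Type*} [Field k] {w : Fin 2 → ℕ} {f : MvPolynomial (Fin 2) k} {n : ℕ}
    (hf : IsWeightedHomogeneous w f n) {m : Fin 2 →₀ ℕ} (hm : coeff m f ≠ 0) :
    w 0 * m 0 + w 1 * m 1 = n := by
  rw [← wt2]; exact hf hm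

lemma fin2_ext {m m' : Fin 2 →₀ ℕ} (h0 : m 0 = m' 0) (h1 : m 1 = m' 1) : m = m' := by
  ext i
  fin_cases i
  · exact h0
  · exact h1


lemma linear_to_X0 {k : Type*} [Field k] {θ : MvPolynomial (Fin 2) k} (hθ0 : θ ≠ 0)
    (hθ : IsWeightedHomogeneous ![1, 1] θ 1) :
    ∃ σ : MvPolynomial (Fin 2) k ≃ₐ[k] MvPolynomial (Fin 2) k, GradedAut ![1, 1] σ ∧
      σ θ = X 0 := by
  classical
  have hX : ∀ i : Fin 2, IsWeightedHomogeneous ![1, 1] (X i : MvPolynomial (Fin 2) k) 1 := by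
    intro i
    have := isWeightedHomogeneous_X k ![1, 1] i
    fin_cases i <;> simpa using this
  have hswap : GradedAut ![1, 1] (swapAut k) := by
    apply GradedAut.of_X
    intro i
    fin_cases i
    · show IsWeightedHomogeneous ![1, 1] (swapAut k (X 0)) 1
      rw [swapAut_X0]; exact hX 1
    · show IsWeightedHomogeneous ![1, 1] (swapAut k (X 1)) 1
      rw [swapAut_X1]; exact hX 0
  have helem : ∀ (c1 c2 : k) (σ : MvPolynomial (Fin 2) k ≃ₐ[k] MvPolynomial (Fin 2) k),
      σ (X 0) = X 0 → σ (X 1) = C c2⁻¹ * (X 1 - C c1 * X 0 ^ 1) → GradedAut ![1, 1] σ := by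
    intro c1 c2 σ h0 h1
    apply GradedAut.of_X
    intro i
    fin_cases i
    · show IsWeightedHomogeneous ![1, 1] (σ (X 0)) 1
      rw [h0]; exact hX 0
    · show IsWeightedHomogeneous ![1, 1] (σ (X 1)) 1
      rw [h1, pow_one]
      exact ((hX 1).sub ((hX 0).C_mul c1)).C_mul _
  set a := coeff (Finsupp.single 0 1) θ with ha
  set b := coeff (Finsupp.single 1 1) θ with hb
  have hform : θ = C a * X 0 + C b * X 1 := by
    ext m
    have e1 : coeff m (C a * X 0 + C b * X 1 : MvPolynomial (Fin 2) k) =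
        (if Finsupp.single 0 1 = m then a else 0) + (if Finsupp.single 1 1 = m then b else 0) := by
      rw [coeff_add, coeff_C_mul, coeff_C_mul, coeff_X', coeff_X']
      simp
    rw [e1]
    by_cases hm : coeff m θ = 0
    · rw [hm]
      split_ifs with h1 h2 h2
      · rw [← h1] at h2
        have := DFunLike.congr_fun h2 0
        simp at this
      · rw [ha, h1, hm]; simp
      · rw [hb, h2, hm]; simp
      · simp
    · have := homog_wt hθ hm
      simp at this
      have h01 : (m 0 = 1 ∧ m 1 = 0) ∨ (m 0 = 0 ∧ m 1 = 1) := by omega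
      rcases h01 with ⟨h0, h1⟩ | ⟨h0, h1⟩
      · have : m = Finsupp.single 0 1 := fin2_ext (by simp [h0]) (by simp [h1])
        subst this
        rw [if_pos rfl, if_neg]
        · simp [ha]
        · intro h; have := DFunLike.congr_fun h 0; simp at this
      · have : m = Finsupp.single 1 1 := fin2_ext (by simp [h0]) (by simp [h1])
        subst this
        rw [if_pos rfl, if_neg]
        · simp [hb]
        · intro h; have := DFunLike.congr_fun h 0; simp at this
  by_cases hb0 : b = 0
  · have ha0 : a ≠ 0 := by
      intro h; apply hθ0; rw [hform, h, hb0]; simp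
    obtain ⟨σ, h0, h1, h2⟩ := exists_elem 0 a ha0 1
    refine ⟨(swapAut k).trans (σ.trans (swapAut k)), hswap.trans ((helem _ _ σ h0 h1).trans hswap), ?_⟩
    rw [hform, hb0]
    simp only [AlgEquiv.trans_apply, map_zero, zero_mul, add_zero]
    have : swapAut k (C a * X 0) = C 0 * X 0 ^ 1 + C a * X 1 := by
      rw [map_mul, swapAut_X0, ← MvPolynomial.algebraMap_eq, AlgEquiv.commutes]
      simp
    rw [this, h2, swapAut_X1]
  · obtain ⟨σ, h0, h1, h2⟩ := exists_elem a b hb0 1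
    refine ⟨σ.trans (swapAut k), (helem _ _ σ h0 h1).trans hswap, ?_⟩
    rw [pow_one, ← hform] at h2
    rw [AlgEquiv.trans_apply, h2, swapAut_X1]

/-- Analysis of the top weighted form. -/
lemma theta_shape {k : Type*} [Field k] {a b M τ m : ℕ} {f θ : MvPolynomial (Fin 2) k} {c' : k}
    (ha : 1 ≤ a) (hab : a < b) (hM : 1 ≤ M)
    (hdeg : (wdelta ![a, b] f).natDegree = a * M)
    (hfM : coeff (Finsupp.single 0 M) f ≠ 0)
    (m0 : Fin 2 →₀ ℕ) (hm0 : coeff m0 f ≠ 0) (hm01 : 1 ≤ m0 1)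
    (hm0w : a * m0 0 + b * m0 1 = a * M)
    (hτ : 1 ≤ τ) (hθ : IsWeightedHomogeneous ![a, b] θ τ) (hc' : c' ≠ 0)
    (hw : wTopForm ![a, b] f = C c' * θ ^ m) (hdvd : τ ∣ a ∨ τ ∣ b) :
    ∃ (α : ℕ) (c1 c2 : k), b = a * α ∧ c2 ≠ 0 ∧ θ = C c1 * X 0 ^ α + C c2 * X 1 ∧ 1 ≤ m := by
  classical
  have hθ0 : θ ≠ 0 ∨ m = 0 := by
    by_contra h
    push Not at h
    have h1 : wTopForm ![a, b] f = 0 := by rw [hw, h.1, zero_pow h.2, mul_zero]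
    have h2 := coeff_wTopForm ![a, b] f (Finsupp.single 0 M)
    rw [h1, hdeg] at h2
    simp at h2
    exact hfM h2.symm
  have hcM : coeff (Finsupp.single 0 M) (wTopForm ![a, b] f) ≠ 0 := by
    rw [coeff_wTopForm, hdeg, if_pos (by simp)]; exact hfM
  have hcm0 : coeff m0 (wTopForm ![a, b] f) ≠ 0 := by
    rw [coeff_wTopForm, hdeg, if_pos (by simpa using hm0w)]; exact hm0
  have hm : 1 ≤ m := by
    by_contra h
    obtain rfl : m = 0 := by omega
    rw [hw, pow_zero, mul_one, coeff_C, if_neg] at hcM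
    · exact hcM rfl
    · intro h
      have := DFunLike.congr_fun h 0
      simp at this
      omega
  -- `θ` has a monomial without `y`
  have hex1 : ∃ μ, coeff μ θ ≠ 0 ∧ μ 1 = 0 := by
    by_contra hcon
    push Not at hcon
    have : (X 1 : MvPolynomial (Fin 2) k) ∣ θ := by
      rw [X_dvd_iff_modMonomial_eq_zero]
      ext μ
      rw [coeff_zero]
      by_cases hle : Finsupp.single 1 1 ≤ μ
      · rw [coeff_modMonomial_of_le _ hle]
      · rw [coeff_modMonomial_of_not_le _ hle]
        by_contra hne
        apply hle
        rw [Finsupp.single_le_iff]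
        have := hcon μ hne
        omega
    have h2 : (X 1 : MvPolynomial (Fin 2) k) ∣ wTopForm ![a, b] f := by
      rw [hw]; exact Dvd.dvd.mul_left (dvd_pow this (by omega)) _
    obtain ⟨g, hg⟩ := h2
    rw [hg, mul_comm, coeff_mul_X'] at hcM
    simp at hcM
  obtain ⟨μ, hμ, hμ1⟩ := hex1
  have hμτ := homog_wt hθ hμ
  simp [hμ1] at hμτ
  -- `θ` has a monomial with `y`
  have hex2 : ∃ ν, coeff ν θ ≠ 0 ∧ ν 1 ≠ 0 := by
    by_contra hcon
    push Not at hcon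
    have h1 : θ = monomial μ (coeff μ θ) := by
      ext ν
      rw [coeff_monomial]
      split_ifs with h
      · rw [h]
      · by_contra hne
        apply h
        have h2 := homog_wt hθ hne
        have h3 := hcon ν hne
        simp [h3] at h2
        refine fin2_ext ?_ (by rw [hμ1, h3])
        exact Nat.eq_of_mul_eq_mul_left ha (hμτ.trans h2.symm)
    rw [hw, h1, monomial_pow, coeff_C_mul, coeff_monomial, if_neg] at hcm0
    · simp at hcm0
    · intro h
      have := DFunLike.congr_fun h 1
      simp [hμ1] at this
      omega
  obtain ⟨ν, hν, hν1⟩ := hex2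
  have hντ := homog_wt hθ hν
  simp at hντ
  have hbτ : b ≤ τ := by
    have : b * 1 ≤ b * ν 1 := Nat.mul_le_mul_left b (by omega)
    omega
  have hτb : τ = b := by
    rcases hdvd with h | h
    · have := Nat.le_of_dvd (by omega) h; omega
    · have := Nat.le_of_dvd (by omega) h; omega
  subst hτb
  refine ⟨μ 0, coeff (Finsupp.single 0 (μ 0)) θ, coeff (Finsupp.single 1 1) θ, hμτ.symm, ?_, ?_, hm⟩
  · have h1 : ν 1 = 1 := by
      by_contra h
      have : τ * 2 ≤ τ * ν 1 := Nat.mul_le_mul_left τ (by omega)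
      omega
    have h0 : ν 0 = 0 := by
      rw [h1, mul_one] at hντ
      have : a * ν 0 = 0 := by omega
      rcases Nat.mul_eq_zero.1 this with h | h <;> omega
    have : ν = Finsupp.single 1 1 := fin2_ext (by simp [h0]) (by simp [h1])
    rwa [← this]
  · ext ξ
    have e1 : coeff ξ (C (coeff (Finsupp.single 0 (μ 0)) θ) * X 0 ^ (μ 0) +
        C (coeff (Finsupp.single 1 1) θ) * X 1 : MvPolynomial (Fin 2) k) =
        (if Finsupp.single 0 (μ 0) = ξ then coeff (Finsupp.single 0 (μ 0)) θ else 0) +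
        (if Finsupp.single 1 1 = ξ then coeff (Finsupp.single 1 1) θ else 0) := by
      rw [coeff_add, coeff_C_mul, coeff_C_mul, coeff_X', coeff_X_pow]
      simp
    rw [e1]
    have hne : ∀ n : ℕ, (Finsupp.single 0 n : Fin 2 →₀ ℕ) ≠ Finsupp.single 1 1 := by
      intro n h; have := DFunLike.congr_fun h 1; simp at this
    by_cases hξ : coeff ξ θ = 0
    · rw [hξ]
      split_ifs with h1 h2 h2
      · exact absurd (h1.trans h2.symm) (hne _)
      · rw [h1, hξ]; simp
      · rw [h2, hξ]; simp
      · simp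
    · have hwt := homog_wt hθ hξ
      simp at hwt
      have h1 : ξ 1 = 0 ∨ ξ 1 = 1 := by
        by_contra h
        have : τ * 2 ≤ τ * ξ 1 := Nat.mul_le_mul_left τ (by omega)
        omega
      rcases h1 with h1 | h1
      · rw [h1] at hwt
        have h0 : ξ 0 = μ 0 := Nat.eq_of_mul_eq_mul_left ha (by omega)
        have : ξ = Finsupp.single 0 (μ 0) := fin2_ext (by simp [h0]) (by simp [h1])
        rw [if_pos this.symm, if_neg (by rw [this]; exact (hne _).symm), this, add_zero]
      · rw [h1, mul_one] at hwt
        have h0 : ξ 0 = 0 := by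
          have : a * ξ 0 = 0 := by omega
          rcases Nat.mul_eq_zero.1 this with h | h <;> omega
        have : ξ = Finsupp.single 1 1 := fin2_ext (by simp [h0]) (by simp [h1])
        rw [if_pos this.symm, if_neg (by rw [this]; exact hne _), this, zero_add]


lemma mem_adjoin_X0 {k : Type*} [Field k] {f : MvPolynomial (Fin 2) k}
    (h : ∀ m, coeff m f ≠ 0 → m 1 = 0) : f ∈ Algebra.adjoin k {(X 0 : MvPolynomial (Fin 2) k)} := by
  rw [f.as_sum]
  refine Subalgebra.sum_mem _ fun m hm => ?_
  have h1 := h m (mem_support_iff.1 hm)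
  have : monomial m (coeff m f) = C (coeff m f) * X 0 ^ (m 0) := by
    rw [C_mul_X_pow_eq_monomial]
    congr 2
    exact fin2_ext (by simp) (by simp [h1])
  rw [this]
  exact Subalgebra.mul_mem _ (Subalgebra.algebraMap_mem _ _)
    (Subalgebra.pow_mem _ (Algebra.self_mem_adjoin_singleton _ _) _)

lemma inVar_of_X0 {k : Type*} [Field k] {f : MvPolynomial (Fin 2) k}
    (h : ∀ m, coeff m f ≠ 0 → m 1 = 0) : InVar f :=
  ⟨X 0, ⟨AlgEquiv.refl, rfl⟩, mem_adjoin_X0 h⟩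

lemma coeff_map_aut {k : Type*} [Field k] (P : Polynomial (MvPolynomial (Fin 2) k))
    (σ : MvPolynomial (Fin 2) k ≃ₐ[k] MvPolynomial (Fin 2) k) :
    (P.map (σ : MvPolynomial (Fin 2) k →+* MvPolynomial (Fin 2) k)).coeff 0 = σ (P.coeff 0) := by
  rw [Polynomial.coeff_map]; rfl

theorem key_theorem {k : Type*} [Field k] (P Q : Polynomial (MvPolynomial (Fin 2) k))
    (hg : Gen P Q) : InVar (P.coeff 0) := by
  classical
  induction hM : (wdelta ![1, 1] (P.coeff 0)).natDegree using Nat.strong_induction_on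
    generalizing P Q with
  | _ M ih =>
  by_cases hconst : ∃ c, P.coeff 0 = C c
  · obtain ⟨c, hc⟩ := hconst
    rw [hc]
    exact ⟨X 0, ⟨AlgEquiv.refl, rfl⟩, Subalgebra.algebraMap_mem _ _⟩
  push Not at hconst
  -- linear normalization
  obtain ⟨θ, τ, c, m, hτ, hθ0, hθ, hc, hwin, hdv⟩ := lemma_W ![1, 1]
    (by intro i; fin_cases i <;> simp) P Q hconst hg
  obtain rfl : τ = 1 := by
    rcases hdv with h | h <;> simpa using h
  obtain ⟨σ, hσg, hσθ⟩ := linear_to_X0 hθ0 hθ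
  apply InVar.of_map σ
  rw [← coeff_map_aut]
  have hg' := hg.map σ
  have hdeg : (wdelta ![1, 1] ((P.map (σ : MvPolynomial (Fin 2) k →+*
      MvPolynomial (Fin 2) k)).coeff 0)).natDegree = M := by
    rw [coeff_map_aut, hσg.natDegree, hM]
  have hwin' : wTopForm ![1, 1] ((P.map (σ : MvPolynomial (Fin 2) k →+*
      MvPolynomial (Fin 2) k)).coeff 0) = C c * X 0 ^ m := by
    rw [coeff_map_aut, hσg.wTopForm, hwin, map_mul, map_pow, hσθ, ← MvPolynomial.algebraMap_eq,
      AlgEquiv.commutes]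
  have hconst' : ∀ c, (P.map (σ : MvPolynomial (Fin 2) k →+*
      MvPolynomial (Fin 2) k)).coeff 0 ≠ C c := by
    intro c h
    rw [coeff_map_aut] at h
    apply hconst c
    apply σ.injective
    rw [h]
    exact (σ.commutes c).symm
  generalize hP' : P.map (σ : MvPolynomial (Fin 2) k →+* MvPolynomial (Fin 2) k) = P' at *
  generalize hQ' : Q.map (σ : MvPolynomial (Fin 2) k →+* MvPolynomial (Fin 2) k) = Q' at *
  clear hwin hP' hQ' hg hconst hM hσθ hσg hθ hθ0 hdv P Q σ θ
  set f := P'.coeff 0 with hf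
  have hM1 : 1 ≤ M := hdeg ▸ wTopForm_natDegree_pos (by intro i; fin_cases i <;> simp) hconst'
  have hcw := coeff_wTopForm ![1, 1] f
  rw [hwin', hdeg] at hcw
  have hmM : m = M := by
    have := hcw (Finsupp.single 0 m)
    rw [coeff_C_mul, coeff_X_pow, if_pos rfl, mul_one] at this
    by_contra hne
    rw [if_neg (by simpa using hne)] at this
    exact hc this
  subst hmM
  have hfM : coeff (Finsupp.single 0 m) f ≠ 0 := by
    have := hcw (Finsupp.single 0 m)
    rw [coeff_C_mul, coeff_X_pow, if_pos rfl, mul_one, if_pos (by simp)] at this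
    rw [← this]; exact hc
  have hle : ∀ μ, coeff μ f ≠ 0 → μ 0 + μ 1 ≤ m := by
    intro μ hμ
    have := weight_le ![1, 1] f μ hμ
    rw [hdeg] at this
    simpa using this
  have hlt : ∀ μ, coeff μ f ≠ 0 → 1 ≤ μ 1 → μ 0 + μ 1 < m := by
    intro μ hμ h1
    refine lt_of_le_of_ne (hle μ hμ) fun heq => ?_
    have := hcw μ
    rw [if_pos (by simpa using heq), coeff_C_mul, coeff_X_pow, if_neg, mul_zero] at this
    · exact hμ this.symm
    · intro h
      rw [← h] at h1
      simp at h1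
  by_cases hy : ∀ μ, coeff μ f ≠ 0 → μ 1 = 0
  · exact inVar_of_X0 hy
  push Not at hy
  obtain ⟨μ0, hμ0, hμ01⟩ := hy
  -- choose the extremal monomial
  obtain ⟨ν, hνs, hνmin⟩ := (f.support.filter (fun μ => 1 ≤ μ 1)).exists_min_image
    (fun μ => (((m - μ 0 : ℕ) : ℚ)) / (μ 1 : ℚ))
    ⟨μ0, by simp [hμ0]; omega⟩
  rw [Finset.mem_filter, mem_support_iff] at hνs
  obtain ⟨hν, hν1⟩ := hνs
  have hνlt := hlt ν hν hν1
  obtain ⟨a, ha⟩ : ∃ a, a = ν 1 := ⟨_, rfl⟩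
  obtain ⟨b, hb⟩ : ∃ b, b = m - ν 0 := ⟨_, rfl⟩
  have hab : a < b := by omega
  have hslope : ∀ μ, coeff μ f ≠ 0 → a * μ 0 + b * μ 1 ≤ a * m := by
    intro μ hμ
    rcases Nat.eq_zero_or_pos (μ 1) with h1 | h1
    · rw [h1, mul_zero, add_zero]
      exact Nat.mul_le_mul_left a (by have := hle μ hμ; omega)
    · have h2 := hνmin μ (by rw [Finset.mem_filter, mem_support_iff]; exact ⟨hμ, h1⟩)
      rw [div_le_div_iff₀ (by exact_mod_cast hν1) (by exact_mod_cast h1)] at h2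
      have h3 : (m - ν 0) * μ 1 ≤ (m - μ 0) * ν 1 := by exact_mod_cast h2
      rw [← hb, ← ha] at h3
      have h4 := hlt μ hμ h1
      obtain ⟨r, hr⟩ : ∃ r, m = μ 0 + r := ⟨m - μ 0, by omega⟩
      rw [show m - μ 0 = r by omega] at h3
      rw [hr]
      nlinarith
  have ha1 : 1 ≤ a := by omega
  have hνw : a * ν 0 + b * ν 1 = a * m := by
    obtain ⟨r, hr⟩ : ∃ r, m = ν 0 + r := ⟨m - ν 0, by omega⟩
    rw [← ha, hb, show m - ν 0 = r by omega, hr]; ring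
  have hf0 : f ≠ 0 := by
    intro h; rw [h] at hν; simp at hν
  have hwdeg : (wdelta ![a, b] f).natDegree = a * m := by
    apply le_antisymm
    · obtain ⟨μ, hμ, hμw⟩ := exists_weight_eq ![a, b] f hf0
      rw [← hμw]
      simpa using hslope μ hμ
    · have := weight_le ![a, b] f (Finsupp.single 0 m) hfM
      simpa using this
  obtain ⟨θ, τ, c', n, hτ, hθ0, hθ, hc', hwinθ, hdv⟩ := lemma_W ![a, b]
    (by intro i; fin_cases i <;> simp <;> omega) P' Q' hconst' hg'
  obtain ⟨α, c1, c2, hbα, hc2, hθeq, hn⟩ := theta_shape ha1 hab hM1 hwdeg hfM ν hν hν1 hνw hτ hθ hc'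
    hwinθ (by simpa using hdv)
  obtain ⟨σ, hσ0, hσ1, hσθ⟩ := exists_elem c1 c2 hc2 α
  rw [← hθeq] at hσθ
  have hσg : GradedAut ![a, b] σ := by
    have hX0 : IsWeightedHomogeneous ![a, b] (X 0 : MvPolynomial (Fin 2) k) a :=
      isWeightedHomogeneous_X k ![a, b] 0
    have hX1 : IsWeightedHomogeneous ![a, b] (X 1 : MvPolynomial (Fin 2) k) b :=
      isWeightedHomogeneous_X k ![a, b] 1
    apply GradedAut.of_X
    intro i
    fin_cases i
    · show IsWeightedHomogeneous ![a, b] (σ (X 0)) a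
      rw [hσ0]; exact hX0
    · show IsWeightedHomogeneous ![a, b] (σ (X 1)) b
      rw [hσ1]
      refine (hX1.sub (IsWeightedHomogeneous.C_mul ?_ c1)).C_mul _
      have := hX0.pow α
      rwa [smul_eq_mul, mul_comm, ← hbα] at this
  apply InVar.of_map σ
  rw [hf, ← coeff_map_aut]
  refine ih _ ?_ _ _ (hg'.map σ) rfl
  rw [coeff_map_aut, ← hf]
  have hσf0 : σ f ≠ 0 := by
    intro h; exact hf0 (σ.injective (by rw [h, map_zero]))
  obtain ⟨μ, hμ, hμw⟩ := exists_weight_eq ![1, 1] (σ f) hσf0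
  rw [← hμw]
  have hμle := weight_le ![a, b] (σ f) μ hμ
  rw [hσg.natDegree, hwdeg] at hμle
  have hcw2 := coeff_wTopForm ![a, b] (σ f) μ
  rw [hσg.wTopForm, hσg.natDegree, hwdeg, hwinθ, map_mul, map_pow, hσθ,
    ← MvPolynomial.algebraMap_eq, AlgEquiv.commutes, MvPolynomial.algebraMap_eq, coeff_C_mul,
    coeff_X_pow] at hcw2
  simp at hμle ⊢
  rcases Nat.eq_zero_or_pos (μ 1) with h1 | h1
  · rw [h1, add_zero]
    rw [h1, mul_zero, add_zero] at hμle
    refine lt_of_le_of_ne (Nat.le_of_mul_le_mul_left hμle ha1) fun heq => ?_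
    have hne : ¬ Finsupp.single 1 n = μ := by
      intro h
      rw [← h] at h1
      simp at h1
      omega
    rw [if_neg hne, mul_zero, if_pos (by simp [h1, heq])] at hcw2
    exact hμ hcw2.symm
  · have : a * μ 1 < b * μ 1 := Nat.mul_lt_mul_of_pos_right hab h1
    refine Nat.lt_of_mul_lt_mul_left (a := a) ?_
    rw [mul_add]
    omega


lemma iota_X0 {k : Type*} [Field k] (n : ℕ) (h : MvPolynomial (Fin 3) k) :
    iotaModif k n h (X 0) = tModif k n h := by
  simp [iotaModif, tModif]

/-- The class of `u`. -/
def uModif (k : Type*) [Field k] (n : ℕ) (h : MvPolynomial (Fin 3) k) : ModifRing k n h :=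
  Ideal.Quotient.mk (Ideal.span {X 0 ^ n * X 1 - hEmb k h}) (X 1)

lemma mk_hEmb {k : Type*} [Field k] (n : ℕ) (h a : MvPolynomial (Fin 3) k) :
    Ideal.Quotient.mk (Ideal.span {X 0 ^ n * X 1 - hEmb k h}) (hEmb k a) = iotaModif k n h a := by
  have : (Ideal.Quotient.mkₐ k (Ideal.span {X 0 ^ n * X 1 - hEmb k h})).comp
      (aeval ![X 0, X 2, X 3]) = iotaModif k n h := by
    apply MvPolynomial.algHom_ext
    intro i
    fin_cases i <;> simp [iotaModif]
  exact DFunLike.congr_fun this a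

lemma t_pow_mul_u {k : Type*} [Field k] (n : ℕ) (h : MvPolynomial (Fin 3) k) :
    tModif k n h ^ n * uModif k n h = iotaModif k n h h := by
  rw [← mk_hEmb, tModif, uModif, ← map_pow, ← map_mul, Ideal.Quotient.mk_eq_mk_iff_sub_mem]
  exact Ideal.subset_span rfl

lemma modif_lift {k T : Type*} [Field k] [CommRing T] [Algebra k T] (n : ℕ)
    (h : MvPolynomial (Fin 3) k) (g : MvPolynomial (Fin 3) k →ₐ[k] T) (v : T)
    (hv : g (X 0) ^ n * v = g h) :
    ∃ G : ModifRing k n h →ₐ[k] T, (∀ a, G (iotaModif k n h a) = g a) ∧ G (uModif k n h) = v := by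
  let F : MvPolynomial (Fin 4) k →ₐ[k] T := aeval ![g (X 0), v, g (X 1), g (X 2)]
  have hF : ∀ a, F (hEmb k a) = g a := by
    have : F.comp (aeval ![X 0, X 2, X 3]) = g := by
      apply MvPolynomial.algHom_ext
      intro i
      fin_cases i <;> simp [F]
    exact fun a => DFunLike.congr_fun this a
  have hker : ∀ a ∈ Ideal.span {X 0 ^ n * X 1 - hEmb k h}, F a = 0 := by
    intro a ha
    obtain ⟨c, rfl⟩ := Ideal.mem_span_singleton.1 ha
    rw [map_mul, map_sub, hF, map_mul, map_pow]
    have h0 : F (X 0) = g (X 0) := by simp [F]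
    have h1 : F (X 1) = v := by simp [F]
    rw [h0, h1, hv, sub_self, zero_mul]
  refine ⟨Ideal.Quotient.liftₐ _ F hker, ?_, ?_⟩
  · intro a
    rw [← mk_hEmb]
    exact hF a
  · show F (X 1) = v
    simp [F]

lemma iota_injective {k : Type*} [Field k] (n : ℕ) (h : MvPolynomial (Fin 3) k) :
    Function.Injective (iotaModif k n h) := by
  let 𝓕 := FractionRing (MvPolynomial (Fin 3) k)
  let g : MvPolynomial (Fin 3) k →ₐ[k] 𝓕 := IsScalarTower.toAlgHom k _ _
  have hg : Function.Injective g := IsFractionRing.injective (MvPolynomial (Fin 3) k) 𝓕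
  have h0 : g (X 0) ^ n ≠ 0 := by
    apply pow_ne_zero
    rw [Ne, map_eq_zero_iff _ hg]
    exact X_ne_zero _
  obtain ⟨G, hG, _⟩ := modif_lift n h g (g h / g (X 0) ^ n) (mul_div_cancel₀ _ h0)
  intro a b hab
  apply hg
  rw [← hG, ← hG, hab]

lemma t_cancel {k : Type*} [Field k] (n : ℕ) (hn : 1 ≤ n) (h : MvPolynomial (Fin 3) k)
    (h0 : aeval ![(0 : MvPolynomial (Fin 2) k), X 0, X 1] h ≠ 0) (r : ModifRing k n h)
    (hr : tModif k n h * r = 0) : r = 0 := by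
  obtain ⟨s, rfl⟩ := Ideal.Quotient.mk_surjective r
  rw [tModif, ← map_mul, Ideal.Quotient.eq_zero_iff_mem, Ideal.mem_span_singleton] at hr
  rw [Ideal.Quotient.eq_zero_iff_mem, Ideal.mem_span_singleton]
  obtain ⟨c, hc⟩ := hr
  have hd : (X 0 : MvPolynomial (Fin 4) k) ∣ (X 0 ^ n * X 1 - hEmb k h) * c := ⟨s, hc.symm⟩
  rcases X_dvd_mul_iff.1 hd with ⟨b, hb⟩ | ⟨b, hb⟩
  · exfalso
    let F : MvPolynomial (Fin 4) k →ₐ[k] MvPolynomial (Fin 2) k := aeval ![0, 0, X 0, X 1]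
    have hF : F (hEmb k h) = aeval ![(0 : MvPolynomial (Fin 2) k), X 0, X 1] h := by
      have : F.comp (aeval ![X 0, X 2, X 3]) = aeval ![(0 : MvPolynomial (Fin 2) k), X 0, X 1] := by
        apply MvPolynomial.algHom_ext
        intro i
        fin_cases i <;> simp [F]
      exact DFunLike.congr_fun this h
    have h1 := congrArg F hb
    have hF0 : F (X 0) = 0 := by simp [F]
    rw [map_sub, hF, map_mul, map_pow, map_mul, hF0, zero_pow (by omega), zero_mul, zero_mul,
      zero_sub, neg_eq_zero] at h1
    exact h0 h1
  · refine ⟨b, ?_⟩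
    apply mul_left_cancel₀ (X_ne_zero (R := k) (0 : Fin 4))
    rw [hc, hb]; ring

lemma t_pow_cancel {k : Type*} [Field k] (n : ℕ) (hn : 1 ≤ n) (h : MvPolynomial (Fin 3) k)
    (h0 : aeval ![(0 : MvPolynomial (Fin 2) k), X 0, X 1] h ≠ 0) (N : ℕ) (r s : ModifRing k n h)
    (hr : tModif k n h ^ N * r = tModif k n h ^ N * s) : r = s := by
  have : ∀ (N : ℕ) (d : ModifRing k n h), tModif k n h ^ N * d = 0 → d = 0 := by
    intro N
    induction N with
    | zero => intro d hd; simpa using hd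
    | succ N ih =>
      intro d hd
      rw [pow_succ, mul_assoc] at hd
      exact t_cancel n hn h h0 _ (ih _ hd)
  have h1 := this N (r - s) (by rw [mul_sub, hr, sub_self])
  exact sub_eq_zero.1 h1

lemma exists_clear {k : Type*} [Field k] (n : ℕ) (h : MvPolynomial (Fin 3) k)
    (r : ModifRing k n h) : ∃ (N : ℕ) (a : MvPolynomial (Fin 3) k),
      tModif k n h ^ N * r = iotaModif k n h a := by
  obtain ⟨s, rfl⟩ := Ideal.Quotient.mk_surjective r
  induction s using MvPolynomial.induction_on with
  | C c =>
    refine ⟨0, C c, ?_⟩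
    rw [pow_zero, one_mul]
    exact ((iotaModif k n h).commutes c).symm
  | add p q hp hq =>
    obtain ⟨N, a, ha⟩ := hp
    obtain ⟨N', a', ha'⟩ := hq
    refine ⟨N + N', X 0 ^ N' * a + X 0 ^ N * a', ?_⟩
    rw [map_add, map_add, map_mul, map_mul, map_pow, map_pow, iota_X0, ← ha, ← ha']
    ring
  | mul_X p i hp =>
    obtain ⟨N, a, ha⟩ := hp
    have key : ∃ (M : ℕ) (b : MvPolynomial (Fin 3) k), tModif k n h ^ M *
        Ideal.Quotient.mk (Ideal.span {X 0 ^ n * X 1 - hEmb k h}) (X i) = iotaModif k n h b := by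
      fin_cases i
      · exact ⟨0, X 0, by rw [iota_X0, pow_zero, one_mul]; rfl⟩
      · exact ⟨n, h, t_pow_mul_u n h⟩
      · exact ⟨0, X 1, by simp [iotaModif]⟩
      · exact ⟨0, X 2, by simp [iotaModif]⟩
    obtain ⟨M, b, hb⟩ := key
    refine ⟨N + M, a * b, ?_⟩
    rw [map_mul, map_mul, ← ha, ← hb]
    ring

lemma dvd_of_iota_eq {k : Type*} [Field k] (n : ℕ) (h P : MvPolynomial (Fin 3) k)
    (r : ModifRing k n h) (hP : iotaModif k n h P = tModif k n h * r) :
    aeval ![(0 : MvPolynomial (Fin 2) k), X 0, X 1] h ∣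
      aeval ![(0 : MvPolynomial (Fin 2) k), X 0, X 1] P := by
  set h0 := aeval ![(0 : MvPolynomial (Fin 2) k), X 0, X 1] h with hh0
  let g : MvPolynomial (Fin 3) k →ₐ[k] MvPolynomial (Fin 2) k ⧸ Ideal.span {h0} :=
    (Ideal.Quotient.mkₐ k (Ideal.span {h0})).comp (aeval ![(0 : MvPolynomial (Fin 2) k), X 0, X 1])
  have hgh : g h = 0 := by
    show Ideal.Quotient.mk (Ideal.span {h0}) h0 = 0
    rw [Ideal.Quotient.eq_zero_iff_mem]
    exact Ideal.subset_span rfl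
  obtain ⟨G, hG, _⟩ := modif_lift n h g 0 (by rw [mul_zero, hgh])
  have h1 : g P = 0 := by
    rw [← hG, hP, map_mul, ← iota_X0, hG]
    have : g (X 0) = 0 := by simp [g]
    rw [this, zero_mul]
  have h2 : Ideal.Quotient.mk (Ideal.span {h0})
    (aeval ![(0 : MvPolynomial (Fin 2) k), X 0, X 1] P) = 0 := h1
  rwa [Ideal.Quotient.eq_zero_iff_mem, Ideal.mem_span_singleton] at h2

lemma mem_I_iff {k : Type*} [Field k] (n : ℕ) (h a : MvPolynomial (Fin 3) k) :
    a ∈ Ideal.span {X 0 ^ n, h} ↔ ∃ r, iotaModif k n h a = tModif k n h ^ n * r := by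
  constructor
  · intro ha
    obtain ⟨c, d, rfl⟩ := Ideal.mem_span_pair.1 ha
    refine ⟨iotaModif k n h c + iotaModif k n h d * uModif k n h, ?_⟩
    rw [map_add, map_mul, map_mul, map_pow, iota_X0, ← t_pow_mul_u]
    ring
  · rintro ⟨r, hr⟩
    set I : Ideal (MvPolynomial (Fin 3) k) := Ideal.span {X 0 ^ n, h} with hI
    have hgh : Ideal.Quotient.mkₐ k I h = 0 := by
      rw [Ideal.Quotient.mkₐ_eq_mk, Ideal.Quotient.eq_zero_iff_mem]
      exact Ideal.subset_span (by simp)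
    obtain ⟨G, hG, _⟩ := modif_lift n h (Ideal.Quotient.mkₐ k I) 0 (by rw [mul_zero, hgh])
    rw [← Ideal.Quotient.eq_zero_iff_mem]
    have h1 := hG a
    rw [hr, map_mul, ← iota_X0, ← map_pow, hG] at h1
    have h2 : Ideal.Quotient.mkₐ k I (X 0 ^ n) = 0 := by
      rw [Ideal.Quotient.mkₐ_eq_mk, Ideal.Quotient.eq_zero_iff_mem]
      exact Ideal.subset_span (by simp)
    rw [h2, zero_mul] at h1
    exact h1.symm

lemma InVar.of_dvd {k : Type*} [Field k] {f g : MvPolynomial (Fin 2) k} (hf : InVar f)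
    (hf0 : f ≠ 0) (hgf : g ∣ f) : InVar g := by
  obtain ⟨v, ⟨σ, hσ⟩, hv⟩ := hf
  apply InVar.of_map σ
  have h1 : σ f ∈ (Algebra.adjoin k {v}).map σ.toAlgHom := Subalgebra.mem_map.2 ⟨_, hv, rfl⟩
  rw [AlgHom.map_adjoin, Set.image_singleton] at h1
  have h2 : σ f ∈ supported k ({0} : Set (Fin 2)) := by
    rw [supported_eq_adjoin_X, Set.image_singleton, ← hσ]
    exact h1
  rw [mem_supported] at h2
  have h3 : degreeOf 1 (σ f) = 0 := by
    by_contra hne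
    have : (1 : Fin 2) ∈ (σ f).vars := by
      rw [mem_vars_iff_mem_support]
      rw [← Nat.le_zero, degreeOf_le_iff] at hne
      push Not at hne
      obtain ⟨m, hm, hm1⟩ := hne
      exact ⟨m, hm, by simp; omega⟩
    have := h2 this
    simp at this
  obtain ⟨c, rfl⟩ := hgf
  have hg0 : σ g ≠ 0 := by
    intro h; apply hf0
    rw [(map_eq_zero_iff σ σ.injective).1 h, zero_mul]
  have hc0 : σ c ≠ 0 := by
    intro h; apply hf0
    rw [(map_eq_zero_iff σ σ.injective).1 h, mul_zero]
  rw [map_mul, degreeOf_mul_eq hg0 hc0] at h3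
  have h4 : degreeOf 1 (σ g) = 0 := by omega
  rw [← Nat.le_zero, degreeOf_le_iff] at h4
  exact inVar_of_X0 fun m hm => Nat.le_zero.1 (h4 m (mem_support_iff.2 hm))


lemma finSucc_coeff_zero {k : Type*} [Field k] (a : MvPolynomial (Fin 3) k) :
    (finSuccEquiv k 2 a).coeff 0 = aeval ![(0 : MvPolynomial (Fin 2) k), X 0, X 1] a := by
  have : ((Polynomial.aeval (0 : MvPolynomial (Fin 2) k)).restrictScalars k).comp
      (finSuccEquiv k 2).toAlgHom = aeval ![(0 : MvPolynomial (Fin 2) k), X 0, X 1] := by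
    apply MvPolynomial.algHom_ext
    intro i
    refine Fin.cases ?_ (fun j => ?_) i
    · simp [finSuccEquiv_X_zero]
    · have := finSuccEquiv_X_succ (R := k) (j := j)
      simp only [AlgHom.comp_apply, AlgEquiv.toAlgHom_apply, this]
      fin_cases j <;> simp
  rw [← this, Polynomial.coeff_zero_eq_aeval_zero]
  rfl

/-- Images of two generators generate everything up to powers of `t`. -/
lemma gen_of_aut {k : Type*} [Field k] (n : ℕ) (h : MvPolynomial (Fin 3) k)
    (φ : ModifRing k n h ≃ₐ[k] ModifRing k n h) (hφ : φ (tModif k n h) = tModif k n h)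
    (i j : Fin 3) (hij : ∀ l : Fin 3, l = 0 ∨ l = i ∨ l = j) (a b : ℕ)
    (P Q : MvPolynomial (Fin 3) k)
    (hP : tModif k n h ^ a * φ (iotaModif k n h (X i)) = iotaModif k n h P)
    (hQ : tModif k n h ^ b * φ (iotaModif k n h (X j)) = iotaModif k n h Q) :
    Gen (finSuccEquiv k 2 P) (finSuccEquiv k 2 Q) := by
  set e := finSuccEquiv k 2 with he
  set ψ1 := Polynomial.eval₂RingHom (Polynomial.mapRingHom (C : k →+* MvPolynomial (Fin 2) k))
    (e P) with hψ1
  set W : Subsemiring (Polynomial (MvPolynomial (Fin 2) k)) :=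
    (Polynomial.eval₂RingHom ψ1 (e Q)).rangeS with hW
  have heX : e (X 0) = Polynomial.X := finSuccEquiv_X_zero
  have hWQ : e Q ∈ W := ⟨Polynomial.X, by simp⟩
  have hWψ : ∀ c, ψ1 c ∈ W := fun c => ⟨Polynomial.C c, by simp⟩
  have hWP : e P ∈ W := by
    have := hWψ Polynomial.X
    simpa [hψ1] using this
  have hWX : e (X 0) ∈ W := by
    have := hWψ (Polynomial.C Polynomial.X)
    rw [heX]
    simpa [hψ1] using this
  have hWC : ∀ c : k, e (C c) ∈ W := by
    intro c
    have := hWψ (Polynomial.C (Polynomial.C c))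
    have h2 : e (C c) = Polynomial.C (C c) := by
      rw [← MvPolynomial.algebraMap_eq, AlgEquiv.commutes]; rfl
    rw [h2]
    simpa [hψ1] using this
  have main : ∀ g : MvPolynomial (Fin 3) k, ∃ (M : ℕ) (s : MvPolynomial (Fin 3) k), e s ∈ W ∧
      tModif k n h ^ M * φ (iotaModif k n h g) = iotaModif k n h s := by
    intro g
    induction g using MvPolynomial.induction_on with
    | C c =>
      refine ⟨0, C c, hWC c, ?_⟩
      rw [pow_zero, one_mul, ← MvPolynomial.algebraMap_eq, AlgHom.commutes, AlgEquiv.commutes]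
    | add p q hp hq =>
      obtain ⟨M, s, hs, e1⟩ := hp
      obtain ⟨M', s', hs', e2⟩ := hq
      refine ⟨M + M', X 0 ^ M' * s + X 0 ^ M * s', ?_, ?_⟩
      · rw [map_add, map_mul, map_mul, map_pow, map_pow]
        exact W.add_mem (W.mul_mem (W.pow_mem hWX _) hs) (W.mul_mem (W.pow_mem hWX _) hs')
      · simp only [map_add, map_mul, map_pow]
        rw [iota_X0, ← e1, ← e2]
        ring
    | mul_X p l hp =>
      obtain ⟨M, s, hs, e1⟩ := hp
      have key : ∃ (M' : ℕ) (s' : MvPolynomial (Fin 3) k), e s' ∈ W ∧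
          tModif k n h ^ M' * φ (iotaModif k n h (X l)) = iotaModif k n h s' := by
        rcases hij l with rfl | rfl | rfl
        · exact ⟨0, X 0, hWX, by rw [pow_zero, one_mul, iota_X0, hφ]⟩
        · exact ⟨a, P, hWP, hP⟩
        · exact ⟨b, Q, hWQ, hQ⟩
      obtain ⟨M', s', hs', e2⟩ := key
      refine ⟨M + M', s * s', ?_, ?_⟩
      · rw [map_mul]; exact W.mul_mem hs hs'
      · simp only [map_mul]
        rw [← e1, ← e2]; ring
  intro f
  obtain ⟨N, g, hg⟩ := exists_clear n h (φ.symm (iotaModif k n h (e.symm (Polynomial.C f))))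
  obtain ⟨M, s, ⟨G, hG⟩, e1⟩ := main g
  have h1 := congrArg φ hg
  rw [map_mul, map_pow, hφ, AlgEquiv.apply_symm_apply] at h1
  rw [← h1, ← iota_X0, ← map_pow, ← map_pow, ← map_mul, ← map_mul] at e1
  have h2 := iota_injective n h e1
  refine ⟨M + N, G, ?_⟩
  have h3 := congrArg e h2
  rw [map_mul, map_mul, map_pow, map_pow, heX, AlgEquiv.apply_symm_apply, ← hG, ← mul_assoc,
    ← pow_add] at h3
  exact h3

lemma X0_dvd_of_ev {k : Type*} [Field k] (P : MvPolynomial (Fin 3) k)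
    (h : aeval ![(0 : MvPolynomial (Fin 2) k), X 0, X 1] P = 0) : ∃ P', P = X 0 * P' := by
  rw [← finSucc_coeff_zero] at h
  obtain ⟨q, hq⟩ := Polynomial.X_dvd_iff.2 h
  refine ⟨(finSuccEquiv k 2).symm q, ?_⟩
  apply (finSuccEquiv k 2).injective
  rw [map_mul, finSuccEquiv_X_zero, AlgEquiv.apply_symm_apply, hq]

lemma image_gen {k : Type*} [Field k] (n : ℕ) (hn : 1 ≤ n) (h : MvPolynomial (Fin 3) k)
    (hh : ¬ InVar (aeval ![(0 : MvPolynomial (Fin 2) k), X 0, X 1] h))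
    (h0 : aeval ![(0 : MvPolynomial (Fin 2) k), X 0, X 1] h ≠ 0)
    (φ : ModifRing k n h ≃ₐ[k] ModifRing k n h) (hφ : φ (tModif k n h) = tModif k n h)
    (i j : Fin 3) (hij : ∀ l : Fin 3, l = 0 ∨ l = i ∨ l = j) :
    ∃ P, φ (iotaModif k n h (X i)) = iotaModif k n h P := by
  classical
  have hex := exists_clear n h (φ (iotaModif k n h (X i)))
  obtain ⟨P, hP⟩ := Nat.find_spec hex
  have hmin := fun m => Nat.find_min hex (m := m)
  set a := Nat.find hex
  rcases Nat.eq_zero_or_pos a with ha | ha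
  · refine ⟨P, ?_⟩
    rw [ha, pow_zero, one_mul] at hP
    exact hP
  exfalso
  obtain ⟨b, Q, hQ⟩ := exists_clear n h (φ (iotaModif k n h (X j)))
  have hgen := gen_of_aut n h φ hφ i j hij a b P Q hP hQ
  have hin := key_theorem _ _ hgen
  rw [finSucc_coeff_zero] at hin
  obtain ⟨a', ha'⟩ : ∃ a', a = a' + 1 := ⟨a - 1, by omega⟩
  rw [ha', pow_succ', mul_assoc] at hP
  have hP0 : aeval ![(0 : MvPolynomial (Fin 2) k), X 0, X 1] P ≠ 0 := by
    intro hz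
    obtain ⟨P', rfl⟩ := X0_dvd_of_ev P hz
    refine hmin a' (by omega) ⟨P', ?_⟩
    rw [map_mul, iota_X0] at hP
    refine t_pow_cancel n hn h h0 1 _ _ ?_
    rw [pow_one]
    exact hP
  exact hh (hin.of_dvd hP0 (dvd_of_iota_eq n h P _ hP.symm))

lemma exists_restrict {k : Type*} [Field k] (n : ℕ) (hn : 1 ≤ n) (h : MvPolynomial (Fin 3) k)
    (hh : ¬ InVar (aeval ![(0 : MvPolynomial (Fin 2) k), X 0, X 1] h))
    (h0 : aeval ![(0 : MvPolynomial (Fin 2) k), X 0, X 1] h ≠ 0)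
    (φ : ModifRing k n h ≃ₐ[k] ModifRing k n h) (hφ : φ (tModif k n h) = tModif k n h) :
    ∃ ψ : MvPolynomial (Fin 3) k →ₐ[k] MvPolynomial (Fin 3) k,
      ∀ a, iotaModif k n h (ψ a) = φ (iotaModif k n h a) := by
  obtain ⟨P, hP⟩ := image_gen n hn h hh h0 φ hφ 1 2 (by decide)
  obtain ⟨Q, hQ⟩ := image_gen n hn h hh h0 φ hφ 2 1 (by decide)
  refine ⟨aeval ![X 0, P, Q], ?_⟩
  have : (iotaModif k n h).comp (aeval ![X 0, P, Q]) = φ.toAlgHom.comp (iotaModif k n h) := by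
    apply MvPolynomial.algHom_ext
    intro l
    fin_cases l
    · show iotaModif k n h (aeval ![X 0, P, Q] (X 0)) = φ (iotaModif k n h (X 0))
      rw [aeval_X, iota_X0, hφ]
      exact iota_X0 n h
    · show iotaModif k n h (aeval ![X 0, P, Q] (X 1)) = φ (iotaModif k n h (X 1))
      rw [aeval_X, hP]; rfl
    · show iotaModif k n h (aeval ![X 0, P, Q] (X 2)) = φ (iotaModif k n h (X 2))
      rw [aeval_X, hQ]; rfl
  exact fun a => DFunLike.congr_fun this a

lemma symm_fix {k : Type*} [Field k] {n : ℕ} {h : MvPolynomial (Fin 3) k}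
    {φ : ModifRing k n h ≃ₐ[k] ModifRing k n h} (hφ : φ (tModif k n h) = tModif k n h) :
    φ.symm (tModif k n h) = tModif k n h := φ.symm_apply_eq.mpr hφ.symm

lemma exists_restrict_equiv {k : Type*} [Field k] (n : ℕ) (hn : 1 ≤ n)
    (h : MvPolynomial (Fin 3) k)
    (hh : ¬ InVar (aeval ![(0 : MvPolynomial (Fin 2) k), X 0, X 1] h))
    (h0 : aeval ![(0 : MvPolynomial (Fin 2) k), X 0, X 1] h ≠ 0)
    (φ : ModifRing k n h ≃ₐ[k] ModifRing k n h) (hφ : φ (tModif k n h) = tModif k n h) :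
    ∃ ψ : MvPolynomial (Fin 3) k ≃ₐ[k] MvPolynomial (Fin 3) k, ψ ∈ autPolyTI k n h ∧
      ∀ a, iotaModif k n h (ψ a) = φ (iotaModif k n h a) := by
  obtain ⟨F, hF⟩ := exists_restrict n hn h hh h0 φ hφ
  obtain ⟨G, hG⟩ := exists_restrict n hn h hh h0 φ.symm (symm_fix hφ)
  have hinj := iota_injective n h
  have hFG : ∀ a, F (G a) = a := fun a => hinj (by rw [hF, hG, AlgEquiv.apply_symm_apply])
  have hGF : ∀ a, G (F a) = a := fun a => hinj (by rw [hG, hF, AlgEquiv.symm_apply_apply])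
  refine ⟨AlgEquiv.ofAlgHom F G (AlgHom.ext hFG) (AlgHom.ext hGF), ⟨?_, ?_⟩, hF⟩
  · show F (X 0) = X 0
    apply hinj
    rw [hF, iota_X0, hφ]
  · have hFI : ∀ a ∈ Ideal.span {X 0 ^ n, h}, F a ∈ Ideal.span {X 0 ^ n, h} := by
      intro a ha
      rw [mem_I_iff] at ha ⊢
      obtain ⟨r, hr⟩ := ha
      exact ⟨φ r, by rw [hF, hr, map_mul, map_pow, hφ]⟩
    have hGI : ∀ a ∈ Ideal.span {X 0 ^ n, h}, G a ∈ Ideal.span {X 0 ^ n, h} := by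
      intro a ha
      rw [mem_I_iff] at ha ⊢
      obtain ⟨r, hr⟩ := ha
      exact ⟨φ.symm r, by rw [hG, hr, map_mul, map_pow, symm_fix hφ]⟩
    ext x
    rw [Ideal.mem_map_of_equiv]
    constructor
    · rintro ⟨y, hy, rfl⟩
      exact hFI y hy
    · intro hx
      exact ⟨G x, hGI x hx, hFG x⟩

lemma exists_extend {k : Type*} [Field k] (n : ℕ) (h : MvPolynomial (Fin 3) k)
    (ψ : MvPolynomial (Fin 3) k ≃ₐ[k] MvPolynomial (Fin 3) k) (hψ : ψ ∈ autPolyTI k n h) :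
    ∃ Φ : ModifRing k n h →ₐ[k] ModifRing k n h,
      ∀ a, Φ (iotaModif k n h a) = iotaModif k n h (ψ a) := by
  obtain ⟨hψ0, hψI⟩ := hψ
  have h1 : ψ h ∈ Ideal.span {X 0 ^ n, h} := by
    rw [← hψI]
    exact Ideal.mem_map_of_mem _ (Ideal.subset_span (by simp))
  rw [mem_I_iff] at h1
  obtain ⟨r, hr⟩ := h1
  obtain ⟨G, hG, _⟩ := modif_lift n h ((iotaModif k n h).comp ψ.toAlgHom) r (by
    show iotaModif k n h (ψ (X 0)) ^ n * r = iotaModif k n h (ψ h)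
    rw [hψ0, hr, iota_X0])
  exact ⟨G, hG⟩

lemma hom_unique {k : Type*} [Field k] (n : ℕ) (hn : 1 ≤ n) (h : MvPolynomial (Fin 3) k)
    (h0 : aeval ![(0 : MvPolynomial (Fin 2) k), X 0, X 1] h ≠ 0)
    (F G : ModifRing k n h →ₐ[k] ModifRing k n h) (hF : F (tModif k n h) = tModif k n h)
    (hFG : ∀ a, F (iotaModif k n h a) = G (iotaModif k n h a)) (r : ModifRing k n h) :
    F r = G r := by
  have hGt : G (tModif k n h) = tModif k n h := by
    rw [← iota_X0, ← hFG, iota_X0, hF]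
  obtain ⟨N, a, ha⟩ := exists_clear n h r
  refine t_pow_cancel n hn h h0 N _ _ ?_
  have h1 := hFG a
  rw [← ha, map_mul, map_mul, map_pow, map_pow, hF, hGt] at h1
  exact h1

lemma exists_extend_equiv {k : Type*} [Field k] (n : ℕ) (hn : 1 ≤ n) (h : MvPolynomial (Fin 3) k)
    (h0 : aeval ![(0 : MvPolynomial (Fin 2) k), X 0, X 1] h ≠ 0)
    (ψ : MvPolynomial (Fin 3) k ≃ₐ[k] MvPolynomial (Fin 3) k) (hψ : ψ ∈ autPolyTI k n h) :
    ∃ φ : ModifRing k n h ≃ₐ[k] ModifRing k n h, φ ∈ autModifT k n h ∧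
      ∀ a, φ (iotaModif k n h a) = iotaModif k n h (ψ a) := by
  have hψi : ψ⁻¹ ∈ autPolyTI k n h := (autPolyTI k n h).inv_mem hψ
  obtain ⟨F, hF⟩ := exists_extend n h ψ hψ
  obtain ⟨G, hG⟩ := exists_extend n h ψ⁻¹ hψi
  have h1 : ∀ a, ψ (ψ⁻¹ a) = a := fun a => ψ.apply_symm_apply a
  have h2 : ∀ a, ψ⁻¹ (ψ a) = a := fun a => ψ.symm_apply_apply a
  have hFt : F (tModif k n h) = tModif k n h := by
    rw [← iota_X0, hF, hψ.1]
  have hGt : G (tModif k n h) = tModif k n h := by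
    rw [← iota_X0, hG, hψi.1]
  have hFG : F.comp G = AlgHom.id k _ := AlgHom.ext fun r =>
    hom_unique n hn h h0 (F.comp G) (AlgHom.id k _) (by simp [hFt, hGt])
      (fun a => by simp [hF, hG, h1]) r
  have hGF : G.comp F = AlgHom.id k _ := AlgHom.ext fun r =>
    hom_unique n hn h h0 (G.comp F) (AlgHom.id k _) (by simp [hFt, hGt])
      (fun a => by simp [hF, hG, h2]) r
  exact ⟨AlgEquiv.ofAlgHom F G hFG hGF, hFt, hF⟩

theorem aut_modification_lifting (k : Type*) [Field k] (n : ℕ) (hn : 1 ≤ n)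
    (h : MvPolynomial (Fin 3) k)
    (hh : ∀ w : MvPolynomial (Fin 2) k,
      (∃ σ : MvPolynomial (Fin 2) k ≃ₐ[k] MvPolynomial (Fin 2) k, σ w = X 0) →
      (aeval ![(0 : MvPolynomial (Fin 2) k), X 0, X 1] h) ∉ Algebra.adjoin k {w}) :
    (∀ φ : ModifRing k n h ≃ₐ[k] ModifRing k n h, φ (tModif k n h) = tModif k n h →
        Subalgebra.map φ.toAlgHom (iotaModif k n h).range = (iotaModif k n h).range) ∧
    (∃ E : autModifT k n h ≃* autPolyTI k n h,
        ∀ φ : autModifT k n h,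
          (iotaModif k n h).comp (E φ).1.toAlgHom = φ.1.toAlgHom.comp (iotaModif k n h)) := by
  have hh' : ¬ InVar (aeval ![(0 : MvPolynomial (Fin 2) k), X 0, X 1] h) := by
    rintro ⟨v, hv, hm⟩
    exact hh v hv hm
  have h0 : aeval ![(0 : MvPolynomial (Fin 2) k), X 0, X 1] h ≠ 0 := by
    intro h0
    apply hh (X 0) ⟨AlgEquiv.refl, rfl⟩
    rw [h0]
    exact Subalgebra.zero_mem _
  have hinj := iota_injective n h
  constructor
  · intro φ hφ
    obtain ⟨F, hF⟩ := exists_restrict n hn h hh' h0 φ hφ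
    obtain ⟨G, hG⟩ := exists_restrict n hn h hh' h0 φ.symm (symm_fix hφ)
    ext x
    constructor
    · rintro ⟨y, ⟨a, rfl⟩, rfl⟩
      exact ⟨F a, hF a⟩
    · rintro ⟨a, rfl⟩
      refine ⟨iotaModif k n h (G a), ⟨G a, rfl⟩, ?_⟩
      show φ (iotaModif k n h (G a)) = _
      rw [hG, AlgEquiv.apply_symm_apply]
      rfl
  · have hex : ∀ φ : autModifT k n h, ∃ ψ : autPolyTI k n h,
        ∀ a, iotaModif k n h (ψ.1 a) = φ.1 (iotaModif k n h a) := by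
      intro φ
      obtain ⟨ψ, hψ, hψa⟩ := exists_restrict_equiv n hn h hh' h0 φ.1 φ.2
      exact ⟨⟨ψ, hψ⟩, hψa⟩
    choose E hE using hex
    let F : autModifT k n h →* autPolyTI k n h := MonoidHom.mk' E (by
      intro φ φ'
      apply Subtype.ext
      apply AlgEquiv.ext
      intro a
      apply hinj
      rw [hE]
      show φ.1 (φ'.1 (iotaModif k n h a)) = iotaModif k n h ((E φ).1 ((E φ').1 a))
      rw [hE, hE])
    have hF : Function.Bijective F := by
      constructor
      · intro φ φ' heq
        have heq' : E φ = E φ' := heq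
        apply Subtype.ext
        apply AlgEquiv.ext
        intro r
        refine hom_unique n hn h h0 φ.1.toAlgHom φ'.1.toAlgHom φ.2 (fun a => ?_) r
        show φ.1 _ = φ'.1 _
        rw [← hE, ← hE, heq']
      · intro ψ
        obtain ⟨φ, hφ, hφa⟩ := exists_extend_equiv n hn h h0 ψ.1 ψ.2
        refine ⟨⟨φ, hφ⟩, ?_⟩
        apply Subtype.ext
        apply AlgEquiv.ext
        intro a
        apply hinj
        rw [← hφa]
        exact hE ⟨φ, hφ⟩ a
    refine ⟨MulEquiv.ofBijective F hF, fun φ => ?_⟩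
    exact AlgHom.ext fun a => hE φ a
end
end

section
/- Let k be a field, n ≥ 1 an integer, and h ∈ k[t,x,y] a polynomial such that h(0,x,y) ∈ k[x,y] does not belong to the subalgebra k[w] for any variable w of the k-algebra k[x,y]. Let R = k[t,u,x,y]/(tⁿ·u − h(t,x,y)), let ι : k[t,x,y] → R be the natural k-algebra homomorphism, and let I ⊂ k[t,x,y] be the ideal generated by tⁿ and h. Then for every f ∈ k[t,x,y], one has ι(f) ∈ tⁿ·R if and only if f ∈ I; equivalently, tⁿ·R ∩ ι(k[t,x,y]) = ι(I). -/
open MvPolynomial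

noncomputable section

variable (k : Type*) [Field k]

/-- **Lemma 4.1(3) (Blanc–van Santen).** Let `n ≥ 1` and `h ∈ k[t,x,y]` be such that
`h(0,x,y)` lies in `k[w]` for no variable `w` of `k[x,y]`. Then for every `f ∈ k[t,x,y]`,
`ι(f) ∈ tⁿ·R` if and only if `f` belongs to the ideal `I = (tⁿ, h)`;
equivalently `tⁿR ∩ ι(k[t,x,y]) = ι(I)`. -/
theorem tn_R_inter_polynomials (k : Type*) [Field k] (n : ℕ) (hn : 1 ≤ n)
    (h : MvPolynomial (Fin 3) k)
    (hh : ∀ w : MvPolynomial (Fin 2) k,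
      (∃ σ : MvPolynomial (Fin 2) k ≃ₐ[k] MvPolynomial (Fin 2) k, σ w = X 0) →
      (aeval ![(0 : MvPolynomial (Fin 2) k), X 0, X 1] h) ∉ Algebra.adjoin k {w}) :
    ∀ f : MvPolynomial (Fin 3) k,
      iotaModif k n h f ∈ Ideal.span {tModif k n h ^ n} ↔
        f ∈ Ideal.span {(X 0 : MvPolynomial (Fin 3) k) ^ n, h} := by
  intro f
  have key : ∀ g : MvPolynomial (Fin 3) k, iotaModif k n h g =
      Ideal.Quotient.mk (Ideal.span {X 0 ^ n * X 1 - hEmb k h}) (hEmb k g) := by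
    intro g
    have e : iotaModif k n h =
        (Ideal.Quotient.mkₐ k (Ideal.span {X 0 ^ n * X 1 - hEmb k h})).comp
          (aeval ![X 0, X 2, X 3]) := by
      apply MvPolynomial.algHom_ext
      intro i
      fin_cases i <;> simp [iotaModif]
    rw [e]
    rfl
  constructor
  · intro hf
    rw [Ideal.mem_span_singleton] at hf
    obtain ⟨c, hc⟩ := hf
    obtain ⟨a, rfl⟩ := Ideal.Quotient.mk_surjective c
    rw [key, tModif, ← map_pow, ← map_mul, Ideal.Quotient.eq,
      Ideal.mem_span_singleton] at hc
    obtain ⟨b, hb⟩ := hc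
    let ψ : MvPolynomial (Fin 4) k →ₐ[k] MvPolynomial (Fin 3) k :=
      aeval ![X 0, 0, X 1, X 2]
    have hψ : ∀ g, ψ (hEmb k g) = g := by
      intro g
      have e : ψ.comp (aeval ![X 0, X 2, X 3]) = AlgHom.id k (MvPolynomial (Fin 3) k) := by
        apply MvPolynomial.algHom_ext
        intro i
        fin_cases i <;> simp [ψ]
      exact DFunLike.congr_fun e g
    have h0 : ψ (X 0) = X 0 := by simp [ψ]
    have h1 : ψ (X 1) = 0 := by simp [ψ]
    have := congrArg ψ hb
    simp only [map_sub, map_mul, map_pow, hψ, h0, h1] at this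
    rw [Ideal.mem_span_pair]
    exact ⟨ψ a, -ψ b, by linear_combination -this⟩
  · intro hf
    rw [Ideal.mem_span_pair] at hf
    obtain ⟨a, b, rfl⟩ := hf
    have ht : iotaModif k n h (X 0) = tModif k n h := by simp [iotaModif, tModif]
    have h2 : iotaModif k n h h = tModif k n h ^ n *
        Ideal.Quotient.mk (Ideal.span {X 0 ^ n * X 1 - hEmb k h}) (X 1) := by
      rw [key, tModif, ← map_pow, ← map_mul, eq_comm, Ideal.Quotient.eq]
      exact Ideal.mem_span_singleton_self _
    rw [map_add, map_mul, map_mul, map_pow, ht, h2]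
    refine Ideal.add_mem _ (Ideal.mul_mem_left _ _ (Ideal.mem_span_singleton_self _))
      (Ideal.mul_mem_left _ _ (Ideal.mul_mem_right _ _ (Ideal.mem_span_singleton_self _)))
end
end

section
/- Let R be an integral domain, let S = R[x₁,…,xₙ] be the polynomial ring in n ≥ 1 variables over R, and let v ∈ S. Then the following are equivalent: (1) v is a variable of the R-algebra S, i.e., there exists an R-algebra automorphism f of S with f(v) = x₁; (2) the R[t]-algebra S[t]/(v − t) is isomorphic to a polynomial ring in n − 1 variables over R[t]. -/
open MvPolynomial

noncomputable section

/-- `S[t]/(v - t)` is isomorphic to `S`, the class of `t` going to `v`. -/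
lemma exists_quot_equiv (R S : Type*) [CommRing R] [CommRing S] [Algebra R S] (v : S) :
    ∃ a : (Polynomial S ⧸ Ideal.span {Polynomial.C v - Polynomial.X}) ≃ₐ[R] S,
      a (Ideal.Quotient.mk (Ideal.span {Polynomial.C v - Polynomial.X}) Polynomial.X) = v := by
  have h : Ideal.span {Polynomial.C v - Polynomial.X} =
      Ideal.span {Polynomial.X - Polynomial.C v} := by
    rw [← Ideal.span_singleton_neg, neg_sub]
  refine ⟨(Ideal.quotientEquivAlgOfEq R h).trans
    ((Polynomial.quotientSpanXSubCAlgEquiv v).restrictScalars R), ?_⟩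
  simp [Ideal.quotientEquivAlgOfEq_mk]

/-- `R[t][x₂,…,xₙ]` is isomorphic to `R[x₁,…,xₙ]`, with `t` going to `x₁`. -/
lemma exists_poly_equiv (R : Type*) [CommRing R] (n : ℕ) (hn : 0 < n) :
    ∃ b : MvPolynomial (Fin n) R ≃ₐ[R] MvPolynomial (Fin (n - 1)) (Polynomial R),
      b (X ⟨0, hn⟩) = MvPolynomial.C Polynomial.X := by
  obtain ⟨m, rfl⟩ : ∃ m, n = m + 1 := ⟨n - 1, by omega⟩
  refine ⟨(renameEquiv R (finSuccEquiv m)).trans (optionEquivRight R (Fin m)), ?_⟩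
  simp

/-- **Lemma 3.3 (Blanc–van Santen).** Let `R` be an integral domain, `S = R[x₁,…,xₙ]` and
`v ∈ S`. Then `v` is a variable of the `R`-algebra `S` (some `R`-algebra automorphism sends
`v` to `x₁`) if and only if the `R[t]`-algebra `S[t]/(v − t)` is isomorphic to a polynomial
ring in `n − 1` variables over `R[t]` (an `R`-algebra isomorphism mapping the class of `t`
to `t`). -/
theorem variable_iff_quotient_polynomial_ring
    (R : Type*) [CommRing R] [IsDomain R] (n : ℕ) (hn : 0 < n)
    (v : MvPolynomial (Fin n) R) :
    (∃ f : MvPolynomial (Fin n) R ≃ₐ[R] MvPolynomial (Fin n) R, f v = X ⟨0, hn⟩) ↔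
    (∃ e : (Polynomial (MvPolynomial (Fin n) R) ⧸
              Ideal.span {Polynomial.C v - Polynomial.X}) ≃ₐ[R]
            MvPolynomial (Fin (n - 1)) (Polynomial R),
        e (Ideal.Quotient.mk (Ideal.span {Polynomial.C v - Polynomial.X}) Polynomial.X) =
          MvPolynomial.C Polynomial.X) := by
  obtain ⟨a, ha⟩ := exists_quot_equiv R (MvPolynomial (Fin n) R) v
  obtain ⟨b, hb⟩ := exists_poly_equiv R n hn
  constructor
  · rintro ⟨f, hf⟩
    refine ⟨(a.trans f).trans b, ?_⟩
    rw [AlgEquiv.trans_apply, AlgEquiv.trans_apply, ha, hf, hb]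
  · rintro ⟨e, he⟩
    refine ⟨(a.symm.trans e).trans b.symm, ?_⟩
    have h1 := (AlgEquiv.symm_apply_eq a).mpr ha.symm
    rw [AlgEquiv.trans_apply, AlgEquiv.trans_apply, h1, he, ← hb, AlgEquiv.symm_apply_apply]
end
end

section
/- Let k be a field, p ∈ k[t] an irreducible polynomial, and k_p = k[t]/(p) the residue field. Let u, v ∈ k[t][x,y] be such that the k(t)-subalgebra of k(t)[x,y] generated by u and v equals k(t)[x,y]. Then the Jacobian determinant ν = (∂u/∂x)(∂v/∂y) − (∂u/∂y)(∂v/∂x) is a nonzero element of k[t], and the classes u₀, v₀ ∈ k_p[x,y] of u, v (obtained by reducing coefficients modulo p) satisfy: (1) if p divides ν, then u₀ and v₀ are algebraically dependent over k_p; (2) if p does not divide ν, then the k_p-subalgebra of k_p[x,y] generated by u₀ and v₀ equals k_p[x,y]; in particular both u₀ and v₀ are variables of the k_p-algebra k_p[x,y]. -/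
open MvPolynomial

noncomputable section

lemma chain_rule_two {R : Type*} [CommRing R] (w : Fin 2 → MvPolynomial (Fin 2) R) (i : Fin 2)
    (F : MvPolynomial (Fin 2) R) :
    pderiv i (aeval w F) =
      aeval w (pderiv 0 F) * pderiv i (w 0) + aeval w (pderiv 1 F) * pderiv i (w 1) := by
  induction F using MvPolynomial.induction_on with
  | C a => simp [MvPolynomial.algebraMap_eq]
  | add f g hf hg => simp only [map_add, hf, hg]; ring
  | mul_X f j hf =>
    simp only [map_mul, aeval_X, pderiv_mul, hf, map_add]
    fin_cases j <;> simp [pderiv_X] <;> ring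

lemma exists_aeval_of_adjoin_pair {R : Type*} [CommRing R] (u v : MvPolynomial (Fin 2) R)
    (h : Algebra.adjoin R {u, v} = (⊤ : Subalgebra R (MvPolynomial (Fin 2) R)))
    (g : MvPolynomial (Fin 2) R) : ∃ P : MvPolynomial (Fin 2) R, aeval ![u, v] P = g := by
  have hr : Set.range ![u, v] = {u, v} := by
    ext z; simp [eq_comm, or_comm]
  have : g ∈ Algebra.adjoin R (Set.range ![u, v]) := by rw [hr, h]; trivial
  rw [Algebra.adjoin_range_eq_range_aeval] at this
  exact this

lemma adjoin_pair_of_X {R : Type*} [CommRing R] (u v : MvPolynomial (Fin 2) R)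
    (h : ∀ i : Fin 2, ∃ P : MvPolynomial (Fin 2) R, aeval ![u, v] P = (X i : MvPolynomial (Fin 2) R)) :
    Algebra.adjoin R {u, v} = (⊤ : Subalgebra R (MvPolynomial (Fin 2) R)) := by
  have hr : Set.range ![u, v] = {u, v} := by
    ext z; simp [eq_comm, or_comm]
  rw [← hr, Algebra.adjoin_range_eq_range_aeval, eq_top_iff, ← MvPolynomial.adjoin_range_X]
  refine Algebra.adjoin_le ?_
  rintro _ ⟨i, rfl⟩
  exact h i

lemma jac_isUnit {R : Type*} [CommRing R] (u v : MvPolynomial (Fin 2) R)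
    (h : Algebra.adjoin R {u, v} = (⊤ : Subalgebra R (MvPolynomial (Fin 2) R))) :
    IsUnit (pderiv 0 u * pderiv 1 v - pderiv 1 u * pderiv 0 v) := by
  obtain ⟨P, hP⟩ := exists_aeval_of_adjoin_pair u v h (X 0)
  obtain ⟨Q, hQ⟩ := exists_aeval_of_adjoin_pair u v h (X 1)
  have e00 := chain_rule_two ![u, v] 0 P
  have e10 := chain_rule_two ![u, v] 1 P
  have e01 := chain_rule_two ![u, v] 0 Q
  have e11 := chain_rule_two ![u, v] 1 Q
  rw [hP] at e00 e10
  rw [hQ] at e01 e11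
  simp [pderiv_X, -aeval_eq_bind₁] at e00 e10 e01 e11
  refine IsUnit.of_mul_eq_one (aeval ![u, v] (pderiv 0 P) * aeval ![u, v] (pderiv 1 Q) -
    aeval ![u, v] (pderiv 1 P) * aeval ![u, v] (pderiv 0 Q)) ?_
  set a := aeval ![u, v] (pderiv 0 P)
  set b := aeval ![u, v] (pderiv 1 P)
  set c := aeval ![u, v] (pderiv 0 Q)
  set d := aeval ![u, v] (pderiv 1 Q)
  calc _ = (a * pderiv 0 u + b * pderiv 0 v) * (c * pderiv 1 u + d * pderiv 1 v)
        - (a * pderiv 1 u + b * pderiv 1 v) * (c * pderiv 0 u + d * pderiv 0 v) := by ring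
    _ = 1 := by rw [← e00, ← e10, ← e01, ← e11]; ring

/-- Taylor expansion to first order at the origin along the scaling `x ↦ T x`. -/
lemma scale_expand {K : Type*} [CommRing K] (f : MvPolynomial (Fin 2) K) :
    ∃ w : Polynomial (MvPolynomial (Fin 2) K),
      aeval (fun i => Polynomial.X * Polynomial.C (X i : MvPolynomial (Fin 2) K)) f =
        Polynomial.C (C (constantCoeff f)) +
        Polynomial.X * (Polynomial.C (C (constantCoeff (pderiv 0 f)) * X 0 +
          C (constantCoeff (pderiv 1 f)) * X 1) + Polynomial.X * w) := by
  induction f using MvPolynomial.induction_on with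
  | C a =>
    refine ⟨0, ?_⟩
    simp [Polynomial.algebraMap_apply, MvPolynomial.algebraMap_eq]
  | add f g hf hg =>
    obtain ⟨a, ha⟩ := hf
    obtain ⟨b, hb⟩ := hg
    refine ⟨a + b, ?_⟩
    simp only [map_add, ha, hb, map_mul]
    ring
  | mul_X f j hf =>
    obtain ⟨a, ha⟩ := hf
    refine ⟨(Polynomial.C (C (constantCoeff (pderiv 0 f)) * X 0 +
          C (constantCoeff (pderiv 1 f)) * X 1) + Polynomial.X * a) * Polynomial.C (X j), ?_⟩
    rw [map_mul, ha, aeval_X]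
    fin_cases j <;> simp [pderiv_X] <;> ring

lemma jac_inj {K : Type*} [Field K] (u : Fin 2 → MvPolynomial (Fin 2) K)
    (hdet : constantCoeff (pderiv 0 (u 0)) * constantCoeff (pderiv 1 (u 1)) -
      constantCoeff (pderiv 1 (u 0)) * constantCoeff (pderiv 0 (u 1)) ≠ 0)
    (F : MvPolynomial (Fin 2) K) (hF : aeval u F = 0) : F = 0 := by
  choose w hw using fun i => scale_expand (u i)
  by_contra hne
  -- linear parts
  let l : Fin 2 → MvPolynomial (Fin 2) K := fun i =>
    C (constantCoeff (pderiv 0 (u i))) * X 0 + C (constantCoeff (pderiv 1 (u i))) * X 1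
  let ψ : MvPolynomial (Fin 2) K →ₐ[K] Polynomial (MvPolynomial (Fin 2) K) :=
    aeval (fun i => Polynomial.X * Polynomial.C (X i : MvPolynomial (Fin 2) K))
  let ψ' : MvPolynomial (Fin 2) K →ₐ[K] Polynomial (MvPolynomial (Fin 2) K) :=
    aeval (fun i => Polynomial.C (C (constantCoeff (u i))) +
      Polynomial.X * Polynomial.C (X i : MvPolynomial (Fin 2) K))
  let θ : MvPolynomial (Fin 2) K →ₐ[K] Polynomial (MvPolynomial (Fin 2) K) :=
    aeval (fun i => Polynomial.C (l i) + Polynomial.X * w i)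
  let Θ : Polynomial (MvPolynomial (Fin 2) K) →+* Polynomial (MvPolynomial (Fin 2) K) :=
    Polynomial.eval₂RingHom θ.toRingHom Polynomial.X
  have h1 : ∀ G, Θ (ψ' G) = ψ (aeval u G) := by
    intro G
    induction G using MvPolynomial.induction_on with
    | C a => simp [Θ, ψ', ψ, θ, Polynomial.algebraMap_apply, MvPolynomial.algebraMap_eq]
    | add f g hf hg => simp only [map_add, hf, hg]
    | mul_X f j hf =>
      rw [map_mul, map_mul, hf, map_mul, map_mul]
      congr 1
      simp only [ψ, ψ', aeval_X, hw]
      simp [Θ, θ, l, Polynomial.algebraMap_apply, MvPolynomial.algebraMap_eq]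
      ring
  have h2 : ψ' F ≠ 0 := by
    intro h0
    apply hne
    have : ∀ G, aeval (fun i => X i - C (constantCoeff (u i)))
        (Polynomial.eval 1 (ψ' G)) = G := by
      intro G
      induction G using MvPolynomial.induction_on with
      | C a => simp [ψ', Polynomial.algebraMap_apply, MvPolynomial.algebraMap_eq]
      | add f g hf hg => simp only [map_add, Polynomial.eval_add, hf, hg]
      | mul_X f j hf =>
        rw [map_mul, Polynomial.eval_mul, map_mul, hf]
        simp [ψ', MvPolynomial.algebraMap_eq]
    rw [← this F, h0]
    simp
  obtain ⟨H, hH, hnd⟩ := Polynomial.exists_eq_pow_rootMultiplicity_mul_and_not_dvd _ h2 0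
  rw [map_zero, sub_zero] at hH hnd
  have h3 : Θ (ψ' F) = 0 := by rw [h1, hF, map_zero]
  rw [hH, map_mul, map_pow] at h3
  have hX : Θ Polynomial.X = Polynomial.X := by simp [Θ]
  rw [hX] at h3
  have h4 : Θ H = 0 := (mul_eq_zero.mp h3).resolve_left (pow_ne_zero _ Polynomial.X_ne_zero)
  have h5 : ∀ G : Polynomial (MvPolynomial (Fin 2) K),
      Polynomial.eval 0 (Θ G) = aeval l (Polynomial.eval 0 G) := by
    intro G
    induction G using Polynomial.induction_on' with
    | add f g hf hg => simp only [map_add, Polynomial.eval_add, hf, hg]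
    | monomial n a =>
      have ha : Polynomial.eval 0 (θ a) = aeval l a := by
        induction a using MvPolynomial.induction_on with
        | C a => simp [θ, Polynomial.algebraMap_apply, MvPolynomial.algebraMap_eq]
        | add f g hf hg => simp only [map_add, Polynomial.eval_add, hf, hg]
        | mul_X f j hf => rw [map_mul, Polynomial.eval_mul, map_mul, hf]; simp [θ]
      simp [Θ, Polynomial.eval_monomial, ha]
  have h6 : aeval l (Polynomial.eval 0 H) = 0 := by rw [← h5, h4, Polynomial.eval_zero]
  apply hnd
  rw [Polynomial.X_dvd_iff, Polynomial.coeff_zero_eq_eval_zero]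
  set a := constantCoeff (pderiv 0 (u 0)) with ha
  set b := constantCoeff (pderiv 1 (u 0)) with hb
  set c := constantCoeff (pderiv 0 (u 1)) with hc
  set d := constantCoeff (pderiv 1 (u 1)) with hd
  let e := (a * d - b * c)⁻¹
  have he : e * (a * d - b * c) = 1 := inv_mul_cancel₀ hdet
  have heC : C e * (C a * C d - C b * C c) = (1 : MvPolynomial (Fin 2) K) := by
    rw [← C_mul, ← C_mul, ← C_sub, ← C_mul, he, C_1]
  let M : MvPolynomial (Fin 2) K →ₐ[K] MvPolynomial (Fin 2) K :=
    aeval ![C e * (C d * X 0 - C b * X 1), C e * (C a * X 1 - C c * X 0)]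
  have h7 : M.comp (aeval l) = AlgHom.id K _ := by
    apply MvPolynomial.algHom_ext
    intro i
    fin_cases i
    · simp [M, l, ← ha, ← hb, MvPolynomial.algebraMap_eq]
      linear_combination (X 0) * heC
    · simp [M, l, ← hc, ← hd, MvPolynomial.algebraMap_eq]
      linear_combination (X 1) * heC
  have h8 := congrArg (fun f => f (Polynomial.eval 0 H)) h7
  simp only [AlgHom.comp_apply, h6, map_zero, AlgHom.id_apply] at h8
  exact h8.symm

lemma clear_denoms {A K : Type*} [CommRing A] [IsDomain A] [Field K] [Algebra A K]
    [IsFractionRing A K] (P : MvPolynomial (Fin 2) K) :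
    ∃ b : A, b ≠ 0 ∧ ∃ P' : MvPolynomial (Fin 2) A,
      MvPolynomial.map (algebraMap A K) P' = C (algebraMap A K b) * P := by
  induction P using MvPolynomial.induction_on with
  | C a =>
    obtain ⟨x, y, hy, rfl⟩ := IsFractionRing.div_surjective (A := A) a
    have hy0 : y ≠ 0 := nonZeroDivisors.ne_zero hy
    refine ⟨y, hy0, C x, ?_⟩
    have : algebraMap A K y ≠ 0 := by
      simpa using hy0
    rw [map_C, ← map_mul, mul_div_cancel₀ _ this]
  | add f g hf hg =>
    obtain ⟨b, hb, P, hP⟩ := hf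
    obtain ⟨c, hc, Q, hQ⟩ := hg
    refine ⟨b * c, mul_ne_zero hb hc, C c * P + C b * Q, ?_⟩
    simp only [map_add, map_mul, map_C, hP, hQ]
    ring
  | mul_X f j hf =>
    obtain ⟨b, hb, P, hP⟩ := hf
    exact ⟨b, hb, P * X j, by rw [map_mul, hP, map_X, mul_assoc]⟩

lemma map_aeval_pair {A B : Type*} [CommRing A] [CommRing B] (q : A →+* B)
    (u v P : MvPolynomial (Fin 2) A) :
    MvPolynomial.map q (aeval ![u, v] P) =
      aeval ![MvPolynomial.map q u, MvPolynomial.map q v] (MvPolynomial.map q P) := by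
  induction P using MvPolynomial.induction_on with
  | C a => simp [MvPolynomial.algebraMap_eq]
  | add f g hf hg => simp only [map_add, hf, hg]
  | mul_X f j hf =>
    rw [map_mul, map_mul, hf, map_mul, map_mul]
    fin_cases j <;> simp

lemma reduction_step {A B : Type*} [CommRing A] [IsDomain A] [Field B] (q : A →+* B) (p : A)
    (hp0 : p ≠ 0) (hq : ∀ r, q r = 0 ↔ p ∣ r) (u v : MvPolynomial (Fin 2) A)
    (hind : ∀ F : MvPolynomial (Fin 2) B, aeval ![MvPolynomial.map q u, MvPolynomial.map q v] F = 0 → F = 0)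
    (g : MvPolynomial (Fin 2) A) (s : A) (hs : ¬ p ∣ s) (n : ℕ) :
    ∀ P : MvPolynomial (Fin 2) A, C (p ^ n * s) * g = aeval ![u, v] P →
      ∃ Q : MvPolynomial (Fin 2) B, aeval ![MvPolynomial.map q u, MvPolynomial.map q v] Q = MvPolynomial.map q g := by
  induction n with
  | zero =>
    intro P hP
    have hs' : q s ≠ 0 := fun h => hs ((hq s).1 h)
    refine ⟨C (q s)⁻¹ * MvPolynomial.map q P, ?_⟩
    rw [map_mul, ← map_aeval_pair, ← hP, pow_zero, one_mul, map_mul, map_C, aeval_C,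
      MvPolynomial.algebraMap_eq, ← mul_assoc, ← map_mul, inv_mul_cancel₀ hs', map_one, one_mul]
  | succ n ih =>
    intro P hP
    have hqp : q p = 0 := (hq p).2 dvd_rfl
    have h0 : MvPolynomial.map q P = 0 := by
      apply hind
      rw [← map_aeval_pair, ← hP, map_mul, map_C, map_mul, map_pow, hqp]
      simp
    obtain ⟨P', rfl⟩ := (C_dvd_iff_map_hom_eq_zero q p hq P).2 h0
    apply ih P'
    have hC : (C p : MvPolynomial (Fin 2) A) ≠ 0 := by simpa using hp0
    apply mul_left_cancel₀ hC
    rw [map_mul (aeval ![u, v]), aeval_C, MvPolynomial.algebraMap_eq] at hP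
    rw [← hP, ← mul_assoc, ← map_mul]
    congr 2
    ring

lemma adjoin_reduction {A K B : Type*} [CommRing A] [IsDomain A] [WfDvdMonoid A]
    [Field K] [Algebra A K]
    [IsFractionRing A K] [Field B] (q : A →+* B) (p : A)
    (hp : Irreducible p) (hq : ∀ r, q r = 0 ↔ p ∣ r) (u v : MvPolynomial (Fin 2) A)
    (huv : Algebra.adjoin K {MvPolynomial.map (algebraMap A K) u,
         MvPolynomial.map (algebraMap A K) v} = (⊤ : Subalgebra K (MvPolynomial (Fin 2) K)))
    (hind : ∀ F : MvPolynomial (Fin 2) B, aeval ![MvPolynomial.map q u, MvPolynomial.map q v] F = 0 → F = 0) :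
    Algebra.adjoin B {MvPolynomial.map q u, MvPolynomial.map q v} =
      (⊤ : Subalgebra B (MvPolynomial (Fin 2) B)) := by
  apply adjoin_pair_of_X
  intro i
  obtain ⟨P, hP⟩ := exists_aeval_of_adjoin_pair _ _ huv (X i)
  obtain ⟨b, hb, P', hP'⟩ := clear_denoms (A := A) P
  have hinj : Function.Injective (MvPolynomial.map (σ := Fin 2) (algebraMap A K)) :=
    map_injective _ (IsFractionRing.injective A K)
  have key : C b * X i = aeval ![u, v] P' := by
    apply hinj
    rw [map_aeval_pair, hP', map_mul, map_mul, hP, map_C, map_X, aeval_C,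
      MvPolynomial.algebraMap_eq]
  obtain ⟨n, s, hs, rfl⟩ := WfDvdMonoid.max_power_factor hb hp
  obtain ⟨Q, hQ⟩ := reduction_step q p hp.ne_zero hq u v hind (X i) s hs n P' key
  exact ⟨Q, by rw [hQ, map_X]⟩

lemma exists_coordinate_of_gen {B : Type*} [Field B] (u v : MvPolynomial (Fin 2) B)
    (hind : ∀ F : MvPolynomial (Fin 2) B, aeval ![u, v] F = 0 → F = 0)
    (h : Algebra.adjoin B {u, v} = (⊤ : Subalgebra B (MvPolynomial (Fin 2) B))) :
    (∃ σ : MvPolynomial (Fin 2) B ≃ₐ[B] MvPolynomial (Fin 2) B, σ u = X 0) ∧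
    (∃ σ : MvPolynomial (Fin 2) B ≃ₐ[B] MvPolynomial (Fin 2) B, σ v = X 0) := by
  let e : MvPolynomial (Fin 2) B ≃ₐ[B] MvPolynomial (Fin 2) B :=
    AlgEquiv.ofBijective (aeval ![u, v])
      ⟨(injective_iff_map_eq_zero _).2 hind, exists_aeval_of_adjoin_pair u v h⟩
  have h0 : e (X 0) = u := by simp [e]
  have h1 : e (X 1) = v := by simp [e]
  refine ⟨⟨e.symm, ?_⟩, ⟨e.symm.trans (renameEquiv B (Equiv.swap 0 1)), ?_⟩⟩
  · rw [← h0, AlgEquiv.symm_apply_apply]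
  · rw [← h1, AlgEquiv.trans_apply, AlgEquiv.symm_apply_apply]
    simp

/-- **Lemma 3.6 (Blanc–van Santen).** Let `p ∈ k[t]` be irreducible, `k_p = k[t]/(p)`, and
let `u, v ∈ k[t][x,y]` generate `k(t)[x,y]` as a `k(t)`-algebra. Then the Jacobian
determinant `ν = u_x v_y − u_y v_x` is (the constant polynomial attached to) a nonzero
element of `k[t]`, and the reductions `u₀, v₀ ∈ k_p[x,y]` satisfy: if `p ∣ ν` then `u₀, v₀`
are algebraically dependent over `k_p`, and if `p ∤ ν` then `u₀, v₀` generate `k_p[x,y]`,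
so in particular both are variables of the `k_p`-algebra `k_p[x,y]`. -/
theorem jacobian_and_reduction_mod_p
    (k : Type*) [Field k] (p : Polynomial k) (hp : Irreducible p)
    (u v : MvPolynomial (Fin 2) (Polynomial k))
    (huv : Algebra.adjoin (RatFunc k)
        {MvPolynomial.map (algebraMap (Polynomial k) (RatFunc k)) u,
         MvPolynomial.map (algebraMap (Polynomial k) (RatFunc k)) v} =
      (⊤ : Subalgebra (RatFunc k) (MvPolynomial (Fin 2) (RatFunc k)))) :
    ∃ c : Polynomial k, c ≠ 0 ∧
      pderiv 0 u * pderiv 1 v - pderiv 1 u * pderiv 0 v = MvPolynomial.C c ∧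
      (p ∣ c →
        ∃ F : MvPolynomial (Fin 2) (Polynomial k ⧸ Ideal.span {p}), F ≠ 0 ∧
          aeval ![MvPolynomial.map (Ideal.Quotient.mk (Ideal.span {p})) u,
                  MvPolynomial.map (Ideal.Quotient.mk (Ideal.span {p})) v] F = 0) ∧
      (¬ p ∣ c →
        Algebra.adjoin (Polynomial k ⧸ Ideal.span {p})
            {MvPolynomial.map (Ideal.Quotient.mk (Ideal.span {p})) u,
             MvPolynomial.map (Ideal.Quotient.mk (Ideal.span {p})) v} =
          (⊤ : Subalgebra (Polynomial k ⧸ Ideal.span {p})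
                  (MvPolynomial (Fin 2) (Polynomial k ⧸ Ideal.span {p}))) ∧
        (∃ σ : MvPolynomial (Fin 2) (Polynomial k ⧸ Ideal.span {p}) ≃ₐ[Polynomial k ⧸ Ideal.span {p}]
              MvPolynomial (Fin 2) (Polynomial k ⧸ Ideal.span {p}),
            σ (MvPolynomial.map (Ideal.Quotient.mk (Ideal.span {p})) u) = X 0) ∧
        (∃ σ : MvPolynomial (Fin 2) (Polynomial k ⧸ Ideal.span {p}) ≃ₐ[Polynomial k ⧸ Ideal.span {p}]
              MvPolynomial (Fin 2) (Polynomial k ⧸ Ideal.span {p}),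
            σ (MvPolynomial.map (Ideal.Quotient.mk (Ideal.span {p})) v) = X 0)) := by
  have hinj : Function.Injective
      (MvPolynomial.map (σ := Fin 2) (algebraMap (Polynomial k) (RatFunc k))) :=
    map_injective _ (IsFractionRing.injective _ _)
  have hmax : (Ideal.span {p}).IsMaximal :=
    PrincipalIdealRing.isMaximal_of_irreducible hp
  let _ : Field (Polynomial k ⧸ Ideal.span {p}) := Ideal.Quotient.field _
  have hq : ∀ r, Ideal.Quotient.mk (Ideal.span {p}) r = 0 ↔ p ∣ r := fun r => by
    rw [Ideal.Quotient.eq_zero_iff_mem, Ideal.mem_span_singleton]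
  set J := pderiv 0 u * pderiv 1 v - pderiv 1 u * pderiv 0 v with hJ
  have hJmap : ∀ {B : Type _} [CommRing B] (q : Polynomial k →+* B),
      pderiv 0 (MvPolynomial.map q u) * pderiv 1 (MvPolynomial.map q v) -
      pderiv 1 (MvPolynomial.map q u) * pderiv 0 (MvPolynomial.map q v) =
        MvPolynomial.map q J := by
    intro B _ q
    simp only [hJ, map_sub, map_mul, pderiv_map]
  have hunit := jac_isUnit _ _ huv
  rw [hJmap] at hunit
  obtain ⟨r, hr, hJr⟩ := isUnit_iff_eq_C_of_isReduced.1 hunit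
  have hrc : algebraMap (Polynomial k) (RatFunc k) (coeff 0 J) = r := by
    have := congrArg (coeff 0) hJr
    simpa [coeff_map] using this
  have hJC : J = C (coeff 0 J) := by
    apply hinj
    rw [map_C, hrc, hJr]
  refine ⟨coeff 0 J, ?_, hJC, ?_, ?_⟩
  · intro h0
    rw [h0, map_zero] at hrc
    exact hr.ne_zero hrc.symm
  · intro hdvd
    by_contra hno
    push Not at hno
    have hgen := adjoin_reduction (K := RatFunc k) (Ideal.Quotient.mk (Ideal.span {p})) p hp hq u v
      huv (fun F hF => by
        by_contra hne
        exact hno F hne hF)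
    have hun := jac_isUnit _ _ hgen
    rw [hJmap, hJC, map_C, (hq _).2 hdvd, map_zero] at hun
    exact not_isUnit_zero hun
  · intro hndvd
    have hind := jac_inj ![MvPolynomial.map (Ideal.Quotient.mk (Ideal.span {p})) u,
      MvPolynomial.map (Ideal.Quotient.mk (Ideal.span {p})) v] (by
        simp only [Matrix.cons_val_zero, Matrix.cons_val_one]
        rw [← map_mul, ← map_mul, ← map_sub, hJmap, hJC, map_C, constantCoeff_C]
        exact fun h => hndvd ((hq _).1 h))
    have hgen := adjoin_reduction (K := RatFunc k) (Ideal.Quotient.mk (Ideal.span {p})) p hp hq u v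
      huv hind
    exact ⟨hgen, exists_coordinate_of_gen _ _ hind hgen⟩
end
end
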